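/- Every homeomorphism of the torus that is homotopic to the identity is isotopic to the identity: let T = (ℝ/ℤ) × (ℝ/ℤ) and let h : T → T be a homeomorphism that is homotopic to the identity map (as continuous maps). Then there exists a continuous map F : [0,1] × T → T such that F(0,·) = h, F(1,·) = id, and F(t,·) : T → T is a homeomorphism for every t ∈ [0,1]. -/

import Mathlib

open unitInterval

/-!
A homotopy from `h` to the identity lifts `h` to a homeomorphism `U` of the plane commuting with
translations by `ℤ²`, and it suffices to join `U` to the identity through such homeomorphisms.

Rescale so that `U` intertwines translations by `nℤ²` with those by `ℤ²`, and place the triangular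
lattice on `ℤ²` in the source. The level sets of the first coordinate of `U` then bound a nested
sequence of combinatorial half-cylinders. One half-cylinder grows into another by adding one vertex
orbit at a time; an Euler characteristic count shows that the orbit can be chosen so that the link
of each added vertex changes sign exactly twice, and such a move is realised by an isotopy
supported in the star of the vertex. Moving every half-cylinder to a straight one makes the first
coordinate of `U` almost linear. Rows where the tent-shaped delay vanishes are never touched, and
these barriers keep the second coordinate under control, so the two coordinates can be straightened
alternately with errors tending to zero. The concatenation of the resulting infinitely many paths
converges to the identity.
-/

open scoped Pointwise

namespace TorusIsotopy

open Filter Topology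

/-! ### The hexagonal lattice -/

/-- Vertices of the triangular lattice, in the basis in which the six neighbours of a vertex are
its translates by `±(1, 0)`, `±(0, 1)` and `±(1, 1)`. -/
abbrev Vertex := ℤ × ℤ

/-- Two vertices are adjacent if they are equal or joined by an edge of the triangular lattice. -/
def Adj (v w : Vertex) : Prop :=
  w.1 ≤ v.1 + 1 ∧ v.1 ≤ w.1 + 1 ∧ w.2 ≤ v.2 + 1 ∧ v.2 ≤ w.2 + 1 ∧
    w.1 - w.2 ≤ v.1 - v.2 + 1 ∧ v.1 - v.2 ≤ w.1 - w.2 + 1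

theorem Adj.refl (v : Vertex) : Adj v v := by
  unfold Adj; omega

theorem Adj.symm {v w : Vertex} (h : Adj v w) : Adj w v := by
  unfold Adj at *; omega

theorem Adj.add {v w : Vertex} (h : Adj v w) (t : Vertex) : Adj (v + t) (w + t) := by
  unfold Adj at *; simp only [Prod.fst_add, Prod.snd_add]; omega

theorem Adj.sub {v w : Vertex} (h : Adj v w) (t : Vertex) : Adj (v - t) (w - t) := by
  simpa only [sub_eq_add_neg] using h.add (-t)

@[simp]
theorem mem_vadd_iff {t v : Vertex} {A : Set Vertex} : v ∈ t +ᵥ A ↔ v - t ∈ A := by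
  rw [Set.mem_vadd_set_iff_neg_vadd_mem, vadd_eq_add, neg_add_eq_sub]

/-- `Z` is a union of connected components of `X`. -/
def ClosedIn (X Z : Set Vertex) : Prop := Z ⊆ X ∧ ∀ z ∈ Z, ∀ u ∈ X, Adj z u → u ∈ Z

theorem ClosedIn.inter {X Y Z : Set Vertex} (h : ClosedIn X Z) (hY : Y ⊆ X) :
    ClosedIn Y (Z ∩ Y) :=
  ⟨Set.inter_subset_right, fun z hz u hu ha => ⟨h.2 z hz.1 u (hY hu) ha, hu⟩⟩

theorem ClosedIn.vadd {X Z : Set Vertex} (h : ClosedIn X Z) (t : Vertex) :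
    ClosedIn (t +ᵥ X) (t +ᵥ Z) := by
  refine ⟨Set.vadd_set_mono h.1, fun z hz u hu ha => ?_⟩
  rw [mem_vadd_iff] at *
  exact h.2 _ hz _ hu (ha.sub t)

/-- `Z` is bounded in the direction `ε`: on the right for `ε = 1`, on the left for `ε = -1`. -/
def BoundedToward (ε : ℤ) (Z : Set Vertex) : Prop := ∃ b : ℤ, ∀ z ∈ Z, ε * z.1 ≤ b

theorem BoundedToward.mono {ε : ℤ} {Z W : Set Vertex} (h : BoundedToward ε W) (hs : Z ⊆ W) :
    BoundedToward ε Z :=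
  h.imp fun _ hb z hz => hb z (hs hz)

theorem BoundedToward.vadd {ε : ℤ} {Z : Set Vertex} (h : BoundedToward ε Z) (t : Vertex) :
    BoundedToward ε (t +ᵥ Z) := by
  obtain ⟨b, hb⟩ := h
  refine ⟨b + ε * t.1, fun z hz => ?_⟩
  have := hb _ (mem_vadd_iff.mp hz)
  rw [Prod.fst_sub, mul_sub] at this
  linarith

theorem boundedToward_neg_one_of_le {Z : Set Vertex} {a : ℤ} (h : ∀ z ∈ Z, a ≤ z.1) :
    BoundedToward (-1) Z :=
  ⟨-a, fun z hz => by linarith [h z hz]⟩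

theorem boundedToward_one_of_le {Z : Set Vertex} {b : ℤ} (h : ∀ z ∈ Z, z.1 ≤ b) :
    BoundedToward 1 Z :=
  ⟨b, fun z hz => by linarith [h z hz]⟩

theorem adj_add_sign (ε : ℤ) (v : Vertex) : Adj v (v.1 + ε.sign, v.2) := by
  rcases Int.sign_trichotomy ε with h | h | h <;> unfold Adj <;> rw [h] <;> omega

theorem eq_empty_of_ray_of_boundedToward {ε : ℤ} (hε : ε ≠ 0) {Z : Set Vertex}
    (h : ∀ z ∈ Z, (z.1 + ε.sign, z.2) ∈ Z) (hb : BoundedToward ε Z) : Z = ∅ := by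
  by_contra hne
  obtain ⟨p, hp⟩ := Set.nonempty_iff_ne_empty.mpr hne
  obtain ⟨b, hb⟩ := hb
  have ray : ∀ k : ℕ, (p.1 + k * ε.sign, p.2) ∈ Z := by
    intro k
    induction k with
    | zero => simpa using hp
    | succ k ih =>
      rw [Nat.cast_succ, add_one_mul, ← add_assoc]
      exact h _ ih
  have hb' := hb _ (ray (b + 1 - ε * p.1).toNat)
  have hε' : 1 ≤ ε * ε.sign := by rw [Int.mul_sign_self]; omega
  nlinarith [Int.self_le_toNat (b + 1 - ε * p.1)]

theorem eq_empty_of_closed_of_boundedToward {ε : ℤ} (hε : ε ≠ 0) {Z : Set Vertex}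
    (h : ∀ z ∈ Z, ∀ u, Adj z u → u ∈ Z) (hb : BoundedToward ε Z) : Z = ∅ :=
  eq_empty_of_ray_of_boundedToward hε (fun z hz => h z hz _ (adj_add_sign ε z)) hb

/-- Every component of `A` is unbounded in the direction `ε`. -/
def NoBoundedComponent (ε : ℤ) (A : Set Vertex) : Prop :=
  ∀ Z, ClosedIn A Z → BoundedToward ε Z → Z = ∅

/-- The union of the components of `X` that are unbounded in the direction `ε`. -/
def core (ε : ℤ) (X : Set Vertex) : Set Vertex :=
  {p | p ∈ X ∧ ∀ Z, ClosedIn X Z → BoundedToward ε Z → p ∉ Z}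

/-- The union of the families of components of `X` that are bounded in the direction `ε`. -/
def pockets (ε : ℤ) (X : Set Vertex) : Set Vertex := X \ core ε X

/-- `A` together with the pockets of its complement that are bounded on the right. -/
def fill (A : Set Vertex) : Set Vertex := (core 1 Aᶜ)ᶜ

section Components

variable {ε : ℤ} {X Y A B : Set Vertex} {p u : Vertex}

theorem noBoundedComponent_of_ray {ε : ℤ} (hε : ε ≠ 0) {A : Set Vertex}
    (h : ∀ v ∈ A, (v.1 + ε.sign, v.2) ∈ A) : NoBoundedComponent ε A := fun _ hZ hb =>
  eq_empty_of_ray_of_boundedToward hε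
    (fun z hz => hZ.2 z hz _ (h z (hZ.1 hz)) (adj_add_sign ε z)) hb

theorem core_subset (ε : ℤ) (X : Set Vertex) : core ε X ⊆ X := fun _ h => h.1

theorem mem_core_of_adj (hp : p ∈ core ε X) (hu : u ∈ X) (h : Adj p u) : u ∈ core ε X :=
  ⟨hu, fun Z hZ hb huZ => hp.2 Z hZ hb (hZ.2 u huZ p hp.1 h.symm)⟩

theorem noBoundedComponent_core (ε : ℤ) (X : Set Vertex) : NoBoundedComponent ε (core ε X) := by
  intro Z hZ hb
  by_contra hne
  obtain ⟨p, hp⟩ := Set.nonempty_iff_ne_empty.mpr hne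
  refine (hZ.1 hp).2 Z ⟨hZ.1.trans (core_subset ε X), fun z hz u hu ha => ?_⟩ hb hp
  exact hZ.2 z hz u (mem_core_of_adj (hZ.1 hz) hu ha) ha

theorem mem_pockets_iff : p ∈ pockets ε X ↔ ∃ Z, ClosedIn X Z ∧ BoundedToward ε Z ∧ p ∈ Z := by
  constructor
  · rintro ⟨hp, hcore⟩
    by_contra! hc
    exact hcore ⟨hp, hc⟩
  · rintro ⟨Z, hZ, hb, hp⟩
    exact ⟨hZ.1 hp, fun h => h.2 Z hZ hb hp⟩

theorem mem_pockets_of_adj (hp : p ∈ pockets ε X) (hu : u ∈ X) (h : Adj p u) :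
    u ∈ pockets ε X :=
  ⟨hu, fun hc => hp.2 (mem_core_of_adj hc hp.1 h.symm)⟩

theorem NoBoundedComponent.disjoint_of_boundedToward {Z : Set Vertex}
    (hY : NoBoundedComponent ε Y) (h : Y ⊆ X) (hZ : ClosedIn X Z) (hb : BoundedToward ε Z) :
    Disjoint Z Y :=
  Set.disjoint_iff_inter_eq_empty.mpr (hY _ (hZ.inter h) (hb.mono Set.inter_subset_left))

theorem NoBoundedComponent.disjoint_pockets (hY : NoBoundedComponent ε Y) (h : Y ⊆ X) :
    Disjoint (pockets ε X) Y := by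
  refine Set.disjoint_left.mpr fun p hp => ?_
  obtain ⟨Z, hZ, hb, hpZ⟩ := mem_pockets_iff.mp hp
  exact Set.disjoint_left.mp (hY.disjoint_of_boundedToward h hZ hb) hpZ

theorem NoBoundedComponent.union (hA : NoBoundedComponent ε A) (hB : NoBoundedComponent ε B) :
    NoBoundedComponent ε (A ∪ B) := by
  intro Z hZ hb
  rw [← Set.inter_eq_left.mpr hZ.1, Set.inter_union_distrib_left,
    hA _ (hZ.inter Set.subset_union_left) (hb.mono Set.inter_subset_left),
    hB _ (hZ.inter Set.subset_union_right) (hb.mono Set.inter_subset_left), Set.union_empty]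

theorem subset_fill (A : Set Vertex) : A ⊆ fill A := fun _ h h' => h'.1 h

theorem notMem_fill_iff : p ∉ fill A ↔ p ∈ core 1 Aᶜ := not_not

theorem fill_eq_self (h : NoBoundedComponent 1 Aᶜ) : fill A = A :=
  (subset_fill A).antisymm' <| Set.compl_subset_comm.mp fun _ hv =>
    ⟨hv, fun Z hZ hb hvZ => Set.notMem_empty _ (h Z hZ hb ▸ hvZ)⟩

theorem noBoundedComponent_compl_fill (A : Set Vertex) : NoBoundedComponent 1 (fill A)ᶜ := by
  rw [fill, compl_compl]
  exact noBoundedComponent_core _ _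

theorem NoBoundedComponent.fill (hA : NoBoundedComponent (-1) A) :
    NoBoundedComponent (-1) (fill A) := by
  intro Z hZ hb
  have hdisj := hA.disjoint_of_boundedToward (subset_fill A) hZ hb
  refine eq_empty_of_closed_of_boundedToward (by decide) (fun z hz u ha => ?_) hb
  by_contra hu
  have hu' := notMem_fill_iff.mp fun h => hu (hZ.2 z hz u h ha)
  exact hZ.1 hz (mem_core_of_adj hu' (Set.disjoint_left.mp hdisj hz) ha.symm)

theorem fill_mono (h : A ⊆ B) : fill A ⊆ fill B := by
  have hc : Bᶜ ⊆ Aᶜ := Set.compl_subset_compl.mpr h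
  intro p
  contrapose
  simp only [notMem_fill_iff]
  exact fun hp => ⟨hc hp.1, fun Z hZ hb hpZ =>
    hp.2 _ (hZ.inter hc) (hb.mono Set.inter_subset_left) ⟨hpZ, hp.1⟩⟩

theorem fill_neighbours_subset (h : ∀ v ∈ A, ∀ w, Adj v w → w ∈ B) :
    ∀ v ∈ fill A, ∀ w, Adj v w → w ∈ fill B := by
  intro v hv w ha
  by_cases hvA : v ∈ A
  · exact subset_fill B (h v hvA w ha)
  by_contra hw
  rw [notMem_fill_iff] at hw
  have hBA : Bᶜ ⊆ Aᶜ := Set.compl_subset_compl.mpr fun x hx => h x hx x (Adj.refl x)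
  have hv' : v ∈ pockets 1 Aᶜ := ⟨hvA, hv⟩
  obtain ⟨Z, hZ, hb, hvZ⟩ := mem_pockets_iff.mp hv'
  exact hw.2 _ (hZ.inter hBA) (hb.mono Set.inter_subset_left)
    ⟨hZ.2 v hvZ w (hBA hw.1) ha, hw.1⟩

theorem core_vadd (ε : ℤ) (t : Vertex) (X : Set Vertex) : core ε (t +ᵥ X) = t +ᵥ core ε X := by
  have sub : ∀ (t : Vertex) (X : Set Vertex), core ε (t +ᵥ X) ⊆ t +ᵥ core ε X :=
    fun t X p hp => mem_vadd_iff.mpr ⟨mem_vadd_iff.mp hp.1, fun Z hZ hb hpZ =>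
      hp.2 _ (hZ.vadd t) (hb.vadd t) (mem_vadd_iff.mpr hpZ)⟩
  refine (sub t X).antisymm (Set.vadd_set_subset_iff_subset_neg_vadd_set.mpr ?_)
  simpa only [neg_vadd_vadd] using sub (-t) (t +ᵥ X)

theorem fill_vadd (t : Vertex) (A : Set Vertex) : fill (t +ᵥ A) = t +ᵥ fill A := by
  rw [fill, fill, ← Set.vadd_set_compl, core_vadd, Set.vadd_set_compl]

theorem NoBoundedComponent.vadd (h : NoBoundedComponent ε A) (t : Vertex) :
    NoBoundedComponent ε (t +ᵥ A) := by
  intro Z hZ hb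
  have hZ' := hZ.vadd (-t)
  rw [neg_vadd_vadd] at hZ'
  exact Set.vadd_set_eq_empty.mp (h _ hZ' (hb.vadd _))

end Components

/-! ### Vertically periodic sets -/

/-- Invariance of a set of vertices under the vertical translation by `n`. -/
def VPeriodic (n : ℕ) (A : Set Vertex) : Prop := ∀ v : Vertex, (v.1, v.2 + n) ∈ A ↔ v ∈ A

/-- The orbit of `v` under the vertical translations by multiples of `n`. -/
def vOrbit (n : ℕ) (v : Vertex) : Set Vertex := {w | w.1 = v.1 ∧ ∃ k : ℤ, w.2 = v.2 + k * n}

section Periodic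

variable {n : ℕ} {A B : Set Vertex} {v w u : Vertex}

theorem vPeriodic_iff_vadd_eq : VPeriodic n A ↔ ((0, -(n : ℤ)) : Vertex) +ᵥ A = A := by
  simp [VPeriodic, Set.ext_iff, Prod.sub_def]

theorem VPeriodic.compl (h : VPeriodic n A) : VPeriodic n Aᶜ := fun v => not_congr (h v)

theorem VPeriodic.union (h : VPeriodic n A) (h' : VPeriodic n B) : VPeriodic n (A ∪ B) :=
  fun v => or_congr (h v) (h' v)

theorem VPeriodic.sdiff (h : VPeriodic n A) (h' : VPeriodic n B) : VPeriodic n (A \ B) :=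
  fun v => and_congr (h v) (not_congr (h' v))

theorem VPeriodic.core (h : VPeriodic n A) (ε : ℤ) : VPeriodic n (core ε A) := by
  rw [vPeriodic_iff_vadd_eq] at *; rw [← core_vadd, h]

theorem VPeriodic.pockets (h : VPeriodic n A) (ε : ℤ) : VPeriodic n (pockets ε A) :=
  h.sdiff (h.core ε)

theorem VPeriodic.fill (h : VPeriodic n A) : VPeriodic n (fill A) := (h.compl.core 1).compl

theorem VPeriodic.vadd (h : VPeriodic n A) (t : Vertex) : VPeriodic n (t +ᵥ A) := by
  rw [vPeriodic_iff_vadd_eq] at *; rw [vadd_comm, h]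

theorem VPeriodic.add_int_mul (h : VPeriodic n A) (k : ℤ) (v : Vertex) :
    (v.1, v.2 + k * n) ∈ A ↔ v ∈ A := by
  induction k using Int.induction_on with
  | zero => simp
  | succ k ih => rw [← ih, ← h (v.1, v.2 + k * n), add_one_mul, add_assoc]
  | pred k ih =>
    rw [← ih, ← h (v.1, v.2 + (-(k : ℤ) - 1) * n), sub_one_mul, add_assoc, sub_add_cancel]

theorem mem_vOrbit_self (n : ℕ) (v : Vertex) : v ∈ vOrbit n v := ⟨rfl, 0, by simp⟩

theorem vOrbit_symm (h : w ∈ vOrbit n v) : v ∈ vOrbit n w := by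
  obtain ⟨h1, k, h2⟩ := h
  exact ⟨h1.symm, -k, by rw [h2]; ring⟩

theorem VPeriodic.vOrbit_subset (h : VPeriodic n A) (hv : v ∈ A) : vOrbit n v ⊆ A := by
  rintro w ⟨h1, k, h2⟩
  have := (h.add_int_mul k v).mpr hv
  rwa [← h1, ← h2] at this

theorem vPeriodic_vOrbit (n : ℕ) (v : Vertex) : VPeriodic n (vOrbit n v) := by
  intro w
  constructor
  · rintro ⟨h1, k, h2⟩
    exact ⟨h1, k - 1, by simp only at h2; linear_combination h2⟩
  · rintro ⟨h1, k, h2⟩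
    exact ⟨h1, k + 1, by simp only; linear_combination h2⟩

theorem exists_vOrbit_adj (hw : w ∈ vOrbit n v) (h : Adj v u) :
    ∃ u' ∈ vOrbit n u, Adj w u' := by
  obtain ⟨h1, k, h2⟩ := hw
  refine ⟨(u.1, u.2 + k * n), ⟨rfl, k, rfl⟩, ?_⟩
  unfold Adj at *; simp only; rw [h1, h2]; omega

theorem VPeriodic.exists_adj_of_mem_vOrbit (h : VPeriodic n A) (hw : w ∈ vOrbit n v)
    (hv : ∃ u ∈ A, Adj v u) : ∃ u ∈ A, Adj w u := by
  obtain ⟨u, hu, ha⟩ := hv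
  obtain ⟨u', hu', ha'⟩ := exists_vOrbit_adj hw ha
  exact ⟨u', h.vOrbit_subset hu hu', ha'⟩

/-- A fundamental domain for the vertical translation by `n` on the strip `a ≤ x < b`. -/
def box (n : ℕ) (a b : ℤ) : Set Vertex := Set.Ico a b ×ˢ Set.Ico 0 (n : ℤ)

theorem finite_box (n : ℕ) (a b : ℤ) : (box n a b).Finite :=
  (Set.finite_Ico a b).prod (Set.finite_Ico 0 (n : ℤ))

theorem exists_mem_vOrbit_box (hn : 0 < n) {a b : ℤ} (h : v.1 ∈ Set.Ico a b) :
    ∃ w ∈ vOrbit n v, w ∈ box n a b := by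
  refine ⟨(v.1, v.2 % n), ⟨rfl, -(v.2 / n), ?_⟩, h, Int.emod_nonneg _ (by omega),
    Int.emod_lt_of_pos _ (by omega)⟩
  simp only
  linear_combination Int.emod_add_mul_ediv v.2 n

theorem ncard_inter_box_lt (hn : 0 < n) (hA : VPeriodic n A) (hB : VPeriodic n B) {a b : ℤ}
    (hAB : A ⊆ B) (hv : v ∈ B \ A) (hab : v.1 ∈ Set.Ico a b) :
    (A ∩ box n a b).ncard < (B ∩ box n a b).ncard := by
  obtain ⟨w, hw, hwb⟩ := exists_mem_vOrbit_box hn hab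
  have hwBA := (hB.sdiff hA).vOrbit_subset hv hw
  refine Set.ncard_lt_ncard ⟨Set.inter_subset_inter_left _ hAB, fun h => ?_⟩
    ((finite_box n a b).subset Set.inter_subset_right)
  exact hwBA.2 (h ⟨hwBA.1, hwb⟩).1

end Periodic

/-! ### Left half-cylinders and their shellings -/

/-- `A` is, in the cylinder obtained by dividing by the vertical translation by `n`, a
neighbourhood of the left end such that neither `A` nor its complement has inessential
components. -/
structure IsLeftHalf (n : ℕ) (A : Set Vertex) : Prop where
  left_unbounded : NoBoundedComponent (-1) A
  right_unbounded : NoBoundedComponent 1 Aᶜ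
  vPeriodic : VPeriodic n A
  exists_left : ∃ a : ℤ, ∀ v : Vertex, v.1 < a → v ∈ A
  exists_right : ∃ b : ℤ, ∀ v ∈ A, v.1 < b

section Shelling

variable {n : ℕ} {A A' : Set Vertex} {v : Vertex}

theorem IsLeftHalf.vadd (h : IsLeftHalf n A) (t : Vertex) : IsLeftHalf n (t +ᵥ A) := by
  refine ⟨h.left_unbounded.vadd t, ?_, h.vPeriodic.vadd t, ?_, ?_⟩
  · rw [← Set.vadd_set_compl]
    exact h.right_unbounded.vadd t
  · obtain ⟨a, ha⟩ := h.exists_left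
    exact ⟨a + t.1, fun v hv => mem_vadd_iff.mpr (ha _ (by rw [Prod.fst_sub]; omega))⟩
  · obtain ⟨b, hb⟩ := h.exists_right
    refine ⟨b + t.1, fun v hv => ?_⟩
    have := hb _ (mem_vadd_iff.mp hv)
    rw [Prod.fst_sub] at this
    omega

theorem IsLeftHalf.sdiff_subset_strip (h : IsLeftHalf n A) (h' : IsLeftHalf n A') :
    ∃ a b : ℤ, ∀ v ∈ A' \ A, v.1 ∈ Set.Ico a b := by
  obtain ⟨a, ha⟩ := h.exists_left
  obtain ⟨b, hb⟩ := h'.exists_right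
  exact ⟨a, b, fun v hv => ⟨by by_contra! hc; exact hv.2 (ha v hc), hb v hv.1⟩⟩

/-- The pockets that appear in the complement of `A` when the orbit of `v` is added to `A`. -/
def newPockets (n : ℕ) (A : Set Vertex) (v : Vertex) : Set Vertex := pockets 1 (Aᶜ \ vOrbit n v)

theorem VPeriodic.newPockets (h : VPeriodic n A) (v : Vertex) :
    VPeriodic n (newPockets n A v) :=
  (h.compl.sdiff (vPeriodic_vOrbit n v)).pockets 1

theorem IsLeftHalf.newPockets_subset (hA : VPeriodic n A) (hA' : IsLeftHalf n A') (hs : A ⊆ A')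
    (hv : v ∈ A' \ A) : newPockets n A v ⊆ A' \ A := by
  refine fun p hp => ⟨not_not.mp fun hc => ?_, hp.1.1⟩
  refine Set.disjoint_left.mp (hA'.right_unbounded.disjoint_pockets ?_) hp hc
  exact fun q hq => ⟨fun h => hq (hs h), fun h =>
    hq ((hA'.vPeriodic.sdiff hA).vOrbit_subset hv h).1⟩

theorem mem_newPockets_or_vOrbit_of_adj {z u : Vertex} (hz : z ∈ newPockets n A v) (hu : u ∉ A)
    (ha : Adj z u) : u ∈ newPockets n A v ∪ vOrbit n v :=
  or_iff_not_imp_right.mpr fun h => mem_pockets_of_adj hz ⟨hu, h⟩ ha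

theorem IsLeftHalf.union_vOrbit (hA : IsLeftHalf n A) (hv : ∃ u ∈ A, Adj v u)
    (hp : newPockets n A v = ∅) : IsLeftHalf n (A ∪ vOrbit n v) := by
  refine ⟨fun Z hZ hb => ?_, ?_, hA.vPeriodic.union (vPeriodic_vOrbit n v), ?_, ?_⟩
  · have hdisj := Set.disjoint_left.mp
      (hA.left_unbounded.disjoint_of_boundedToward Set.subset_union_left hZ hb)
    refine Set.eq_empty_of_forall_notMem fun z hz => ?_
    rcases hZ.1 hz with h | h
    · exact hdisj hz h
    · obtain ⟨u, hu, ha⟩ := hA.vPeriodic.exists_adj_of_mem_vOrbit h hv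
      exact hdisj (hZ.2 z hz u (Or.inl hu) ha) hu
  · have : (A ∪ vOrbit n v)ᶜ = core 1 (Aᶜ \ vOrbit n v) := by
      rw [Set.compl_union, ← Set.sdiff_eq]
      exact (Set.sdiff_eq_empty.mp hp).antisymm (core_subset _ _)
    rw [this]
    exact noBoundedComponent_core _ _
  · exact hA.exists_left.imp fun a ha w hw => Or.inl (ha w hw)
  · obtain ⟨b, hb⟩ := hA.exists_right
    refine ⟨max b (v.1 + 1), ?_⟩
    rintro w (hw | hw)
    · exact lt_max_of_lt_left (hb w hw)
    · exact lt_max_of_lt_right (by rw [hw.1]; omega)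

theorem exists_fst_le {Z : Set Vertex} (hne : Z.Nonempty) {a : ℤ} (h : ∀ v ∈ Z, a ≤ v.1) :
    ∃ z ∈ Z, ∀ w ∈ Z, z.1 ≤ w.1 := by
  obtain ⟨p, hp⟩ := hne
  obtain ⟨_, ⟨z, hz, rfl⟩, hm⟩ := Int.exists_least_of_bdd (P := fun x => ∃ z ∈ Z, z.1 = x)
    ⟨a, fun x ⟨z, hz, hzx⟩ => hzx ▸ h z hz⟩ ⟨p.1, p, hp, rfl⟩
  exact ⟨z, hz, fun w hw => hm _ ⟨w, hw, rfl⟩⟩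

theorem exists_le_fst {Z : Set Vertex} (hne : Z.Nonempty) {b : ℤ} (h : ∀ v ∈ Z, v.1 ≤ b) :
    ∃ z ∈ Z, ∀ w ∈ Z, w.1 ≤ z.1 := by
  obtain ⟨p, hp⟩ := hne
  obtain ⟨_, ⟨z, hz, rfl⟩, hm⟩ := Int.exists_greatest_of_bdd (P := fun x => ∃ z ∈ Z, z.1 = x)
    ⟨b, fun x ⟨z, hz, hzx⟩ => hzx ▸ h z hz⟩ ⟨p.1, p, hp, rfl⟩
  exact ⟨z, hz, fun w hw => hm _ ⟨w, hw, rfl⟩⟩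

/-- Otherwise the leftmost and the rightmost vertices of the pockets would both be adjacent to
the single column containing `v`, the former from its right and the latter from its left. -/
theorem exists_newPockets_adj (hne : (newPockets n A v).Nonempty) {a b : ℤ}
    (hab : ∀ z ∈ newPockets n A v, z.1 ∈ Set.Ico a b) :
    ∃ v' ∈ newPockets n A v, ∃ u ∈ A, Adj v' u := by
  by_contra! hc
  obtain ⟨l, hl, hlmin⟩ := exists_fst_le hne fun z hz => (hab z hz).1
  obtain ⟨r, hr, hrmax⟩ := exists_le_fst hne fun z hz => (hab z hz).2.le
  have adj_l : Adj l (l.1 - 1, l.2) := by unfold Adj; simp only; omega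
  have adj_r : Adj r (r.1 + 1, r.2) := by unfold Adj; simp only; omega
  have hlv : l.1 - 1 = v.1 := by
    rcases mem_newPockets_or_vOrbit_of_adj hl (fun h => hc l hl _ h adj_l) adj_l with h | h
    · have := hlmin _ h; simp only at this; omega
    · exact h.1
  have hrv : r.1 + 1 = v.1 := by
    rcases mem_newPockets_or_vOrbit_of_adj hr (fun h => hc r hr _ h adj_r) adj_r with h | h
    · have := hrmax _ h; simp only at this; omega
    · exact h.1
  have := hlmin _ hr
  omega

theorem closedIn_compl_newPockets_union_vOrbit (hA : VPeriodic n A) (hv : v ∉ A) {w : Vertex}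
    (hwv : w ∈ vOrbit n v)
    (hw : ∀ u ∉ A, Adj w u → u ∈ newPockets n A v ∪ vOrbit n v) :
    ClosedIn Aᶜ (newPockets n A v ∪ vOrbit n v) := by
  refine ⟨Set.union_subset (fun p hp => hp.1.1) (hA.compl.vOrbit_subset hv), ?_⟩
  rintro z (hz | hz) u hu ha
  · exact mem_newPockets_or_vOrbit_of_adj hz hu ha
  · have hwz : w ∈ vOrbit n z := (vPeriodic_vOrbit n z).vOrbit_subset (vOrbit_symm hz) hwv
    obtain ⟨u', hu', ha'⟩ := exists_vOrbit_adj hwz ha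
    exact ((hA.newPockets v).union (vPeriodic_vOrbit n v)).vOrbit_subset
      (hw u' (hA.compl.vOrbit_subset hu hu') ha') (vOrbit_symm hu')

theorem IsLeftHalf.noBoundedComponent_compl_sdiff_newPockets (hA : IsLeftHalf n A) (hv : v ∉ A)
    {a b : ℤ} (hab : ∀ z ∈ newPockets n A v, z.1 ∈ Set.Ico a b) :
    NoBoundedComponent 1 (Aᶜ \ newPockets n A v) := by
  intro Z hZ hb
  have hZv : Z ⊆ vOrbit n v := by
    have hcore : core 1 (Aᶜ \ vOrbit n v) ⊆ Aᶜ \ newPockets n A v :=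
      fun p hp => ⟨hp.1.1, fun h => h.2 hp⟩
    intro z hz
    by_contra hzv
    refine Set.disjoint_left.mp ((noBoundedComponent_core _ _).disjoint_of_boundedToward
      hcore hZ hb) hz ?_
    by_contra hzc
    exact (hZ.1 hz).2 ⟨⟨(hZ.1 hz).1, hzv⟩, hzc⟩
  refine Set.eq_empty_of_forall_notMem fun w hw => ?_
  have hcl := closedIn_compl_newPockets_union_vOrbit hA.vPeriodic hv (hZv hw) fun u hu ha =>
    or_iff_not_imp_left.mpr fun h => hZv (hZ.2 w hw u ⟨hu, h⟩ ha)
  have hbdd : ∀ z ∈ newPockets n A v ∪ vOrbit n v, z.1 ≤ max b v.1 := by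
    rintro z (hz | hz)
    · exact (hab z hz).2.le.trans (le_max_left _ _)
    · exact hz.1.le.trans (le_max_right _ _)
  exact Set.eq_empty_iff_forall_notMem.mp
    (hA.right_unbounded _ hcl (boundedToward_one_of_le hbdd)) v (Or.inr (mem_vOrbit_self n v))

theorem IsLeftHalf.newPockets_subset_newPockets (hA : IsLeftHalf n A) (hv : v ∉ A) {a b : ℤ}
    (hab : ∀ z ∈ newPockets n A v, z.1 ∈ Set.Ico a b) {v' : Vertex}
    (hv' : v' ∈ newPockets n A v) : newPockets n A v' ⊆ newPockets n A v := by
  intro p hp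
  by_contra hc
  refine Set.disjoint_left.mp (NoBoundedComponent.disjoint_pockets
    (hA.noBoundedComponent_compl_sdiff_newPockets hv hab) fun q hq => ?_) hp ⟨hp.1.1, hc⟩
  exact ⟨hq.1, fun h => hq.2 ((hA.vPeriodic.newPockets v).vOrbit_subset hv' h)⟩

/-- A vertex adjacent to `A` whose new pockets are as small as possible has none: otherwise one of
them contains another vertex adjacent to `A`, with strictly smaller new pockets. -/
theorem IsLeftHalf.exists_union_vOrbit (hn : 0 < n) (hA : IsLeftHalf n A)
    (hA' : IsLeftHalf n A') (hs : A ⊆ A') (hne : (A' \ A).Nonempty) :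
    ∃ v ∈ A' \ A, IsLeftHalf n (A ∪ vOrbit n v) := by
  obtain ⟨a, b, hab⟩ := hA.sdiff_subset_strip hA'
  have hadj : {v ∈ A' \ A | ∃ u ∈ A, Adj v u}.Nonempty := by
    by_contra! hc
    refine hne.ne_empty (hA'.left_unbounded (A' \ A) ⟨Set.sdiff_subset, fun z hz u hu ha =>
      ⟨hu, fun h => ?_⟩⟩ (boundedToward_neg_one_of_le fun z hz => (hab z hz).1))
    exact Set.eq_empty_iff_forall_notMem.mp hc z ⟨hz, u, h, ha⟩
  obtain ⟨v, ⟨hv, hvA⟩, hmin⟩ := WellFounded.has_min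
    (measure fun v => (newPockets n A v ∩ box n a b).ncard).wf _ hadj
  refine ⟨v, hv, hA.union_vOrbit hvA (Set.not_nonempty_iff_eq_empty.mp fun hP => ?_)⟩
  have hsub := IsLeftHalf.newPockets_subset hA.vPeriodic hA' hs hv
  have hPab := fun z hz => hab z (hsub hz)
  obtain ⟨v', hv', hv'A⟩ := exists_newPockets_adj hP hPab
  exact hmin v' ⟨hsub hv', hv'A⟩ (ncard_inter_box_lt hn (hA.vPeriodic.newPockets v')
    (hA.vPeriodic.newPockets v) (hA.newPockets_subset_newPockets hv.2 hPab hv')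
    ⟨hv', fun h => h.1.2 (mem_vOrbit_self n v')⟩ (hPab v' hv'))

theorem IsLeftHalf.shelling_induction (hn : 0 < n) (hA : IsLeftHalf n A) (hA' : IsLeftHalf n A')
    (hs : A ⊆ A') (motive : Set Vertex → Prop) (base : motive A)
    (step : ∀ B v, IsLeftHalf n B → IsLeftHalf n (B ∪ vOrbit n v) → A ⊆ B →
      B ∪ vOrbit n v ⊆ A' → v ∉ B → motive B → motive (B ∪ vOrbit n v)) : motive A' := by
  obtain ⟨a, b, hab⟩ := hA.sdiff_subset_strip hA'
  obtain ⟨B, ⟨hB, hAB, hBA', hm⟩, hmin⟩ := WellFounded.has_min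
    (measure fun B => ((A' \ B) ∩ box n a b).ncard).wf
    {B | IsLeftHalf n B ∧ A ⊆ B ∧ B ⊆ A' ∧ motive B} ⟨A, hA, subset_rfl, hs, base⟩
  rcases (A' \ B).eq_empty_or_nonempty with h | h
  · rwa [(Set.sdiff_eq_empty.mp h).antisymm hBA']
  · obtain ⟨v, hv, hBv⟩ := hB.exists_union_vOrbit hn hA' hBA' h
    have hsub : B ∪ vOrbit n v ⊆ A' :=
      Set.union_subset hBA' (hA'.vPeriodic.vOrbit_subset hv.1)
    refine absurd ?_ (hmin _ ⟨hBv, hAB.trans Set.subset_union_left, hsub,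
      step B v hB hBv hAB hsub hv.2 hm⟩)
    exact ncard_inter_box_lt hn (hA'.vPeriodic.sdiff hBv.vPeriodic)
      (hA'.vPeriodic.sdiff hB.vPeriodic)
      (Set.sdiff_subset_sdiff_right Set.subset_union_left)
      ⟨hv, fun h => h.2 (Or.inr (mem_vOrbit_self n v))⟩ (hab v ⟨hv.1, fun h => hv.2 (hAB h)⟩)

end Shelling

/-! ### Sign changes around a vertex -/

/-- The six neighbours of the origin in cyclic order. -/
def hexDir : Fin 6 → Vertex := ![(1, 0), (1, 1), (0, 1), (-1, 0), (-1, -1), (0, -1)]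

/-- The number of sign changes of a cyclic word of length six. -/
def signChanges (b : Fin 6 → Bool) : ℕ := ∑ i, (xor (b i) (b (i + 1))).toNat

/-- The pattern of the neighbours of `v` that belong to `A`. -/
noncomputable def link (A : Set Vertex) (v : Vertex) : Fin 6 → Bool :=
  open Classical in fun i => decide (v + hexDir i ∈ A)

/-- The pattern of the neighbours of `v` on which `f` is smaller than at `v`. -/
def lowerLink (f : Vertex → ℤ) (v : Vertex) : Fin 6 → Bool :=
  fun i => decide (f (v + hexDir i) < f v)

theorem adj_iff {v w : Vertex} : Adj v w ↔ w = v ∨ ∃ i, w = v + hexDir i := by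
  simp only [Adj, hexDir, Prod.ext_iff, Fin.exists_fin_succ, Prod.fst_add, Prod.snd_add,
    Matrix.cons_val_zero, Matrix.cons_val_succ, IsEmpty.exists_iff, or_false]
  omega

theorem adj_add_hexDir (v : Vertex) (i : Fin 6) : Adj v (v + hexDir i) :=
  adj_iff.mpr (Or.inr ⟨i, rfl⟩)

theorem two_le_signChanges : ∀ b : Fin 6 → Bool, (∃ i, b i = true) → (∃ i, b i = false) →
    2 ≤ signChanges b := by
  decide

theorem hexDir_add_hexDir : ∀ i, hexDir i + hexDir (i + 2) = hexDir (i + 1) := by decide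

theorem hexDir_add_three : ∀ i, hexDir (i + 3) = -hexDir i := by decide

theorem hexDir_ne_zero : ∀ i, hexDir i ≠ 0 := by decide

/-- Exactly one of three distinct integers lies between the two others. -/
theorem xor_lt_sum_eq_one {a b c : ℤ} (hab : a ≠ b) (hbc : b ≠ c) (hac : a ≠ c) :
    (xor (decide (b < a)) (decide (c < a))).toNat + (xor (decide (c < b)) (decide (a < b))).toNat
      + (xor (decide (a < c)) (decide (b < c))).toNat = 1 := by
  rcases hab.lt_or_gt with h1 | h1 <;> rcases hbc.lt_or_gt with h2 | h2 <;>
    rcases hac.lt_or_gt with h3 | h3 <;>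
    simp [h1, h2, h3, h1.le, h2.le, h3.le, not_lt.mpr] <;> omega

/-- The number, `0` or `1`, of sign changes of the lower link of `v` across the triangle spanned by
`v` and its neighbours in the directions `i` and `i + 1`. -/
def cornerChange (f : Vertex → ℤ) (i : Fin 6) (v : Vertex) : ℕ :=
  (xor (lowerLink f v i) (lowerLink f v (i + 1))).toNat

theorem cornerChange_triangle {f : Vertex → ℤ} (hf : ∀ v w, v ≠ w → Adj v w → f v ≠ f w)
    (i : Fin 6) (v : Vertex) :
    cornerChange f i v + cornerChange f (i + 2) (v + hexDir i)
      + cornerChange f (i + 4) (v + hexDir (i + 1)) = 1 := by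
  have e1 : v + hexDir i + hexDir (i + 2) = v + hexDir (i + 1) := by
    rw [add_assoc, hexDir_add_hexDir]
  have e2 : v + hexDir i + hexDir (i + 2 + 1) = v := by
    rw [add_assoc i, show (2 + 1 : Fin 6) = 3 from rfl, hexDir_add_three, add_neg_cancel_right]
  have e3 : v + hexDir (i + 1) + hexDir (i + 4) = v := by
    rw [show (4 : Fin 6) = 1 + 3 from rfl, ← add_assoc i, hexDir_add_three, add_neg_cancel_right]
  have e4 : v + hexDir (i + 1) + hexDir (i + 4 + 1) = v + hexDir i := by
    rw [add_assoc i, show (4 + 1 : Fin 6) = 2 + 3 from rfl, ← add_assoc i, hexDir_add_three,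
      ← hexDir_add_hexDir i]
    abel
  have ne : ∀ u j, f u ≠ f (u + hexDir j) := fun u j =>
    hf _ _ (fun h => hexDir_ne_zero j (by simpa using h)) (adj_add_hexDir u j)
  simp only [cornerChange, lowerLink, e1, e2, e3, e4]
  exact xor_lt_sum_eq_one (ne _ _) (e1 ▸ ne (v + hexDir i) (i + 2)) (ne _ _)

/-! ### Counting on the torus -/

section TorusSum

variable {n : ℕ} {g g' : Vertex → ℕ}

/-- Invariance under the translations by `(n, 0)` and `(0, n)`. -/
def DoublyPeriodic (n : ℕ) (g : Vertex → ℕ) : Prop :=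
  Function.Periodic g ((n, 0) : Vertex) ∧ Function.Periodic g ((0, n) : Vertex)

theorem DoublyPeriodic.eq_of_modEq (hg : DoublyPeriodic n g) {v w : Vertex}
    (h1 : v.1 ≡ w.1 [ZMOD n]) (h2 : v.2 ≡ w.2 [ZMOD n]) : g v = g w := by
  obtain ⟨k, hk⟩ := h1.dvd
  obtain ⟨l, hl⟩ := h2.dvd
  have e : w = v + k • ((n, 0) : Vertex) + l • ((0, n) : Vertex) := by
    ext
    · simp; linarith
    · simp; linarith
  rw [e, hg.2.zsmul l, hg.1.zsmul k]

variable [NeZero n]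

/-- The sum of a doubly periodic function over a period. -/
def torusSum (n : ℕ) [NeZero n] (g : Vertex → ℕ) : ℕ :=
  ∑ x : ZMod n × ZMod n, g (x.1.cast, x.2.cast)

theorem torusSum_add : torusSum n (fun v => g v + g' v) = torusSum n g + torusSum n g' :=
  Finset.sum_add_distrib

theorem DoublyPeriodic.torusSum_comp_add (hg : DoublyPeriodic n g) (t : Vertex) :
    torusSum n (fun v => g (v + t)) = torusSum n g := by
  refine (Finset.sum_congr rfl fun x _ => ?_).trans
    (Equiv.sum_comp (Equiv.addRight ((t.1, t.2) : ZMod n × ZMod n))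
      fun x => g (x.1.cast, x.2.cast))
  refine hg.eq_of_modEq ?_ ?_ <;> simp [← ZMod.intCast_eq_intCast_iff]

theorem DoublyPeriodic.eq_of_le_of_torusSum_le (hg : DoublyPeriodic n g) {c : ℕ}
    (hc : ∀ v, c ≤ g v) (hsum : torusSum n g ≤ torusSum n fun _ => c) (v : Vertex) : g v = c := by
  have h := (Finset.sum_eq_sum_iff_of_le fun x _ => hc _).mp
    (hsum.antisymm' (Finset.sum_le_sum fun x _ => hc _)) ((v.1, v.2) : ZMod n × ZMod n)
    (Finset.mem_univ _)
  rw [h]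
  exact hg.eq_of_modEq (by simp [← ZMod.intCast_eq_intCast_iff])
    (by simp [← ZMod.intCast_eq_intCast_iff])

end TorusSum

/-- A function on the cylinder of circumference `n`, equivariant for the translation by `(n, 0)`,
that behaves like a Morse function without local extrema. -/
structure IsPeriodicHeight (n : ℕ) (P : ℤ) (f : Vertex → ℤ) : Prop where
  add_horizontal : ∀ v : Vertex, f (v + ((n : ℤ), 0)) = f v + P
  add_vertical : ∀ v : Vertex, f (v + (0, (n : ℤ))) = f v
  ne_of_adj : ∀ v w, v ≠ w → Adj v w → f v ≠ f w
  exists_lower : ∀ v, ∃ w, Adj v w ∧ f w < f v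
  exists_higher : ∀ v, ∃ w, Adj v w ∧ f v < f w

namespace IsPeriodicHeight

variable {n : ℕ} {P : ℤ} {f : Vertex → ℤ}

theorem doublyPeriodic_cornerChange (hf : IsPeriodicHeight n P f) (i : Fin 6) :
    DoublyPeriodic n (cornerChange f i) := by
  constructor <;> intro v <;>
    simp [cornerChange, lowerLink, add_right_comm v _ (hexDir _), hf.add_horizontal,
      hf.add_vertical]

theorem torusSum_cornerChange [NeZero n] (hf : IsPeriodicHeight n P f) (i : Fin 6) :
    torusSum n (cornerChange f i) + torusSum n (cornerChange f (i + 2))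
      + torusSum n (cornerChange f (i + 4)) = torusSum n fun _ => 1 := by
  rw [← (hf.doublyPeriodic_cornerChange (i + 2)).torusSum_comp_add (hexDir i),
    ← (hf.doublyPeriodic_cornerChange (i + 4)).torusSum_comp_add (hexDir (i + 1)),
    ← torusSum_add, ← torusSum_add]
  exact congrArg (torusSum n) (funext (cornerChange_triangle hf.ne_of_adj i))

theorem two_le_signChanges_lowerLink (hf : IsPeriodicHeight n P f) (v : Vertex) :
    2 ≤ signChanges (lowerLink f v) := by
  refine two_le_signChanges _ ?_ ?_
  · obtain ⟨w, ha, hw⟩ := hf.exists_lower v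
    rcases adj_iff.mp ha with rfl | ⟨i, rfl⟩
    · exact absurd hw (lt_irrefl _)
    · exact ⟨i, decide_eq_true hw⟩
  · obtain ⟨w, ha, hw⟩ := hf.exists_higher v
    rcases adj_iff.mp ha with rfl | ⟨i, rfl⟩
    · exact absurd hw (lt_irrefl _)
    · exact ⟨i, decide_eq_false hw.le.not_gt⟩

/-- Each of the two triangles per vertex of the torus contributes one sign change, so that the
average number of sign changes is two. -/
theorem signChanges_lowerLink (hn : 0 < n) (hf : IsPeriodicHeight n P f) (v : Vertex) :
    signChanges (lowerLink f v) = 2 := by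
  have := NeZero.of_pos hn
  have hper : DoublyPeriodic n fun v => signChanges (lowerLink f v) :=
    ⟨fun v => Finset.sum_congr rfl fun i _ => (hf.doublyPeriodic_cornerChange i).1 v,
      fun v => Finset.sum_congr rfl fun i _ => (hf.doublyPeriodic_cornerChange i).2 v⟩
  refine hper.eq_of_le_of_torusSum_le hf.two_le_signChanges_lowerLink (le_of_eq ?_) v
  calc torusSum n (fun v => signChanges (lowerLink f v))
      = ∑ i, torusSum n (cornerChange f i) := Finset.sum_comm
    _ = torusSum n (fun _ => 1) + torusSum n (fun _ => 1) := by
        have h0 := hf.torusSum_cornerChange 0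
        have h1 := hf.torusSum_cornerChange 1
        rw [Fin.sum_univ_six]
        simp only [Fin.reduceAdd, zero_add] at h0 h1
        omega
    _ = torusSum n (fun _ => 2) := torusSum_add.symm

end IsPeriodicHeight

/-! ### Contiguity of shellings -/

/-- A filtration of the lattice by left half-cylinders, each obtained from the preceding one by
adding one vertical orbit, which is equivariant for the translation by `(n, 0)`. -/
structure IsPeriodicShelling (n : ℕ) (P : ℤ) (B : ℤ → Set Vertex) : Prop where
  isLeftHalf : ∀ j, IsLeftHalf n (B j)
  exists_succ : ∀ j, ∃ w, B (j + 1) = B j ∪ vOrbit n w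
  add_period : ∀ j, B (j + P) = (((n : ℤ), 0) : Vertex) +ᵥ B j

namespace IsPeriodicShelling

variable {n : ℕ} {P : ℤ} {B : ℤ → Set Vertex}

theorem monotone (hB : IsPeriodicShelling n P B) : Monotone B :=
  monotone_int_of_le_succ fun j => by
    obtain ⟨w, hw⟩ := hB.exists_succ j
    exact hw ▸ Set.subset_union_left

theorem add_mul_period (hB : IsPeriodicShelling n P B) (j k : ℤ) :
    B (j + k * P) = ((k * n, 0) : Vertex) +ᵥ B j := by
  induction k using Int.induction_on with
  | zero => simp [Prod.mk_zero_zero]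
  | succ k ih =>
    rw [show j + (k + 1) * P = j + k * P + P by ring, hB.add_period, ih, vadd_vadd]
    congr 1
    ext <;> simp; ring
  | pred k ih =>
    have h := hB.add_period (j + (-k - 1) * P)
    rw [show j + (-k - 1) * P + P = j + -k * P by ring, ih] at h
    rw [← neg_vadd_eq_iff.mpr h, vadd_vadd]
    congr 1
    ext <;> simp; ring

theorem exists_height (hn : 0 < n) (hB : IsPeriodicShelling n P B) (p : Vertex) :
    ∃ m : ℤ, ∀ j, p ∈ B j ↔ m < j := by
  obtain ⟨a, ha⟩ := (hB.isLeftHalf 0).exists_left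
  obtain ⟨b, hb⟩ := (hB.isLeftHalf 0).exists_right
  have mem_iff : ∀ k : ℤ, p ∈ B (k * P) ↔ p - (k * n, 0) ∈ B 0 := fun k => by
    rw [← mem_vadd_iff, ← hB.add_mul_period, zero_add]
  have hn' : (1 : ℤ) ≤ n := by exact_mod_cast hn
  obtain ⟨m, hm, hmin⟩ := Int.exists_least_of_bdd (P := fun j => p ∈ B j)
    ⟨-(|b| + |p.1| + 1) * P, fun z hz => by
      by_contra! hc
      have := hb _ ((mem_iff _).mp (hB.monotone hc.le hz))
      rw [Prod.fst_sub] at this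
      nlinarith [hn', le_abs_self b, neg_abs_le p.1, abs_nonneg b, abs_nonneg p.1]⟩
    ⟨(|a| + |p.1| + 1) * P, (mem_iff _).mpr (ha _ (by
      rw [Prod.fst_sub]
      nlinarith [hn', neg_abs_le a, le_abs_self p.1, abs_nonneg a, abs_nonneg p.1]))⟩
  refine ⟨m - 1, fun j => ⟨fun h => by have := hmin j h; omega, fun h => ?_⟩⟩
  exact hB.monotone (by omega : m ≤ j) hm

variable {f : Vertex → ℤ}

theorem mem_vOrbit_of_height_eq (hB : IsPeriodicShelling n P B) (hf : ∀ p j, p ∈ B j ↔ f p < j)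
    {p q : Vertex} (h : f p = f q) : q ∈ vOrbit n p := by
  obtain ⟨w, hw⟩ := hB.exists_succ (f p)
  have mem_vOrbit : ∀ r, f r = f p → r ∈ vOrbit n w := fun r hr => by
    have h1 : r ∈ B (f p + 1) := (hf _ _).mpr (by omega)
    rw [hw] at h1
    exact h1.resolve_left fun h => absurd ((hf _ _).mp h) (by omega)
  exact (vPeriodic_vOrbit n p).vOrbit_subset (vOrbit_symm (mem_vOrbit p rfl)) (mem_vOrbit q h.symm)

theorem height_eq_of_mem_vOrbit (hB : IsPeriodicShelling n P B) (hf : ∀ p j, p ∈ B j ↔ f p < j)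
    {p q : Vertex} (h : q ∈ vOrbit n p) : f q = f p := by
  have le : ∀ {p q : Vertex}, q ∈ vOrbit n p → f q ≤ f p := fun {p q} h =>
    Int.lt_add_one_iff.mp ((hf _ _).mp
      ((hB.isLeftHalf _).vPeriodic.vOrbit_subset ((hf p (f p + 1)).mpr (lt_add_one _)) h))
  exact (le h).antisymm (le (vOrbit_symm h))

theorem height_ne_of_adj (hn : 2 ≤ n) (hB : IsPeriodicShelling n P B)
    (hf : ∀ p j, p ∈ B j ↔ f p < j) {v w : Vertex} (hne : v ≠ w) (ha : Adj v w) : f v ≠ f w := by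
  intro he
  obtain ⟨h1, k, h2⟩ := hB.mem_vOrbit_of_height_eq hf he
  unfold Adj at ha
  have hn' : (2 : ℤ) ≤ n := by exact_mod_cast hn
  have hk : k = 0 := by
    by_contra hk
    rcases lt_or_gt_of_ne hk with hk | hk <;> nlinarith [hn']
  exact hne (Prod.ext h1.symm (by rw [h2, hk]; ring))

/-- Otherwise the orbit of `p` would be an inessential component. -/
theorem exists_adj_height_lt (hB : IsPeriodicShelling n P B) (hf : ∀ p j, p ∈ B j ↔ f p < j)
    (p : Vertex) : ∃ w, Adj p w ∧ f w < f p := by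
  by_contra! hc
  have hempty := (hB.isLeftHalf (f p + 1)).left_unbounded (vOrbit n p) ⟨?_, ?_⟩
    (boundedToward_neg_one_of_le fun z hz => hz.1.ge)
  · exact Set.eq_empty_iff_forall_notMem.mp hempty p (mem_vOrbit_self n p)
  · intro q hq
    rw [hf, hB.height_eq_of_mem_vOrbit hf hq]
    omega
  · intro z hz u hu ha
    obtain ⟨u', hu', ha'⟩ := exists_vOrbit_adj (vOrbit_symm hz) ha
    have h1 := hc u' ha'
    rw [hf] at hu
    rw [hB.height_eq_of_mem_vOrbit hf hu'] at h1
    exact hB.mem_vOrbit_of_height_eq hf (by omega)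

/-- Otherwise the orbit of `p` would be an inessential component of a complement. -/
theorem exists_adj_lt_height (hB : IsPeriodicShelling n P B) (hf : ∀ p j, p ∈ B j ↔ f p < j)
    (p : Vertex) : ∃ w, Adj p w ∧ f p < f w := by
  by_contra! hc
  have hempty := (hB.isLeftHalf (f p)).right_unbounded (vOrbit n p) ⟨?_, ?_⟩
    (boundedToward_one_of_le fun z hz => hz.1.le)
  · exact Set.eq_empty_iff_forall_notMem.mp hempty p (mem_vOrbit_self n p)
  · intro q hq
    rw [Set.mem_compl_iff, hf, hB.height_eq_of_mem_vOrbit hf hq]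
    omega
  · intro z hz u hu ha
    obtain ⟨u', hu', ha'⟩ := exists_vOrbit_adj (vOrbit_symm hz) ha
    have h1 := hc u' ha'
    rw [Set.mem_compl_iff, hf] at hu
    rw [hB.height_eq_of_mem_vOrbit hf hu'] at h1
    exact hB.mem_vOrbit_of_height_eq hf (by omega)

theorem isPeriodicHeight (hn : 2 ≤ n) (hB : IsPeriodicShelling n P B)
    (hf : ∀ p j, p ∈ B j ↔ f p < j) : IsPeriodicHeight n P f where
  add_horizontal w := by
    refine eq_of_forall_gt_iff fun j => ?_
    rw [← hf, show j = j - P + P by ring, hB.add_period, mem_vadd_iff, add_sub_cancel_right, hf]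
    omega
  add_vertical w := hB.height_eq_of_mem_vOrbit hf ⟨by simp, 1, by simp⟩
  ne_of_adj _ _ hne ha := hB.height_ne_of_adj hn hf hne ha
  exists_lower := hB.exists_adj_height_lt hf
  exists_higher := hB.exists_adj_lt_height hf

theorem signChanges_link (hn : 2 ≤ n) (hB : IsPeriodicShelling n P B) {v : Vertex} {j : ℤ}
    (hv : v ∉ B j) (hv' : v ∈ B (j + 1)) : signChanges (link (B j) v) = 2 := by
  choose f hf using hB.exists_height (by omega : 0 < n)
  rw [hf] at hv hv'
  have : link (B j) v = lowerLink f v := by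
    funext i
    rw [link, lowerLink, decide_eq_decide, hf]
    omega
  rw [this]
  exact (hB.isPeriodicHeight hn hf).signChanges_lowerLink (by omega) v

end IsPeriodicShelling

section Contiguity

variable {n : ℕ} {A A' : Set Vertex} {v : Vertex}

theorem vadd_vOrbit (n : ℕ) (t v : Vertex) : t +ᵥ vOrbit n v = vOrbit n (v + t) := by
  ext w
  simp only [mem_vadd_iff, vOrbit, Set.mem_ofPred_eq, Prod.fst_sub, Prod.snd_sub, Prod.fst_add,
    Prod.snd_add, sub_eq_iff_eq_add, add_right_comm]

theorem IsLeftHalf.exists_shelling (hn : 0 < n) (hA : IsLeftHalf n A)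
    (hAv : IsLeftHalf n (A ∪ vOrbit n v)) (hA' : IsLeftHalf n A') (hs : A ∪ vOrbit n v ⊆ A') :
    ∃ (P : ℕ) (B : ℕ → Set Vertex), 0 < P ∧ B 0 = A ∧ B 1 = A ∪ vOrbit n v ∧ B P = A' ∧
      (∀ j ≤ P, IsLeftHalf n (B j)) ∧ ∀ j < P, ∃ w, B (j + 1) = B j ∪ vOrbit n w := by
  refine hAv.shelling_induction hn hA' hs (fun X => ∃ (P : ℕ) (B : ℕ → Set Vertex), 0 < P ∧
    B 0 = A ∧ B 1 = A ∪ vOrbit n v ∧ B P = X ∧ (∀ j ≤ P, IsLeftHalf n (B j)) ∧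
    ∀ j < P, ∃ w, B (j + 1) = B j ∪ vOrbit n w) ?_ ?_
  · refine ⟨1, fun j => if j = 0 then A else A ∪ vOrbit n v, one_pos, if_pos rfl,
      if_neg one_ne_zero, if_neg one_ne_zero, fun j _ => ?_, fun j hj => ⟨v, ?_⟩⟩
    · dsimp only
      split_ifs
      exacts [hA, hAv]
    · simp [Nat.lt_one_iff.mp hj]
  · rintro X w - hXw - - - ⟨P, B, hpos, h0, h1, hP, hhalf, hstep⟩
    refine ⟨P + 1, fun j => if j ≤ P then B j else X ∪ vOrbit n w, P.succ_pos, by simpa using h0,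
      by simpa [Nat.succ_le_of_lt hpos] using h1, by simp, fun j _ => ?_, fun j hj => ?_⟩
    · dsimp only
      split_ifs with h
      exacts [hhalf j h, hXw]
    · rcases (Nat.lt_succ_iff.mp hj).lt_or_eq with h | rfl
      · simpa [h.le, Nat.succ_le_of_lt h] using hstep j h
      · exact ⟨w, by simp [hP]⟩

/-- The equivariant extension of the finite sequence `B 0, …, B P`, where `B P` is the translate of
`B 0` by `(n, 0)`. -/
def periodicExtension (n P : ℕ) (B : ℕ → Set Vertex) (j : ℤ) : Set Vertex :=
  ((j / P * n, 0) : Vertex) +ᵥ B (j % P).toNat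

theorem periodicExtension_eq {P : ℕ} {B : ℕ → Set Vertex} (hP : 0 < P)
    (hB : B P = (((n : ℤ), 0) : Vertex) +ᵥ B 0) (q : ℤ) {r : ℕ} (hr : r ≤ P) :
    periodicExtension n P B (q * P + r) = ((q * n, 0) : Vertex) +ᵥ B r := by
  have hP' : (P : ℤ) ≠ 0 := by omega
  unfold periodicExtension
  rcases hr.lt_or_eq with hr | rfl
  · have ediv : (q * P + r) / (P : ℤ) = q := by
      rw [add_comm, Int.add_mul_ediv_right _ _ hP', Int.ediv_eq_zero_of_lt] <;> omega
    have emod : (q * P + r) % (P : ℤ) = r := by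
      rw [add_comm, Int.add_mul_emod_self_right, Int.emod_eq_of_lt] <;> omega
    rw [ediv, emod, Int.toNat_natCast]
  · rw [← add_one_mul, Int.mul_ediv_cancel _ hP', Int.mul_emod_left, Int.toNat_zero, hB, vadd_vadd,
      Prod.mk_add_mk, add_zero, add_one_mul]

theorem isPeriodicShelling_periodicExtension {P : ℕ} {B : ℕ → Set Vertex} (hP : 0 < P)
    (hB : B P = (((n : ℤ), 0) : Vertex) +ᵥ B 0) (hhalf : ∀ j ≤ P, IsLeftHalf n (B j))
    (hstep : ∀ j < P, ∃ w, B (j + 1) = B j ∪ vOrbit n w) :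
    IsPeriodicShelling n P (periodicExtension n P B) := by
  have decomp : ∀ j : ℤ, ∃ (q : ℤ) (r : ℕ), r < P ∧ j = q * P + r := fun j => by
    have h0 := Int.emod_nonneg j (by omega : (P : ℤ) ≠ 0)
    have h1 := Int.emod_lt_of_pos j (by omega : (0 : ℤ) < P)
    refine ⟨j / P, (j % P).toNat, by omega, ?_⟩
    rw [Int.toNat_of_nonneg h0, mul_comm, Int.mul_ediv_add_emod]
  refine ⟨fun j => ?_, fun j => ?_, fun j => ?_⟩ <;> obtain ⟨q, r, hr, rfl⟩ := decomp j
  · rw [periodicExtension_eq hP hB q hr.le]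
    exact (hhalf r hr.le).vadd _
  · obtain ⟨w, hw⟩ := hstep r hr
    refine ⟨w + (q * n, 0), ?_⟩
    rw [add_assoc, ← Nat.cast_succ, periodicExtension_eq hP hB q hr,
      periodicExtension_eq hP hB q hr.le, hw, Set.vadd_set_union, vadd_vOrbit]
  · rw [show q * (P : ℤ) + r + P = (q + 1) * P + r by ring, periodicExtension_eq hP hB _ hr.le,
      periodicExtension_eq hP hB _ hr.le, vadd_vadd, Prod.mk_add_mk, add_zero, add_comm (n : ℤ),
      add_one_mul]

theorem IsLeftHalf.signChanges_link (hn : 2 ≤ n) (hA : IsLeftHalf n A)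
    (hAv : IsLeftHalf n (A ∪ vOrbit n v)) (hsub : A ∪ vOrbit n v ⊆ (((n : ℤ), 0) : Vertex) +ᵥ A)
    (hv : v ∉ A) : signChanges (link A v) = 2 := by
  obtain ⟨P, B, hP, h0, h1, hBP, hhalf, hstep⟩ :=
    hA.exists_shelling (by omega) hAv (hA.vadd ((n : ℤ), 0)) hsub
  have hB : B P = (((n : ℤ), 0) : Vertex) +ᵥ B 0 := by rw [hBP, h0]
  have ext0 := periodicExtension_eq hP hB 0 (Nat.zero_le P)
  have ext1 := periodicExtension_eq hP hB 0 hP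
  simp only [zero_mul, Prod.mk_zero_zero, zero_vadd, zero_add, Nat.cast_zero] at ext0
  simp only [zero_mul, Prod.mk_zero_zero, zero_vadd, zero_add, Nat.cast_one] at ext1
  rw [← h0, ← ext0]
  refine (isPeriodicShelling_periodicExtension hP hB hhalf hstep).signChanges_link hn ?_ ?_
  · rwa [ext0, h0]
  · rw [zero_add, ext1, h1]
    exact Or.inr (mem_vOrbit_self n v)

end Contiguity

/-! ### Cones over patterns of neighbours -/

/-- The plane containing the triangular lattice; its hexagonal structure comes from `hexNorm`. -/
abbrev Plane := ℝ × ℝ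

/-- The position of a lattice point in the plane. -/
def toPlane : Vertex →+ Plane := (Int.castAddHom ℝ).prodMap (Int.castAddHom ℝ)

@[simp] theorem toPlane_fst (v : Vertex) : (toPlane v).1 = v.1 := rfl

@[simp] theorem toPlane_snd (v : Vertex) : (toPlane v).2 = v.2 := rfl

/-- The determinant of `z` and `hexDir (i + 1)`: it is `1` at `hexDir i` and `0` at
`hexDir (i + 1)`. -/
def hexForm (i : Fin 6) (z : Plane) : ℝ := z.1 * (hexDir (i + 1)).2 - z.2 * (hexDir (i + 1)).1

/-- The cone over the full subcomplex of the hexagon spanned by the neighbours with pattern `b`: the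
sector `0 < hexForm i d ∧ 0 < hexForm (i + 1) d` is the cone over the open star of `hexDir i`. -/
def cone (b : Fin 6 → Bool) : Set Plane :=
  {d | ∀ i, 0 < hexForm i d → 0 < hexForm (i + 1) d → b i = true}

theorem hexForm_add (i : Fin 6) (z w : Plane) : hexForm i (z + w) = hexForm i z + hexForm i w := by
  simp only [hexForm, Prod.fst_add, Prod.snd_add]; ring

theorem hexForm_smul (i : Fin 6) (c : ℝ) (z : Plane) : hexForm i (c • z) = c * hexForm i z := by
  simp only [hexForm, Prod.smul_fst, Prod.smul_snd, smul_eq_mul]; ring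

theorem hexForm_neg (i : Fin 6) (z : Plane) : hexForm i (-z) = -hexForm i z := by
  simpa using hexForm_smul i (-1) z

@[fun_prop]
theorem continuous_hexForm (i : Fin 6) : Continuous (hexForm i) := by unfold hexForm; fun_prop

theorem hexForm_add_two (i : Fin 6) (z : Plane) :
    hexForm (i + 2) z = hexForm (i + 1) z - hexForm i z := by
  simp only [hexForm, add_right_comm i _ 1, ← hexDir_add_hexDir (i + 1), Prod.fst_add,
    Prod.snd_add, Int.cast_add]
  ring

theorem hexForm_hexDir (i k : Fin 6) :
    hexForm (i + k) (toPlane (hexDir i)) = (![1, 1, 0, -1, -1, 0] k : ℤ) := by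
  have h : ∀ i k : Fin 6, (hexDir i).1 * (hexDir (i + k + 1)).2 -
      (hexDir i).2 * (hexDir (i + k + 1)).1 = ![1, 1, 0, -1, -1, 0] k := by decide
  rw [← h i k]
  push_cast
  rfl

theorem smul_mem_cone {b : Fin 6 → Bool} {d : Plane} (hd : d ∈ cone b) {c : ℝ} (hc : 0 < c) :
    c • d ∈ cone b := fun i h1 h2 => by
  rw [hexForm_smul, mul_pos_iff_of_pos_left hc] at h1 h2
  exact hd i h1 h2

theorem isClosed_cone (b : Fin 6 → Bool) : IsClosed (cone b) := by
  simp only [cone, Set.ofPred_forall]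
  exact isClosed_iInter fun i =>
    isClosed_imp (isOpen_lt continuous_const (continuous_hexForm i)) <|
    isClosed_imp (isOpen_lt continuous_const (continuous_hexForm (i + 1))) isClosed_const

theorem exists_pushing_direction : ∀ b : Fin 6 → Bool, signChanges b = 2 →
    ∃ j, b j = true ∧ b (j + 3) = false ∧ (b (j + 1) = false → b (j + 2) = false) ∧
      (b (j + 5) = false → b (j + 4) = false) := by
  decide

/-- When the translation enters an excluded sector, it comes from the next sector away from
`hexDir j`, which is excluded too. -/
theorem add_smul_mem_cone {b : Fin 6 → Bool} {j : Fin 6} (hj : b j = true)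
    (h12 : b (j + 1) = false → b (j + 2) = false) (h54 : b (j + 5) = false → b (j + 4) = false)
    {d : Plane} (hd : d ∈ cone b) {α : ℝ} (hα : 0 ≤ α) :
    d + α • toPlane (hexDir j) ∈ cone b := by
  intro i h1 h2
  obtain ⟨k, rfl⟩ : ∃ k, i = j + k := ⟨i - j, by abel⟩
  by_contra hb
  rw [Bool.not_eq_true] at hb
  have not_both : ∀ k, b (j + k) = false → 0 < hexForm (j + k) d → ¬ 0 < hexForm (j + (k + 1)) d :=
    fun k hk h h' => by simpa [hk] using hd (j + k) h (by rwa [add_assoc])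
  have next : ∀ k, hexForm (j + (k + 2)) d = hexForm (j + (k + 1)) d - hexForm (j + k) d :=
    fun k => by simpa only [add_assoc] using hexForm_add_two (j + k) d
  rw [add_assoc] at h2
  rw [hexForm_add, hexForm_smul, hexForm_hexDir] at h1 h2
  have base : j + 0 = j := add_zero j
  fin_cases k <;> simp at h1 h2 <;> grind

theorem neg_smul_notMem_cone {b : Fin 6 → Bool} {j : Fin 6} (h : b (j + 3) = false) {α : ℝ}
    (hα : 0 < α) : -(α • toPlane (hexDir j)) ∉ cone b := fun hm => by
  rw [← Bool.not_eq_true] at h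
  refine h (hm (j + 3) ?_ ?_)
  · simpa [hexForm_neg, hexForm_smul, hexForm_hexDir]
  · simpa [hexForm_neg, hexForm_smul, hexForm_hexDir, add_assoc]

/-! ### The push supported in a hexagon -/

/-- The norm on the plane whose unit ball is the hexagon with vertices `toPlane (hexDir i)`. -/
def hexNorm (z : Plane) : ℝ := max |z.1| (max |z.2| |z.1 - z.2|)

theorem hexNorm_lt {z : Plane} {r : ℝ} :
    hexNorm z < r ↔ |z.1| < r ∧ |z.2| < r ∧ |z.1 - z.2| < r := by
  simp only [hexNorm, max_lt_iff]

theorem hexNorm_le {z : Plane} {r : ℝ} :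
    hexNorm z ≤ r ↔ |z.1| ≤ r ∧ |z.2| ≤ r ∧ |z.1 - z.2| ≤ r := by
  simp only [hexNorm, max_le_iff]

theorem hexNorm_smul (c : ℝ) (z : Plane) : hexNorm (c • z) = |c| * hexNorm z := by
  simp only [hexNorm, Prod.smul_fst, Prod.smul_snd, smul_eq_mul, ← mul_sub, abs_mul,
    mul_max_of_nonneg _ _ (abs_nonneg c)]

theorem hexNorm_add_le (z w : Plane) : hexNorm (z + w) ≤ hexNorm z + hexNorm w := by
  obtain ⟨h1, h2, h3⟩ := hexNorm_le.mp (le_refl (hexNorm z))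
  obtain ⟨h4, h5, h6⟩ := hexNorm_le.mp (le_refl (hexNorm w))
  refine hexNorm_le.mpr ⟨(abs_add_le _ _).trans (add_le_add h1 h4),
    (abs_add_le _ _).trans (add_le_add h2 h5), ?_⟩
  rw [Prod.fst_add, Prod.snd_add, add_sub_add_comm]
  exact (abs_add_le _ _).trans (add_le_add h3 h6)

theorem hexNorm_neg (z : Plane) : hexNorm (-z) = hexNorm z := by
  simpa using hexNorm_smul (-1) z

theorem hexNorm_zero : hexNorm 0 = 0 := by simp [hexNorm]

theorem hexNorm_nonneg (z : Plane) : 0 ≤ hexNorm z := (abs_nonneg z.1).trans (le_max_left _ _)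

theorem norm_le_hexNorm (z : Plane) : ‖z‖ ≤ hexNorm z :=
  max_le_max le_rfl (le_max_left _ _)

theorem hexNorm_le_two_mul_norm (z : Plane) : hexNorm z ≤ 2 * ‖z‖ := by
  have h1 : |z.1| ≤ ‖z‖ := norm_fst_le z
  have h2 : |z.2| ≤ ‖z‖ := norm_snd_le z
  have h0 := norm_nonneg z
  exact hexNorm_le.mpr ⟨by linarith, by linarith, (abs_sub z.1 z.2).trans (by linarith)⟩

theorem hexNorm_pos {z : Plane} (h : z ≠ 0) : 0 < hexNorm z :=
  (norm_pos_iff.mpr h).trans_le (norm_le_hexNorm z)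

theorem abs_hexNorm_sub_le (z w : Plane) : |hexNorm z - hexNorm w| ≤ 2 * ‖z - w‖ := by
  have h1 := hexNorm_add_le (z - w) w
  have h2 := hexNorm_add_le (w - z) z
  rw [← neg_sub, hexNorm_neg] at h2
  simp only [neg_sub, sub_add_cancel] at h1 h2
  exact (abs_le.mpr ⟨by linarith, by linarith⟩).trans (hexNorm_le_two_mul_norm _)

@[fun_prop]
theorem continuous_hexNorm : Continuous hexNorm := by unfold hexNorm; fun_prop

/-- Translation by `m`, damped to the identity at the boundary of the unit hexagon. -/
def translationPush (m z : Plane) : Plane := z + max (1 - hexNorm z) 0 • m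

/-- The radial map of the unit hexagon acting on `hexNorm` by `s ↦ s / (μ + (1 - μ) s)`; it expands
towards the boundary for small `μ`. -/
noncomputable def radialPush (μ : ℝ) (z : Plane) : Plane :=
  (μ + (1 - μ) * min (hexNorm z) 1)⁻¹ • z

theorem norm_damping_sub_le {m : Plane} (hm : ‖m‖ ≤ 1 / 4) (z w : Plane) :
    ‖(max (1 - hexNorm z) 0 - max (1 - hexNorm w) 0) • m‖ ≤ 1 / 2 * ‖z - w‖ := by
  have h : |max (1 - hexNorm z) 0 - max (1 - hexNorm w) 0| ≤ 2 * ‖z - w‖ := by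
    refine (abs_max_sub_max_le_abs _ _ _).trans ?_
    rw [sub_sub_sub_cancel_left, abs_sub_comm]
    exact abs_hexNorm_sub_le z w
  rw [norm_smul, Real.norm_eq_abs]
  calc _ ≤ 2 * ‖z - w‖ * (1 / 4) := mul_le_mul h hm (norm_nonneg _) (by positivity)
    _ = _ := by ring

theorem bijective_translationPush {m : Plane} (hm : ‖m‖ ≤ 1 / 4) :
    Function.Bijective (translationPush m) := by
  constructor
  · intro z w h
    have hzw : z - w = (max (1 - hexNorm w) 0 - max (1 - hexNorm z) 0) • m := by
      unfold translationPush at h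
      rw [sub_smul, sub_eq_sub_iff_add_eq_add, h, add_comm]
    have hle := norm_damping_sub_le hm w z
    rw [← hzw, norm_sub_rev w z] at hle
    exact sub_eq_zero.mp (norm_le_zero_iff.mp (by linarith))
  · intro y
    have hc : ContractingWith (1 / 2) (fun z : Plane => y - max (1 - hexNorm z) 0 • m) := by
      refine ⟨by rw [← NNReal.coe_lt_coe]; norm_num, LipschitzWith.of_dist_le_mul fun z w => ?_⟩
      rw [dist_eq_norm, dist_eq_norm, sub_sub_sub_cancel_left, ← sub_smul, norm_sub_rev z w]
      simpa using norm_damping_sub_le hm w z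
    exact ⟨hc.fixedPoint, (sub_eq_iff_eq_add.mp hc.fixedPoint_isFixedPt).symm⟩

theorem translationPush_of_one_le {m z : Plane} (h : 1 ≤ hexNorm z) : translationPush m z = z := by
  rw [translationPush, max_eq_right (by linarith), zero_smul, add_zero]

theorem hexNorm_translationPush_le {m z : Plane} (hm : hexNorm m ≤ 1) (h : hexNorm z ≤ 1) :
    hexNorm (translationPush m z) ≤ 1 := by
  rw [translationPush, max_eq_left (by linarith)]
  refine (hexNorm_add_le _ _).trans ?_
  rw [hexNorm_smul, abs_of_nonneg (by linarith)]
  linarith [mul_le_mul_of_nonneg_left hm (sub_nonneg.mpr h)]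

theorem radialPush_of_one_le {μ : ℝ} {z : Plane} (h : 1 ≤ hexNorm z) : radialPush μ z = z := by
  simp [radialPush, min_eq_right h]

theorem add_one_sub_mul_pos {μ s : ℝ} (hμ : 0 < μ) (h0 : 0 ≤ s) (h1 : s ≤ 1) :
    0 < μ + (1 - μ) * s := by
  rcases h1.lt_or_eq with h | rfl
  · linarith [mul_pos hμ (sub_pos.mpr h)]
  · linarith

theorem hexNorm_radialPush {μ : ℝ} (hμ : 0 < μ) {z : Plane} (h : hexNorm z ≤ 1) :
    hexNorm (radialPush μ z) = hexNorm z / (μ + (1 - μ) * hexNorm z) := by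
  have hpos := add_one_sub_mul_pos hμ (hexNorm_nonneg z) h
  rw [radialPush, min_eq_left h, hexNorm_smul, abs_of_pos (inv_pos.mpr hpos), div_eq_inv_mul]

theorem radialPush_inv_radialPush {μ : ℝ} (hμ : 0 < μ) (z : Plane) :
    radialPush μ⁻¹ (radialPush μ z) = z := by
  rcases le_or_gt 1 (hexNorm z) with h | h
  · rw [radialPush_of_one_le h, radialPush_of_one_le h]
  · have hpos := add_one_sub_mul_pos hμ (hexNorm_nonneg z) h.le
    have hle : hexNorm (radialPush μ z) ≤ 1 := by
      rw [hexNorm_radialPush hμ h.le, div_le_one hpos]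
      linarith [mul_nonneg hμ.le (sub_nonneg.mpr h.le)]
    rw [radialPush, min_eq_left hle, hexNorm_radialPush hμ h.le, radialPush, min_eq_left h.le,
      smul_smul, ← mul_inv]
    have hone : (μ⁻¹ + (1 - μ⁻¹) * (hexNorm z / (μ + (1 - μ) * hexNorm z))) *
        (μ + (1 - μ) * hexNorm z) = 1 := by
      rw [add_mul, mul_assoc, div_mul_cancel₀ _ hpos.ne']
      field_simp
      ring
    rw [hone, inv_one, one_smul]

theorem bijective_radialPush {μ : ℝ} (hμ : 0 < μ) : Function.Bijective (radialPush μ) := by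
  refine Function.bijective_iff_has_inverse.mpr
    ⟨radialPush μ⁻¹, radialPush_inv_radialPush hμ, fun z => ?_⟩
  simpa using radialPush_inv_radialPush (inv_pos.mpr hμ) z

theorem exists_radial_expansion_into {C K W : Set Plane} (hK : IsCompact K) (hKC : K ⊆ C)
    (h0 : 0 ∉ K) (hC : ∀ d ∈ C, ∀ c : ℝ, 0 < c → c • d ∈ C) (hW : IsOpen W)
    (hCW : ∀ d ∈ C, hexNorm d = 1 → d ∈ W) :
    ∃ μ : ℝ, 0 < μ ∧ μ ≤ 1 ∧ ∀ e ∈ K, (μ + (1 - μ) * hexNorm e)⁻¹ • e ∈ W := by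
  have hev : ∀ᶠ μ : ℝ in 𝓝 0, ∀ e ∈ K, (μ + (1 - μ) * hexNorm e)⁻¹ • e ∈ W := by
    refine hK.eventually_forall_of_forall_eventually fun e he => ?_
    have hpos := hexNorm_pos (ne_of_mem_of_not_mem he h0)
    have hden : ContinuousAt (fun p : ℝ × Plane => p.1 + (1 - p.1) * hexNorm p.2) (0, e) := by
      fun_prop
    have hcont := (hden.inv₀ (by simpa using hpos.ne')).smul continuousAt_snd
    have hin : (hexNorm e)⁻¹ • e ∈ W := by
      refine hCW _ (hC e (hKC he) _ (inv_pos.mpr hpos)) ?_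
      rw [hexNorm_smul, abs_of_pos (inv_pos.mpr hpos), inv_mul_cancel₀ hpos.ne']
    exact hcont.eventually (hW.mem_nhds (by simpa using hin))
  have hIoc : ∀ᶠ μ : ℝ in 𝓝[>] 0, μ ∈ Set.Ioc 0 1 := Ioc_mem_nhdsGT one_pos
  obtain ⟨μ, hμ, hμW⟩ := (hIoc.and (hev.filter_mono nhdsWithin_le_nhds)).exists
  exact ⟨μ, hμ.1, hμ.2, hμW⟩

theorem isCompact_cone_inter_hexagon (b : Fin 6 → Bool) :
    IsCompact (cone b ∩ {d | hexNorm d ≤ 1}) :=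
  Metric.isCompact_of_isClosed_isBounded
    ((isClosed_cone b).inter (isClosed_le continuous_hexNorm continuous_const))
    (Metric.isBounded_closedBall.subset fun d hd =>
      mem_closedBall_zero_iff.mpr ((norm_le_hexNorm d).trans hd.2))

theorem exists_translationPush_cone {b : Fin 6 → Bool} (h : signChanges b = 2) :
    ∃ m : Plane, ‖m‖ ≤ 1 / 4 ∧ ∀ d ∈ cone b, hexNorm d ≤ 1 →
      translationPush m d ∈ cone b ∧ hexNorm (translationPush m d) ≤ 1 ∧
        translationPush m d ≠ 0 := by
  obtain ⟨j, hj, hj3, h12, h54⟩ := exists_pushing_direction b h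
  have hm : ‖(1 / 4 : ℝ) • toPlane (hexDir j)‖ ≤ 1 / 4 := by
    have : ‖toPlane (hexDir j)‖ ≤ 1 := by
      fin_cases j <;> simp [hexDir, Prod.norm_def]
    rw [norm_smul, Real.norm_of_nonneg (by norm_num)]
    linarith
  refine ⟨(1 / 4 : ℝ) • toPlane (hexDir j), hm, fun d hd hd1 => ⟨?_, ?_, fun h0 => ?_⟩⟩
  · rw [translationPush, smul_smul]
    exact add_smul_mem_cone hj h12 h54 hd (by positivity)
  · exact hexNorm_translationPush_le ((hexNorm_le_two_mul_norm _).trans (by linarith)) hd1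
  · rcases hd1.lt_or_eq with hlt | heq
    · have hpos : 0 < max (1 - hexNorm d) 0 * (1 / 4) :=
        mul_pos (lt_max_of_lt_left (sub_pos.mpr hlt)) (by norm_num)
      rw [translationPush, smul_smul] at h0
      exact neg_smul_notMem_cone hj3 hpos (eq_neg_of_add_eq_zero_left h0 ▸ hd)
    · rw [translationPush_of_one_le heq.ge] at h0
      simp [h0, hexNorm_zero] at heq

theorem continuous_radialPush_translationPush (m : Plane) {f : I → ℝ} (hf : Continuous f)
    (hpos : ∀ t, 0 < f t) :
    Continuous fun p : I × Plane => radialPush (f p.1) (translationPush ((p.1 : ℝ) • m) p.2) := by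
  have hT : Continuous fun p : I × Plane => translationPush ((p.1 : ℝ) • m) p.2 := by
    unfold translationPush; fun_prop
  have hden : Continuous fun p : I × Plane =>
      f p.1 + (1 - f p.1) * min (hexNorm (translationPush ((p.1 : ℝ) • m) p.2)) 1 := by fun_prop
  refine (hden.inv₀ fun p => ?_).smul hT
  exact (add_one_sub_mul_pos (hpos p.1) (le_min (hexNorm_nonneg _) zero_le_one)
    (min_le_right _ _)).ne'

/-- First translate the cone off its apex, then expand it radially to the boundary of the
hexagon. -/
theorem exists_push_cone {b : Fin 6 → Bool} (h : signChanges b = 2) {W : Set Plane}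
    (hW : IsOpen W) (hCW : ∀ d ∈ cone b, hexNorm d = 1 → d ∈ W) :
    ∃ ρ : I → Plane → Plane, Continuous (fun p : I × Plane => ρ p.1 p.2) ∧ ρ 0 = id ∧
      (∀ t, Function.Bijective (ρ t)) ∧ (∀ t z, 1 ≤ hexNorm z → ρ t z = z) ∧
      ∀ d ∈ cone b, hexNorm d ≤ 1 → ρ 1 d ∈ W := by
  obtain ⟨m, hm, hmC⟩ := exists_translationPush_cone h
  set K := translationPush m '' (cone b ∩ {d | hexNorm d ≤ 1})
  have hK : ∀ e ∈ K, e ∈ cone b ∧ hexNorm e ≤ 1 ∧ e ≠ 0 := by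
    rintro _ ⟨d, ⟨hd, hd1⟩, rfl⟩
    exact hmC d hd hd1
  have hKcompact : IsCompact K :=
    (isCompact_cone_inter_hexagon b).image (by unfold translationPush; fun_prop)
  obtain ⟨μ, hμ0, hμ1, hμW⟩ := exists_radial_expansion_into hKcompact (fun e he => (hK e he).1)
    (fun h0 => (hK 0 h0).2.2 rfl) (fun d hd c hc => smul_mem_cone hd hc) hW hCW
  have hpos : ∀ t : I, 0 < 1 - (t : ℝ) * (1 - μ) := fun t => by
    linarith [mul_le_mul_of_nonneg_right t.2.2 (sub_nonneg.mpr hμ1)]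
  refine ⟨fun t z => radialPush (1 - t * (1 - μ)) (translationPush ((t : ℝ) • m) z),
    continuous_radialPush_translationPush m (by fun_prop) hpos, ?_, fun t => ?_, ?_, ?_⟩
  · funext z
    simp [radialPush, translationPush]
  · refine (bijective_radialPush (hpos t)).comp (bijective_translationPush ?_)
    rw [norm_smul, Real.norm_of_nonneg t.2.1]
    exact (mul_le_of_le_one_left (norm_nonneg m) t.2.2).trans hm
  · intro t z hz
    simp only [translationPush_of_one_le hz, radialPush_of_one_le hz]
  · intro d hd hd1
    have he : translationPush m d ∈ K := ⟨d, ⟨hd, hd1⟩, rfl⟩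
    simpa [radialPush, min_eq_left (hK _ he).2.1] using hμW _ he

/-! ### Carriers and periodic homeomorphisms -/

/-- The vertices of the smallest simplex of the triangular lattice containing `z`. -/
def carrier (z : Plane) : Set Vertex := {v | hexNorm (z - toPlane v) < 1}

theorem mem_carrier {z : Plane} {v : Vertex} : v ∈ carrier z ↔ hexNorm (z - toPlane v) < 1 :=
  Iff.rfl

theorem mem_carrier_iff_abs {z : Plane} {v : Vertex} : v ∈ carrier z ↔
    |z.1 - v.1| < 1 ∧ |z.2 - v.2| < 1 ∧ |(z.1 - v.1) - (z.2 - v.2)| < 1 := by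
  simp only [mem_carrier, hexNorm_lt, Prod.fst_sub, Prod.snd_sub, toPlane_fst, toPlane_snd]

theorem add_mem_carrier_add_iff (v w : Vertex) (z : Plane) :
    v + w ∈ carrier (z + toPlane w) ↔ v ∈ carrier z := by
  rw [mem_carrier, mem_carrier, map_add, add_sub_add_right_eq_sub]

theorem floor_mem_carrier (z : Plane) : ((⌊z.1⌋, ⌊z.2⌋) : Vertex) ∈ carrier z := by
  rw [mem_carrier_iff_abs]
  have h1 := Int.fract_nonneg z.1
  have h2 := Int.fract_lt_one z.1
  have h3 := Int.fract_nonneg z.2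
  have h4 := Int.fract_lt_one z.2
  simp only [Int.self_sub_floor, abs_lt]
  exact ⟨⟨by linarith, h2⟩, ⟨by linarith, h4⟩, by linarith, by linarith⟩

theorem carrier_nonempty (z : Plane) : (carrier z).Nonempty := ⟨_, floor_mem_carrier z⟩

theorem adj_of_hexNorm_lt_two {u v : Vertex} (h : hexNorm (toPlane u - toPlane v) < 2) :
    Adj u v := by
  rw [hexNorm_lt, ← map_sub, toPlane_fst, toPlane_snd] at h
  norm_cast at h
  simp only [Prod.fst_sub, Prod.snd_sub, abs_lt] at h
  unfold Adj
  omega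

theorem adj_of_mem_carrier_of_le {z : Plane} {u v : Vertex} (hu : u ∈ carrier z)
    (hv : hexNorm (z - toPlane v) ≤ 1) : Adj u v := by
  apply adj_of_hexNorm_lt_two
  rw [mem_carrier, ← hexNorm_neg, neg_sub] at hu
  have := hexNorm_add_le (toPlane u - z) (z - toPlane v)
  rw [sub_add_sub_cancel] at this
  linarith

theorem adj_of_mem_carrier {z : Plane} {u v : Vertex} (hu : u ∈ carrier z) (hv : v ∈ carrier z) :
    Adj u v :=
  adj_of_mem_carrier_of_le hu (le_of_lt hv)

/-- `g` is a homeomorphism of the plane intertwining the translations by `n ℤ²` with those by `ℤ²`: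
the lift, rescaled by `n` in the source, of a homeomorphism of the torus homotopic to the
identity. -/
structure IsEquivariantHomeo (n : ℕ) (g : C(Plane, Plane)) : Prop where
  bijective : Function.Bijective g
  map_add_toPlane : ∀ (w : Vertex) (z : Plane), g (z + toPlane (n • w)) = g z + toPlane w

/-- The coefficient of a point of `v + n ℤ²` nearest to `z`. -/
noncomputable def nearest (n : ℕ) (v : Vertex) (z : Plane) : Vertex :=
  (round ((z.1 - v.1) / n), round ((z.2 - v.2) / n))

/-- The map applying `r` around each point of `v + n ℤ²`. -/
noncomputable def periodize (n : ℕ) (v : Vertex) (r : Plane → Plane) (z : Plane) : Plane :=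
  toPlane (v + n • nearest n v z) + r (z - toPlane (v + n • nearest n v z))

theorem norm_sub_nearest_le {n : ℕ} (hn : n ≠ 0) (v : Vertex) (z : Plane) :
    ‖z - toPlane (v + n • nearest n v z)‖ ≤ n / 2 := by
  have hn' : (0 : ℝ) < n := by positivity
  have key : ∀ (x : ℝ) (a : ℤ), |x - (a + n * round ((x - a) / n))| ≤ n / 2 := fun x a => by
    have e : x - (a + n * round ((x - a) / n)) = n * ((x - a) / n - round ((x - a) / n)) := by
      field_simp
      ring
    rw [e, abs_mul, Nat.abs_cast]
    linarith [mul_le_mul_of_nonneg_left (abs_sub_round ((x - a) / n)) hn'.le]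
  refine max_le ?_ ?_
  · simpa [nearest] using key z.1 v.1
  · simpa [nearest] using key z.2 v.2

theorem one_le_norm_toPlane {w : Vertex} (hw : w ≠ 0) : 1 ≤ ‖toPlane w‖ := by
  have key : ∀ a : ℤ, a ≠ 0 → (1 : ℝ) ≤ |(a : ℝ)| := fun a ha => by
    exact_mod_cast Int.one_le_abs ha
  rw [Prod.norm_def, le_max_iff]
  by_contra! h
  exact hw (Prod.ext (not_imp_comm.mp (key w.1) h.1.not_ge) (not_imp_comm.mp (key w.2) h.2.not_ge))

theorem le_norm_toPlane_sub {n : ℕ} (v : Vertex) {w w' : Vertex} (h : w ≠ w') :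
    (n : ℝ) ≤ ‖toPlane (v + n • w) - toPlane (v + n • w')‖ := by
  rw [← map_sub, add_sub_add_left_eq_sub, ← nsmul_sub, map_nsmul, ← Nat.cast_smul_eq_nsmul ℝ,
    norm_smul, Real.norm_natCast]
  exact le_mul_of_one_le_right n.cast_nonneg (one_le_norm_toPlane (sub_ne_zero.mpr h))

section Periodize

variable {n : ℕ} {v : Vertex} {r s : Plane → Plane}

theorem periodize_eq_of_norm_lt (hn : 3 ≤ n) (hr : ∀ z, 1 ≤ hexNorm z → r z = z) {z : Plane}
    {w : Vertex} (h : ‖z - toPlane (v + n • w)‖ < n - 1) :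
    periodize n v r z = toPlane (v + n • w) + r (z - toPlane (v + n • w)) := by
  have hn' : (3 : ℝ) ≤ n := by exact_mod_cast hn
  by_cases hw : nearest n v z = w
  · rw [periodize, hw]
  · have hnear := norm_sub_nearest_le (by omega : n ≠ 0) v z
    have hsep := le_norm_toPlane_sub (n := n) v hw
    have htri := norm_sub_le_norm_sub_add_norm_sub (toPlane (v + n • nearest n v z)) z
      (toPlane (v + n • w))
    rw [norm_sub_rev _ z] at htri
    rw [periodize, hr _ (le_trans (by linarith only [h, hsep, htri]) (norm_le_hexNorm _)),
      hr _ (le_trans (by linarith only [hn', hnear, hsep, htri]) (norm_le_hexNorm _)),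
      add_sub_cancel, add_sub_cancel]

theorem periodize_of_mem_carrier (hn : 3 ≤ n) (hr : ∀ z, 1 ≤ hexNorm z → r z = z) {z : Plane}
    {w : Vertex} (h : v + n • w ∈ carrier z) :
    periodize n v r z = toPlane (v + n • w) + r (z - toPlane (v + n • w)) := by
  have hn' : (3 : ℝ) ≤ n := by exact_mod_cast hn
  exact periodize_eq_of_norm_lt hn hr
    ((norm_le_hexNorm _).trans_lt ((mem_carrier.mp h).trans_le (by linarith)))

theorem periodize_of_forall_notMem_carrier (hr : ∀ z, 1 ≤ hexNorm z → r z = z) {z : Plane}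
    (h : ∀ w : Vertex, v + n • w ∉ carrier z) : periodize n v r z = z := by
  rw [periodize, hr _ (not_lt.mp (h _)), add_sub_cancel]

theorem periodize_id (n : ℕ) (v : Vertex) : periodize n v id = id :=
  funext fun _ => add_sub_cancel _ _

theorem hexNorm_lt_one_of_injective (hr : ∀ z, 1 ≤ hexNorm z → r z = z)
    (hi : Function.Injective r) {z : Plane} (h : hexNorm z < 1) : hexNorm (r z) < 1 := by
  by_contra! hc
  rw [hi (hr _ hc)] at hc
  exact hc.not_gt h

theorem mem_carrier_periodize (hn : 3 ≤ n) (hr : ∀ z, 1 ≤ hexNorm z → r z = z)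
    (hi : Function.Injective r) {z : Plane} {w : Vertex} (h : v + n • w ∈ carrier z) :
    v + n • w ∈ carrier (periodize n v r z) := by
  rw [periodize_of_mem_carrier hn hr h, mem_carrier, add_sub_cancel_left]
  exact hexNorm_lt_one_of_injective hr hi h

theorem periodize_comp (hn : 3 ≤ n) (hr : ∀ z, 1 ≤ hexNorm z → r z = z)
    (hs : ∀ z, 1 ≤ hexNorm z → s z = z) (hi : Function.Injective s) :
    periodize n v r ∘ periodize n v s = periodize n v (r ∘ s) := by
  have hrs : ∀ z, 1 ≤ hexNorm z → (r ∘ s) z = z := fun z hz => by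
    rw [Function.comp_apply, hs z hz, hr z hz]
  funext z
  rw [Function.comp_apply]
  by_cases! h : ∃ w : Vertex, v + n • w ∈ carrier z
  · obtain ⟨w, h⟩ := h
    rw [periodize_of_mem_carrier hn hr (mem_carrier_periodize hn hs hi h),
      periodize_of_mem_carrier hn hs h, add_sub_cancel_left, periodize_of_mem_carrier hn hrs h,
      Function.comp_apply]
  · rw [periodize_of_forall_notMem_carrier hs h, periodize_of_forall_notMem_carrier hr h,
      periodize_of_forall_notMem_carrier hrs h]

theorem bijective_periodize (hn : 3 ≤ n) (hr : ∀ z, 1 ≤ hexNorm z → r z = z)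
    (hb : Function.Bijective r) : Function.Bijective (periodize n v r) := by
  obtain ⟨s, hsr, hrs⟩ := Function.bijective_iff_has_inverse.mp hb
  have hs : ∀ z, 1 ≤ hexNorm z → s z = z := fun z hz => by
    rw [← hr z hz, hsr, hr z hz]
  refine Function.bijective_iff_has_inverse.mpr ⟨periodize n v s,
    Function.leftInverse_iff_comp.mpr ?_, Function.rightInverse_iff_comp.mpr ?_⟩
  · rw [periodize_comp hn hs hr hb.1, hsr.comp_eq_id, periodize_id]
  · rw [periodize_comp hn hr hs hrs.injective, hrs.comp_eq_id, periodize_id]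

theorem periodize_add (hn : n ≠ 0) (w : Vertex) (z : Plane) :
    periodize n v r (z + toPlane (n • w)) = periodize n v r z + toPlane (n • w) := by
  have key : ∀ (x : ℝ) (c a : ℤ), round ((x + n * a - c) / n) = round ((x - c) / n) + a := by
    intro x c a
    rw [← round_add_intCast]
    congr 1
    field_simp
    ring
  have hnear : nearest n v (z + toPlane (n • w)) = nearest n v z + w := by
    ext <;> simp [nearest, key]
  rw [periodize, hnear, nsmul_add, ← add_assoc, map_add toPlane (v + _), add_sub_add_right_eq_sub,
    add_right_comm, periodize]

theorem IsEquivariantHomeo.comp_periodize (hn : 3 ≤ n) {g f : C(Plane, Plane)}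
    (hg : IsEquivariantHomeo n g) (hr : ∀ z, 1 ≤ hexNorm z → r z = z) (hb : Function.Bijective r)
    (hf : ⇑f = g ∘ periodize n v r) : IsEquivariantHomeo n f := by
  refine ⟨hf ▸ hg.bijective.comp (bijective_periodize hn hr hb), fun w z => ?_⟩
  rw [hf, Function.comp_apply, periodize_add (by omega), hg.map_add_toPlane, Function.comp_apply]

theorem continuous_periodize (hn : 3 ≤ n) {ρ : I → Plane → Plane}
    (hc : Continuous fun p : I × Plane => ρ p.1 p.2) (hr : ∀ t z, 1 ≤ hexNorm z → ρ t z = z) :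
    Continuous fun p : I × Plane => periodize n v (ρ p.1) p.2 := by
  have hn' : (3 : ℝ) ≤ n := by exact_mod_cast hn
  refine continuous_iff_continuousAt.mpr fun p₀ => ?_
  set c := toPlane (v + n • nearest n v p₀.2)
  have hopen : IsOpen {p : I × Plane | ‖p.2 - c‖ < n - 1} :=
    isOpen_lt (by fun_prop) continuous_const
  have hp₀ : ‖p₀.2 - c‖ < n - 1 :=
    (norm_sub_nearest_le (by omega) v p₀.2).trans_lt (by linarith)
  have hloc : ∀ᶠ p : I × Plane in 𝓝 p₀, c + ρ p.1 (p.2 - c) = periodize n v (ρ p.1) p.2 := by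
    filter_upwards [hopen.mem_nhds hp₀] with p hp
    exact (periodize_eq_of_norm_lt hn (hr p.1) hp).symm
  have hsub : Continuous fun p : I × Plane => (p.1, p.2 - c) := by fun_prop
  exact (continuous_const.add (hc.comp hsub)).continuousAt.congr hloc

end Periodize

/-! ### Adding a vertex orbit to a level -/

theorem hexNorm_sub_hexDir_lt_one_iff {d : Plane} (hd : hexNorm d ≤ 1) (i : Fin 6) :
    hexNorm (d - toPlane (hexDir i)) < 1 ↔ 0 < hexForm i d ∧ 0 < hexForm (i + 1) d := by
  simp only [hexNorm_le, abs_le] at hd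
  rw [hexNorm_lt]
  fin_cases i <;> simp [hexForm, hexDir, abs_lt] <;> grind

theorem mem_cone_link_iff {A : Set Vertex} {v : Vertex} {d : Plane} (hd : hexNorm d ≤ 1) :
    d ∈ cone (link A v) ↔ ∀ u ∈ carrier (toPlane v + d), u ≠ v → u ∈ A := by
  have key : ∀ i, v + hexDir i ∈ carrier (toPlane v + d) ↔
      0 < hexForm i d ∧ 0 < hexForm (i + 1) d := fun i => by
    rw [mem_carrier, map_add, add_sub_add_left_eq_sub, hexNorm_sub_hexDir_lt_one_iff hd]
  constructor
  · intro h u hu huv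
    have hadj := adj_of_mem_carrier_of_le hu (by rwa [add_sub_cancel_left])
    obtain ⟨i, rfl⟩ := (adj_iff.mp hadj.symm).resolve_left huv
    simpa [link] using h i ((key i).mp hu).1 ((key i).mp hu).2
  · intro h i h1 h2
    simpa [link] using h _ ((key i).mpr ⟨h1, h2⟩) (by simp [hexDir_ne_zero])

/-- `L i` is to be thought of as a combinatorial version of `{z | (g z).1 < i / N}`, for `g` an
equivariant homeomorphism. -/
structure IsLevelFamily (n N : ℕ) (L : ℤ → Set Vertex) : Prop where
  isLeftHalf : ∀ i, IsLeftHalf n (L i)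
  mem_add_smul : ∀ i (v w : Vertex), v + n • w ∈ L (i + w.1 * N) ↔ v ∈ L i
  nested : ∀ i, ∀ v ∈ L i, ∀ w, Adj v w → w ∈ L (i + 1)

/-- `i / N` is a lower bound for `(g z).1` when `carrier z` is disjoint from `L i`, and
`(i + 1) / N` is an upper bound when `carrier z` is contained in `L i`. -/
def AdaptedAt (N : ℕ) (L : ℤ → Set Vertex) (g : Plane → Plane) (i : ℤ) (z : Plane) : Prop :=
  (carrier z ⊆ L i → N * (g z).1 < i + 1) ∧ (Disjoint (carrier z) (L i) → i < N * (g z).1)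

/-- The first coordinate of `g` is controlled, up to `1 / N`, by the levels `L`. -/
def Adapted (N : ℕ) (L : ℤ → Set Vertex) (g : Plane → Plane) : Prop :=
  ∀ i z, AdaptedAt N L g i z

/-- The family of levels obtained from `L` by adding the vertex `v` to `L i₀`, and its translates
under `n ℤ²` to the corresponding levels. -/
def addOrbit (n N : ℕ) (L : ℤ → Set Vertex) (i₀ : ℤ) (v : Vertex) (i : ℤ) : Set Vertex :=
  L i ∪ {u | ∃ w : Vertex, i = i₀ + w.1 * N ∧ u = v + n • w}

/-- `z'` is obtained from `z` by a displacement within the star of some vertex of `v + n ℤ²`. -/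
def SameStar (n : ℕ) (v : Vertex) (z z' : Plane) : Prop :=
  z' = z ∨ ∃ w : Vertex, v + n • w ∈ carrier z ∧ v + n • w ∈ carrier z'

section

variable {n N : ℕ} {L : ℤ → Set Vertex}

theorem IsLevelFamily.monotone (h : IsLevelFamily n N L) : Monotone L :=
  monotone_int_of_le_succ fun i v hv => h.nested i v hv v (Adj.refl v)

theorem AdaptedAt.add (hL : ∀ i (v w : Vertex), v + n • w ∈ L (i + w.1 * N) ↔ v ∈ L i)
    {g : C(Plane, Plane)} (hg : IsEquivariantHomeo n g) {i : ℤ} {z : Plane}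
    (h : AdaptedAt N L g i z) (w : Vertex) :
    AdaptedAt N L g (i + w.1 * N) (z + toPlane (n • w)) := by
  have hcar : ∀ u ∈ carrier z, u + n • w ∈ carrier (z + toPlane (n • w)) := fun u hu =>
    (add_mem_carrier_add_iff u _ z).mpr hu
  rw [AdaptedAt, hg.map_add_toPlane, Prod.fst_add, toPlane_fst, mul_add]
  push_cast
  refine ⟨fun hsub => ?_, fun hdis => ?_⟩
  · have := h.1 fun u hu => (hL i u w).mp (hsub (hcar u hu))
    linarith
  · have := h.2 (Set.disjoint_left.mpr fun u hu huL =>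
      Set.disjoint_left.mp hdis (hcar u hu) ((hL i u w).mpr huL))
    linarith

theorem eq_zero_of_adj_add_smul (hn : 2 ≤ n) {v w : Vertex} (h : Adj (v + n • w) v) : w = 0 := by
  unfold Adj at h
  simp only [Prod.fst_add, Prod.snd_add, Prod.smul_fst, Prod.smul_snd] at h
  simp only [nsmul_eq_mul] at h
  have key : ∀ a : ℤ, n * a ≤ 1 → -1 ≤ n * a → a = 0 := fun a h1 h2 => by
    zify at hn
    by_contra ha
    rcases lt_or_gt_of_ne ha with ha | ha <;> nlinarith only [h1, h2, hn, ha]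
  exact Prod.ext (key _ (by omega) (by omega)) (key _ (by omega) (by omega))

theorem add_smul_mem_addOrbit_iff
    (hL : ∀ i (v w : Vertex), v + n • w ∈ L (i + w.1 * N) ↔ v ∈ L i) (i₀ : ℤ) (v : Vertex)
    (i : ℤ) (u w : Vertex) :
    u + n • w ∈ addOrbit n N L i₀ v (i + w.1 * N) ↔ u ∈ addOrbit n N L i₀ v i := by
  refine or_congr (hL i u w)
    ⟨fun ⟨t, h1, h2⟩ => ⟨t - w, ?_, ?_⟩, fun ⟨t, h1, h2⟩ => ⟨t + w, ?_, ?_⟩⟩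
  · rw [Prod.fst_sub, sub_mul]; linarith
  · rw [nsmul_sub, ← add_sub_assoc, ← h2, add_sub_cancel_right]
  · rw [h1, Prod.fst_add, add_mul, add_assoc]
  · rw [h2, nsmul_add, add_assoc]

theorem mem_of_mem_addOrbit_of_adj (hn : 2 ≤ n) {i₀ i : ℤ} {v u : Vertex}
    (h : u ∈ addOrbit n N L i₀ v i) (hadj : Adj u v) : u ∈ L i ∨ u = v ∧ i = i₀ := by
  refine h.imp_right ?_
  rintro ⟨w, rfl, rfl⟩
  simp [eq_zero_of_adj_add_smul hn hadj]

theorem self_mem_addOrbit (n N : ℕ) (L : ℤ → Set Vertex) (i₀ : ℤ) (v : Vertex) :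
    v ∈ addOrbit n N L i₀ v i₀ := Or.inr ⟨0, by simp⟩

section Push

variable {g : C(Plane, Plane)} {i₀ i : ℤ} {v : Vertex} {r : Plane → Plane} {z z' : Plane}

theorem upper_bound_of_carrier_subset_addOrbit (hn : 2 ≤ n) (hF : IsLevelFamily n N L)
    (hA : Adapted N L g) (hv : v ∉ L i₀) (hnb : ∀ u, Adj v u → u ∈ L (i₀ + 1))
    (hvz : v ∈ carrier z) (hvz' : v ∈ carrier z')
    (hW : z - toPlane v ∈ cone (link (L i₀) v) → N * (g z').1 < i₀ + 1)
    (hsub : carrier z ⊆ addOrbit n N L i₀ v i) : N * (g z').1 < i + 1 := by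
  have hi : i₀ ≤ i := by
    rcases mem_of_mem_addOrbit_of_adj hn (hsub hvz) (Adj.refl v) with h | h
    · exact not_lt.mp fun hlt => hv (hF.monotone hlt.le h)
    · exact h.2.ge
  rcases hi.eq_or_lt with rfl | hlt
  · refine hW ((mem_cone_link_iff (le_of_lt hvz)).mpr fun u hu huv => ?_)
    rw [add_sub_cancel] at hu
    exact (mem_of_mem_addOrbit_of_adj hn (hsub hu) (adj_of_mem_carrier hu hvz)).resolve_right
      fun h => huv h.1
  · have h := (hA (i₀ + 1) z').1 fun u hu => hnb u (adj_of_mem_carrier hvz' hu)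
    have hle : ((i₀ + 1 : ℤ) : ℝ) ≤ i := by exact_mod_cast hlt
    linarith

theorem lower_bound_of_disjoint_carrier_addOrbit (hF : IsLevelFamily n N L)
    (hA : Adapted N L g) (hv : v ∉ L i₀) (hv1 : v ∈ L (i₀ + 1))
    (hvz : v ∈ carrier z) (hvz' : v ∈ carrier z')
    (hdis : Disjoint (carrier z) (addOrbit n N L i₀ v i)) : i < N * (g z').1 := by
  have hvi := Set.disjoint_left.mp hdis hvz
  have hi : i < i₀ := by
    by_contra! hle
    rcases hle.eq_or_lt with rfl | hlt
    · exact hvi (self_mem_addOrbit ..)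
    · exact hvi (Or.inl (hF.monotone hlt hv1))
  have h := (hA (i₀ - 1) z').2 <| Set.disjoint_left.mpr fun u hu huL => hv <| by
    simpa using hF.nested _ u huL v (adj_of_mem_carrier hu hvz')
  have hle : (i : ℝ) ≤ ((i₀ - 1 : ℤ) : ℝ) := by exact_mod_cast Int.le_sub_one_of_lt hi
  linarith

theorem adapted_addOrbit (hn : 3 ≤ n) (hF : IsLevelFamily n N L) (hA : Adapted N L g)
    (hv : v ∉ L i₀) (hnb : ∀ u, Adj v u → u ∈ L (i₀ + 1)) (hr : ∀ z, 1 ≤ hexNorm z → r z = z)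
    (hi : Function.Injective r)
    (hW : ∀ d ∈ cone (link (L i₀) v), hexNorm d ≤ 1 → N * (g (toPlane v + r d)).1 < i₀ + 1)
    {f : C(Plane, Plane)} (hf : IsEquivariantHomeo n f) (hfg : ⇑f = g ∘ periodize n v r) :
    Adapted N (addOrbit n N L i₀ v) f := by
  have hstar : ∀ i z, v ∈ carrier z → AdaptedAt N (addOrbit n N L i₀ v) f i z := by
    intro i z hvz
    have hv0 : v + n • 0 ∈ carrier z := by simpa using hvz
    have hvz' : v ∈ carrier (periodize n v r z) := by
      simpa using mem_carrier_periodize hn hr hi hv0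
    rw [AdaptedAt, hfg, Function.comp_apply]
    refine ⟨upper_bound_of_carrier_subset_addOrbit (by omega) hF hA hv hnb hvz hvz' fun hd => ?_,
      lower_bound_of_disjoint_carrier_addOrbit hF hA hv (hnb v (Adj.refl v)) hvz hvz'⟩
    rw [periodize_of_mem_carrier hn hr hv0, nsmul_zero, add_zero]
    exact hW _ hd (le_of_lt hvz)
  intro i z
  by_cases! h : ∃ w : Vertex, v + n • w ∈ carrier z
  · obtain ⟨w, hw⟩ := h
    have := (hstar (i - w.1 * N) (z - toPlane (n • w)) (by
      rwa [← add_mem_carrier_add_iff v (n • w), sub_add_cancel])).add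
      (add_smul_mem_addOrbit_iff hF.mem_add_smul i₀ v) hf w
    rwa [sub_add_cancel, sub_add_cancel] at this
  · rw [AdaptedAt, hfg, Function.comp_apply, periodize_of_forall_notMem_carrier hr h]
    refine ⟨fun hsub => (hA i z).1 fun u hu => (hsub hu).resolve_right ?_,
      fun hdis => (hA i z).2 (hdis.mono_right Set.subset_union_left)⟩
    rintro ⟨w, -, rfl⟩
    exact h w hu

end Push

theorem exists_path_adapted_addOrbit (hn : 3 ≤ n) (hF : IsLevelFamily n N L) {g : C(Plane, Plane)}
    (hg : IsEquivariantHomeo n g) (hA : Adapted N L g) {i₀ : ℤ} {v : Vertex} (hv : v ∉ L i₀)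
    (hnb : ∀ u, Adj v u → u ∈ L (i₀ + 1)) (hlink : signChanges (link (L i₀) v) = 2) :
    ∃ g', JoinedIn {f | IsEquivariantHomeo n f ∧ ∀ z, ∃ z', f z = g z' ∧ SameStar n v z z'} g g' ∧
      Adapted N (addOrbit n N L i₀ v) g' := by
  obtain ⟨ρ, hc, h0, hb, hout, hW⟩ := exists_push_cone hlink
    (W := {e | N * (g (toPlane v + e)).1 < i₀ + 1}) (isOpen_lt (by fun_prop) continuous_const) (by
      intro d hd hd1
      refine (hA i₀ _).1 fun u hu => (mem_cone_link_iff hd1.le).mp hd u hu ?_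
      rintro rfl
      rw [mem_carrier, add_sub_cancel_left] at hu
      exact hu.ne hd1)
  let Φ : C(I × Plane, Plane) := ⟨fun p => g (periodize n v (ρ p.1) p.2),
    g.continuous.comp (continuous_periodize hn hc hout)⟩
  have hΦ : ∀ t, IsEquivariantHomeo n (Φ.curry t) := fun t =>
    hg.comp_periodize hn (hout t) (hb t) rfl
  refine ⟨Φ.curry 1, ⟨⟨⟨Φ.curry, by fun_prop⟩, ?_, rfl⟩, fun t => ⟨hΦ t, fun z => ?_⟩⟩,
    adapted_addOrbit hn hF hA hv hnb (hout 1) (hb 1).1 hW (hΦ 1) rfl⟩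
  · ext1 z
    change g (periodize n v (ρ 0) z) = g z
    rw [h0, periodize_id, id]
  · refine ⟨periodize n v (ρ t) z, rfl, ?_⟩
    by_cases! h : ∃ w : Vertex, v + n • w ∈ carrier z
    · exact Or.inr (h.imp fun w hw => ⟨hw, mem_carrier_periodize hn (hout t) (hb t).1 hw⟩)
    · exact Or.inl (periodize_of_forall_notMem_carrier (hout t) h)

end

/-! ### Growing a level family -/

/-- No horizontal line with ordinate in `B` separates `z` from `z'`. -/
def SameSide (B : Set ℤ) (z z' : Plane) : Prop :=
  ∀ y ∈ B, (z.2 < y ↔ z'.2 < y) ∧ (y < z.2 ↔ y < z'.2)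

/-- The equivariant homeomorphisms obtained from `U` by moving points without crossing the barrier
lines with ordinate in `B`, and whose first coordinate is close to `z ↦ z.1 / n`. -/
def controlled (n : ℕ) (U : C(Plane, Plane)) (B : Set ℤ) (C : ℝ) : Set C(Plane, Plane) :=
  {f | IsEquivariantHomeo n f ∧ (∀ z, ∃ z', f z = U z' ∧ SameSide B z' z) ∧
    ∀ z, |n * (f z).1 - z.1| ≤ C}

/-- Each level `L i` agrees with the half-plane `v.1 < d * i` up to an error `M`. -/
def NearStraight (d M : ℕ) (L : ℤ → Set Vertex) : Prop :=
  ∀ i (v : Vertex), (v.1 < d * i - M → v ∈ L i) ∧ (v ∈ L i → v.1 < d * i + M)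

/-- The conditions under which the level family `L` can be enlarged to `L'`, vertex by vertex,
without moving the vertices whose ordinate is in `B`. -/
structure IsGrowth (n N : ℕ) (B : Set ℤ) (L L' : ℤ → Set Vertex) : Prop where
  left : IsLevelFamily n N L
  right : IsLevelFamily n N L'
  le : L ≤ L'
  cross : ∀ i, ∀ v ∈ L' i, ∀ w, Adj v w → w ∈ L (i + 1)
  barrier : ∀ i, ∀ v ∈ L' i, v ∉ L i → v.2 ∉ B

section

variable {n N d M : ℕ} {B : Set ℤ} {L L' K : ℤ → Set Vertex}

theorem SameSide.refl (B : Set ℤ) (z : Plane) : SameSide B z z := fun _ _ => ⟨Iff.rfl, Iff.rfl⟩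

theorem SameSide.trans {z₁ z₂ z₃ : Plane} (h : SameSide B z₁ z₂) (h' : SameSide B z₂ z₃) :
    SameSide B z₁ z₃ :=
  fun y hy => ⟨(h y hy).1.trans (h' y hy).1, (h y hy).2.trans (h' y hy).2⟩

theorem sameSide_of_mem_carrier {w : Vertex} (hw : w.2 ∉ B) {z z' : Plane} (h : w ∈ carrier z)
    (h' : w ∈ carrier z') : SameSide B z z' := by
  intro y hy
  have h2 := abs_lt.mp (mem_carrier_iff_abs.mp h).2.1
  have h2' := abs_lt.mp (mem_carrier_iff_abs.mp h').2.1
  have hne : y ≠ w.2 := fun h => hw (h ▸ hy)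
  rcases lt_or_gt_of_ne hne with hlt | hlt
  · have : (y : ℝ) + 1 ≤ w.2 := by exact_mod_cast hlt
    constructor <;> constructor <;> intro <;> linarith
  · have : (w.2 : ℝ) + 1 ≤ y := by exact_mod_cast hlt
    constructor <;> constructor <;> intro <;> linarith

theorem SameStar.sameSide (hB : Function.Periodic (· ∈ B) (n : ℤ)) {v : Vertex} (hv : v.2 ∉ B)
    {z z' : Plane} (h : SameStar n v z z') : SameSide B z' z := by
  rcases h with rfl | ⟨w, h, h'⟩
  · exact SameSide.refl B _
  · refine sameSide_of_mem_carrier (fun hc => hv ?_) h' h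
    have := hB.int_mul w.2 v.2
    rw [Prod.snd_add, Prod.smul_snd, nsmul_eq_mul, mul_comm] at hc
    exact this ▸ hc

theorem SameStar.abs_fst_sub_le {v : Vertex} {z z' : Plane} (h : SameStar n v z z') :
    |z'.1 - z.1| ≤ 2 := by
  rcases h with rfl | ⟨w, h, h'⟩
  · simp
  · have h1 := abs_lt.mp (mem_carrier_iff_abs.mp h).1
    have h2 := abs_lt.mp (mem_carrier_iff_abs.mp h').1
    exact abs_le.mpr ⟨by linarith only [h1, h2], by linarith only [h1, h2]⟩

theorem Adapted.abs_sub_le {g : Plane → Plane} (hA : Adapted N L g) (hd : 0 < d)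
    (hL : NearStraight d M L) (z : Plane) : |N * d * (g z).1 - z.1| ≤ M + 2 * d + 1 := by
  have hd' : (0 : ℝ) < d := by exact_mod_cast hd
  rw [abs_le]
  constructor
  · have h1 := (le_div_iff₀ hd').mp (Int.floor_le ((z.1 - 1 - M) / d))
    have h2 := (div_lt_iff₀ hd').mp (Int.lt_floor_add_one ((z.1 - 1 - M) / d))
    set i := ⌊(z.1 - 1 - M) / d⌋
    have h3 := (hA i z).2 <| Set.disjoint_left.mpr fun u hu huL => by
      have h4 : (u.1 : ℝ) < d * i + M := by exact_mod_cast (hL i u).2 huL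
      linarith [(abs_lt.mp (mem_carrier_iff_abs.mp hu).1).2]
    linarith [mul_lt_mul_of_pos_right h3 hd']
  · have h1 := (div_le_iff₀ hd').mp (Int.le_ceil ((z.1 + 1 + M) / d))
    have h2 := Int.ceil_lt_add_one ((z.1 + 1 + M) / d)
    rw [← sub_lt_iff_lt_add, lt_div_iff₀ hd'] at h2
    set i := ⌈(z.1 + 1 + M) / d⌉
    have h3 := (hA i z).1 fun u hu => (hL i u).1 <| by
      have h5 : (u.1 : ℝ) < d * i - M := by
        linarith [(abs_lt.mp (mem_carrier_iff_abs.mp hu).1).1]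
      exact_mod_cast h5
    linarith [mul_lt_mul_of_pos_right h3 hd']

theorem exists_path_controlled_addOrbit (hn : 3 ≤ n) (hnd : n = N * d) (hF : IsLevelFamily n N L)
    (hL : NearStraight d M L) (hB : Function.Periodic (· ∈ B) (n : ℤ)) {U g : C(Plane, Plane)}
    (hg : g ∈ controlled n U B (M + 2 * d + 3)) (hA : Adapted N L g) {i₀ : ℤ} {v : Vertex}
    (hv : v ∉ L i₀) (hvB : v.2 ∉ B) (hnb : ∀ u, Adj v u → u ∈ L (i₀ + 1))
    (hlink : signChanges (link (L i₀) v) = 2) :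
    ∃ g', JoinedIn (controlled n U B (M + 2 * d + 3)) g g' ∧
      Adapted N (addOrbit n N L i₀ v) g' := by
  obtain ⟨g', hj, hA'⟩ := exists_path_adapted_addOrbit hn hF hg.1 hA hv hnb hlink
  refine ⟨g', hj.mono fun f ⟨hf, hfg⟩ => ⟨hf, fun z => ?_, fun z => ?_⟩, hA'⟩
  · obtain ⟨z', hz', hstar⟩ := hfg z
    obtain ⟨z'', hz'', hside⟩ := hg.2.1 z'
    exact ⟨z'', hz'.trans hz'', hside.trans (hstar.sameSide hB hvB)⟩
  · obtain ⟨z', hz', hstar⟩ := hfg z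
    have hd : 0 < d := Nat.pos_of_ne_zero fun h => by simp [h] at hnd; omega
    have h1 := hA.abs_sub_le hd hL z'
    have h2 := hstar.abs_fst_sub_le
    have h3 := abs_sub_le (N * d * (g z').1) z'.1 z.1
    rw [hz', hnd]
    push_cast
    linarith

theorem level_add_smul (hL : ∀ i (v w : Vertex), v + n • w ∈ L (i + w.1 * N) ↔ v ∈ L i)
    (i : ℤ) (w : Vertex) : L (i + w.1 * N) = n • w +ᵥ L i := by
  ext u
  rw [mem_vadd_iff, ← hL i _ w, sub_add_cancel]

theorem addOrbit_self (hN : 0 < N) (L : ℤ → Set Vertex) (i₀ : ℤ) (v : Vertex) :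
    addOrbit n N L i₀ v i₀ = L i₀ ∪ vOrbit n v := by
  refine congrArg (L i₀ ∪ ·) (Set.ext fun u => ⟨?_, fun ⟨h1, k, h2⟩ => ⟨(0, k), by simp, ?_⟩⟩)
  · rintro ⟨w, h, rfl⟩
    have hw : w.1 = 0 := by
      have : w.1 * (N : ℤ) = 0 := by omega
      simpa [hN.ne'] using this
    exact ⟨by simp [hw], w.2, by simp [mul_comm]⟩
  · ext <;> simp [h1, h2, mul_comm]

theorem addOrbit_of_not_modEq {i₀ i : ℤ} (h : ¬i ≡ i₀ [ZMOD N]) (v : Vertex) :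
    addOrbit n N L i₀ v i = L i := by
  refine Set.union_eq_left.mpr ?_
  rintro u ⟨w, rfl, -⟩
  exact absurd (Int.add_mul_emod_self_right ..) h

theorem eq_add_mul_of_modEq {i i₀ : ℤ} (h : i ≡ i₀ [ZMOD N]) : ∃ k, i = i₀ + k * N := by
  obtain ⟨k, hk⟩ := h.symm.dvd
  exact ⟨k, by rw [mul_comm k, ← hk]; ring⟩

theorem addOrbit_le (hF' : IsLevelFamily n N L') (hK : K ≤ L') {i₀ : ℤ} {v : Vertex}
    (hv : v ∈ L' i₀) : addOrbit n N K i₀ v ≤ L' := by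
  refine fun i => Set.union_subset (hK i) ?_
  rintro _ ⟨w, rfl, rfl⟩
  exact (hF'.mem_add_smul i₀ v w).mpr hv

theorem IsGrowth.isLevelFamily_addOrbit (hG : IsGrowth n N B L L') (hN : 0 < N)
    (hF : IsLevelFamily n N K) (hK : K ∈ Set.Icc L L') {i₀ : ℤ} {v : Vertex} (hv : v ∈ L' i₀)
    (h : IsLeftHalf n (K i₀ ∪ vOrbit n v)) : IsLevelFamily n N (addOrbit n N K i₀ v) where
  isLeftHalf i := by
    by_cases hi : i ≡ i₀ [ZMOD N]
    · obtain ⟨k, rfl⟩ := eq_add_mul_of_modEq hi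
      rw [level_add_smul (add_smul_mem_addOrbit_iff hF.mem_add_smul i₀ v) i₀ (k, 0),
        addOrbit_self hN]
      exact h.vadd _
    · rw [addOrbit_of_not_modEq hi]
      exact hF.isLeftHalf i
  mem_add_smul := add_smul_mem_addOrbit_iff hF.mem_add_smul i₀ v
  nested i u hu w hw := Or.inl <| hK.1 _ <| hG.cross i u (addOrbit_le hG.right hK.2 hv i hu) w hw

theorem NearStraight.of_mem_Icc (hL : NearStraight d M L) (hL' : NearStraight d M L')
    (hK : K ∈ Set.Icc L L') : NearStraight d M K :=
  fun i v => ⟨fun h => hK.1 i ((hL i v).1 h), fun h => (hL' i v).2 (hK.2 i h)⟩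

theorem IsGrowth.subset_vadd (hG : IsGrowth n N B L L') (hN : 0 < N) (i : ℤ) :
    L' i ⊆ ((n : ℤ), (0 : ℤ)) +ᵥ L i := by
  intro u hu
  have h := hG.left.monotone (show i + 1 ≤ i + 1 * N by omega) (hG.cross i u hu u (Adj.refl u))
  rw [level_add_smul hG.left.mem_add_smul i (1, 0)] at h
  simpa using h

theorem IsGrowth.exists_path_level (hG : IsGrowth n N B L L') (hn : 3 ≤ n) (hnd : n = N * d)
    (hL : NearStraight d M L) (hL' : NearStraight d M L')
    (hB : Function.Periodic (· ∈ B) (n : ℤ)) {U g : C(Plane, Plane)}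
    (hg : g ∈ controlled n U B (M + 2 * d + 3)) (hF : IsLevelFamily n N K)
    (hK : K ∈ Set.Icc L L') (hA : Adapted N K g) (m : ℤ) :
    ∃ K', IsLevelFamily n N K' ∧ K' ∈ Set.Icc L L' ∧ K' m = L' m ∧
      (∀ i, ¬i ≡ m [ZMOD N] → K' i = K i) ∧
      ∃ g', JoinedIn (controlled n U B (M + 2 * d + 3)) g g' ∧ Adapted N K' g' := by
  have hN : 0 < N := Nat.pos_of_ne_zero fun h => by simp [h] at hnd; omega
  refine (hF.isLeftHalf m).shelling_induction (by omega) (hG.right.isLeftHalf m) (hK.2 m)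
    (motive := fun A => ∃ K', IsLevelFamily n N K' ∧ K' ∈ Set.Icc L L' ∧ K' m = A ∧
      (∀ i, ¬i ≡ m [ZMOD N] → K' i = K i) ∧
      ∃ g', JoinedIn (controlled n U B (M + 2 * d + 3)) g g' ∧ Adapted N K' g')
    ⟨K, hF, hK, rfl, fun _ _ => rfl, g, JoinedIn.refl hg, hA⟩ ?_
  rintro _ v hAl hAv - hsub hv ⟨K', hF', hK', rfl, hoff, g₁, hj₁, hA₁⟩
  have hvL' : v ∈ L' m := hsub (Or.inr (mem_vOrbit_self n v))
  have hlink := hAl.signChanges_link (by omega) hAv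
    (hsub.trans ((hG.subset_vadd hN m).trans (Set.vadd_set_mono (hK'.1 m)))) hv
  obtain ⟨g₂, hj₂, hA₂⟩ := exists_path_controlled_addOrbit hn hnd hF' (hL.of_mem_Icc hL' hK') hB
    hj₁.target_mem hA₁ hv (hG.barrier m v hvL' fun h => hv (hK'.1 m h))
    (fun u hu => hK'.1 _ (hG.cross m v hvL' u hu)) hlink
  exact ⟨addOrbit n N K' m v, hG.isLevelFamily_addOrbit hN hF' hK' hvL' hAv,
    ⟨fun i => (hK'.1 i).trans Set.subset_union_left, addOrbit_le hG.right hK'.2 hvL'⟩,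
    addOrbit_self hN K' m v, fun i hi => (addOrbit_of_not_modEq hi v).trans (hoff i hi),
    g₂, hj₁.trans hj₂, hA₂⟩

theorem IsGrowth.exists_path (hG : IsGrowth n N B L L') (hn : 3 ≤ n) (hnd : n = N * d)
    (hL : NearStraight d M L) (hL' : NearStraight d M L')
    (hB : Function.Periodic (· ∈ B) (n : ℤ)) {U g : C(Plane, Plane)}
    (hg : g ∈ controlled n U B (M + 2 * d + 3)) (hA : Adapted N L g) :
    ∃ g', JoinedIn (controlled n U B (M + 2 * d + 3)) g g' ∧ Adapted N L' g' := by
  have hN : 0 < N := Nat.pos_of_ne_zero fun h => by simp [h] at hnd; omega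
  have key : ∀ m : ℕ, ∃ K, IsLevelFamily n N K ∧ K ∈ Set.Icc L L' ∧
      (∀ i : ℤ, i % N < m → K i = L' i) ∧
      ∃ g', JoinedIn (controlled n U B (M + 2 * d + 3)) g g' ∧ Adapted N K g' := by
    intro m
    induction m with
    | zero =>
      exact ⟨L, hG.left, ⟨le_rfl, hG.le⟩,
        fun i hi => absurd hi (Int.emod_nonneg i (by omega)).not_gt, g, JoinedIn.refl hg, hA⟩
    | succ m ih =>
      obtain ⟨K, hF, hK, hKm, g₁, hj₁, hA₁⟩ := ih
      obtain ⟨K', hF', hK', hm, hoff, g₂, hj₂, hA₂⟩ :=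
        hG.exists_path_level hn hnd hL hL' hB hj₁.target_mem hF hK hA₁ m
      refine ⟨K', hF', hK', fun i hi => ?_, g₂, hj₁.trans hj₂, hA₂⟩
      by_cases him : i ≡ m [ZMOD N]
      · obtain ⟨k, rfl⟩ := eq_add_mul_of_modEq him
        rw [level_add_smul hF'.mem_add_smul m (k, 0), hm,
          level_add_smul hG.right.mem_add_smul m (k, 0)]
      · rw [hoff i him]
        refine hKm i (lt_of_le_of_ne (by push_cast at hi; omega) fun h => him ?_)
        have : (m : ℤ) % N = m := by rw [← h, Int.emod_emod]
        exact h.trans this.symm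
  obtain ⟨K, -, -, hKN, g', hj, hA'⟩ := key N
  have : K = L' := funext fun i => hKN i (Int.emod_lt_of_pos i (by omega))
  exact ⟨g', hj, this ▸ hA'⟩

end

/-! ### Straightening a level family row by row -/

/-- The half-plane `v.1 < d * i` with the row of ordinate `y` moved by `s y`. -/
def raggedHalf (d : ℕ) (s : ℤ → ℤ) (i : ℤ) : Set Vertex := {v | v.1 < d * i + s v.2}

/-- The level family obtained from `L` by adding ragged half-planes and filling the holes. -/
def thicken (d : ℕ) (L : ℤ → Set Vertex) (s : ℤ → ℤ) (i : ℤ) : Set Vertex :=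
  fill (L i ∪ raggedHalf d s i)

/-- The displacement of the row of ordinate `y` at time `j`: it moves at unit speed from `-M` to
`M`, a delay `D y` after the undelayed rows. -/
def profile (M : ℕ) (D : ℤ → ℤ) (j y : ℤ) : ℤ := max (-M) (min M (j - D y))

/-- Delays whose variation between consecutive rows is small enough for the corresponding
thickenings of a level family to be nested. -/
structure IsDelay (n d : ℕ) (D : ℤ → ℤ) : Prop where
  nonneg : ∀ y, 0 ≤ D y
  periodic : Function.Periodic D n
  add_two_le : ∀ y, ∀ y' ∈ Set.Icc (y - 1) (y + 1), D y + 2 ≤ D y' + d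

section

variable {n N d M : ℕ} {L : ℤ → Set Vertex} {s s' D : ℤ → ℤ} {B : Set ℤ}

theorem noBoundedComponent_raggedHalf (d : ℕ) (s : ℤ → ℤ) (i : ℤ) :
    NoBoundedComponent (-1) (raggedHalf d s i) :=
  noBoundedComponent_of_ray (by decide) fun v (hv : v.1 < d * i + s v.2) =>
    show v.1 + -1 < d * i + s v.2 by omega

theorem fill_raggedHalf (d : ℕ) (s : ℤ → ℤ) (i : ℤ) : fill (raggedHalf d s i) = raggedHalf d s i :=
  fill_eq_self <| noBoundedComponent_of_ray (by decide) fun v (hv : ¬v.1 < d * i + s v.2) =>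
    show ¬v.1 + 1 < d * i + s v.2 by omega

theorem raggedHalf_mono (d : ℕ) (h : s ≤ s') (i : ℤ) : raggedHalf d s i ⊆ raggedHalf d s' i :=
  fun v (hv : v.1 < d * i + s v.2) => hv.trans_le (add_le_add_right (h v.2) _)

theorem raggedHalf_subset_thicken (d : ℕ) (L : ℤ → Set Vertex) (s : ℤ → ℤ) (i : ℤ) :
    raggedHalf d s i ⊆ thicken d L s i :=
  Set.subset_union_right.trans (subset_fill _)

theorem raggedHalf_add_smul (hnd : n = N * d) (hs : Function.Periodic s n) (i : ℤ) (w : Vertex) :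
    raggedHalf d s (i + w.1 * N) = n • w +ᵥ raggedHalf d s i := by
  ext v
  have h : s (v.2 + -w.2 * n) = s v.2 := by exact_mod_cast hs.int_mul (-w.2) v.2
  have h2 : v.2 - (n • w).2 = v.2 + -w.2 * n := by simp; ring
  have h1 : (n • w).1 = d * (w.1 * N) := by simp [hnd]; ring
  rw [mem_vadd_iff]
  change v.1 < d * (i + w.1 * N) + s v.2 ↔ v.1 - (n • w).1 < d * i + s (v.2 - (n • w).2)
  rw [h2, h, h1, mul_add]
  constructor <;> intro <;> linarith

theorem thicken_mono (d : ℕ) (L : ℤ → Set Vertex) (h : s ≤ s') : thicken d L s ≤ thicken d L s' :=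
  fun i => fill_mono (Set.union_subset_union_right _ (raggedHalf_mono d h i))

theorem NearStraight.thicken_subset (hL : NearStraight d M L) (hs : ∀ y, s y ≤ M) (i : ℤ) :
    thicken d L s i ⊆ raggedHalf d (fun _ => M) i := by
  have h : L i ∪ raggedHalf d s i ⊆ raggedHalf d (fun _ => M) i :=
    Set.union_subset (fun v hv => (hL i v).2 hv) (raggedHalf_mono d hs i)
  exact (fill_mono h).trans (fill_raggedHalf d _ i).subset

theorem NearStraight.thicken (hL : NearStraight d M L) (hs : ∀ y, s y ≤ M) :
    NearStraight d M (thicken d L s) := fun i v =>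
  ⟨fun h => subset_fill _ (Or.inl ((hL i v).1 h)), fun h => hL.thicken_subset hs i h⟩

theorem IsLevelFamily.mem_thicken_of_adj (hF : IsLevelFamily n N L)
    (h : ∀ y, ∀ y' ∈ Set.Icc (y - 1) (y + 1), s' y + 1 ≤ s y' + d) (i : ℤ) :
    ∀ v ∈ thicken d L s' i, ∀ w, Adj v w → w ∈ thicken d L s (i + 1) := by
  refine fill_neighbours_subset ?_
  rintro v (hv | hv) w hw
  · exact Or.inl (hF.nested i v hv w hw)
  · have h1 : v.1 < d * i + s' v.2 := hv
    have h2 : v.1 - 1 ≤ w.1 ∧ w.1 ≤ v.1 + 1 ∧ v.2 - 1 ≤ w.2 ∧ w.2 ≤ v.2 + 1 := by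
      unfold Adj at hw; omega
    have h3 := h v.2 w.2 ⟨h2.2.2.1, h2.2.2.2⟩
    refine Or.inr (show w.1 < d * (i + 1) + s w.2 from ?_)
    linarith

theorem IsLevelFamily.thicken (hF : IsLevelFamily n N L) (hnd : n = N * d)
    (hL : NearStraight d M L) (hsM : ∀ y, s y ≤ M) (hs : Function.Periodic s n)
    (h : ∀ y, ∀ y' ∈ Set.Icc (y - 1) (y + 1), s y + 1 ≤ s y' + d) :
    IsLevelFamily n N (thicken d L s) where
  isLeftHalf i :=
    { left_unbounded :=
        ((hF.isLeftHalf i).left_unbounded.union (noBoundedComponent_raggedHalf d s i)).fill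
      right_unbounded := noBoundedComponent_compl_fill _
      vPeriodic := ((hF.isLeftHalf i).vPeriodic.union fun v =>
        show v.1 < d * i + s (v.2 + n) ↔ v.1 < d * i + s v.2 by rw [hs]).fill
      exists_left := ⟨d * i - M, fun v => ((hL.thicken hsM) i v).1⟩
      exists_right := ⟨d * i + M, fun v => ((hL.thicken hsM) i v).2⟩ }
  mem_add_smul i v w := by
    have : TorusIsotopy.thicken d L s (i + w.1 * N) = n • w +ᵥ TorusIsotopy.thicken d L s i := by
      simp only [TorusIsotopy.thicken]
      rw [level_add_smul hF.mem_add_smul, raggedHalf_add_smul hnd hs, ← Set.vadd_set_union,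
        fill_vadd]
    rw [this, mem_vadd_iff, add_sub_cancel_right]
  nested := hF.mem_thicken_of_adj h

theorem profile_le (M : ℕ) (D : ℤ → ℤ) (j y : ℤ) : profile M D j y ≤ M := by
  unfold profile; omega

theorem profile_mono (M : ℕ) (D : ℤ → ℤ) : Monotone (profile M D) := by
  intro j j' (h : j ≤ j') y
  simp only [profile]; omega

theorem IsDelay.profile_add_one_le (hD : IsDelay n d D) (j y : ℤ) :
    ∀ y' ∈ Set.Icc (y - 1) (y + 1), profile M D (j + 1) y + 1 ≤ profile M D j y' + d := by
  rintro y' ⟨h1, h2⟩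
  have := hD.add_two_le y' y ⟨by omega, by omega⟩
  have := hD.add_two_le y y ⟨by omega, by omega⟩
  unfold profile; omega

theorem IsDelay.isLevelFamily_thicken (hD : IsDelay n d D) (hF : IsLevelFamily n N L)
    (hnd : n = N * d) (hL : NearStraight d M L) (j : ℤ) :
    IsLevelFamily n N (thicken d L (profile M D j)) := by
  refine hF.thicken hnd hL (profile_le M D j) (fun y => ?_) fun y y' hy => ?_
  · unfold profile
    rw [hD.periodic]
  · have h1 := profile_mono M D (le_add_of_nonneg_right zero_le_one : j ≤ j + 1) y
    have h2 := hD.profile_add_one_le (M := M) j y y' hy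
    linarith

theorem IsDelay.exists_path_thicken (hD : IsDelay n d D) (hF : IsLevelFamily n N L) (hn : 3 ≤ n)
    (hnd : n = N * d) (hL : NearStraight d M L) (hB : Function.Periodic (· ∈ B) (n : ℤ))
    {U g : C(Plane, Plane)} (hg : g ∈ controlled n U B (M + 2 * d + 3)) {j : ℤ}
    (hA : Adapted N (thicken d L (profile M D j)) g) (t : ℕ)
    (hbar : ∀ i, ∀ v ∈ thicken d L (profile M D (j + t)) i,
      v ∉ thicken d L (profile M D j) i → v.2 ∉ B) :
    ∃ g', JoinedIn (controlled n U B (M + 2 * d + 3)) g g' ∧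
      Adapted N (thicken d L (profile M D (j + t))) g' := by
  have hmono : Monotone fun j => thicken d L (profile M D j) :=
    fun _ _ h => thicken_mono d L (profile_mono M D h)
  induction t with
  | zero => exact ⟨g, JoinedIn.refl hg, by simpa using hA⟩
  | succ t ih =>
    rw [Nat.cast_succ, ← add_assoc] at hbar ⊢
    have hle : thicken d L (profile M D (j + t)) ≤ thicken d L (profile M D (j + t + 1)) :=
      hmono (by omega)
    obtain ⟨g₁, hj₁, hA₁⟩ := ih fun i v hv => hbar i v (hle i hv)
    have hG : IsGrowth n N B (thicken d L (profile M D (j + t)))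
        (thicken d L (profile M D (j + t + 1))) :=
      ⟨hD.isLevelFamily_thicken hF hnd hL _, hD.isLevelFamily_thicken hF hnd hL _, hle,
        hF.mem_thicken_of_adj (hD.profile_add_one_le _),
        fun i v hv hv' => hbar i v hv fun h => hv' (hmono (by omega : j ≤ j + t) i h)⟩
    obtain ⟨g₂, hj₂, hA₂⟩ := hG.exists_path hn hnd (hL.thicken (profile_le M D _))
      (hL.thicken (profile_le M D _)) hB hj₁.target_mem hA₁
    exact ⟨g₂, hj₁.trans hj₂, hA₂⟩

theorem IsEquivariantHomeo.mem_controlled {g : C(Plane, Plane)} (hg : IsEquivariantHomeo n g)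
    (hn : 3 ≤ n) (hnd : n = N * d) (hL : NearStraight d M L) (hA : Adapted N L g) (B : Set ℤ) :
    g ∈ controlled n g B (M + 2 * d + 3) := by
  refine ⟨hg, fun z => ⟨z, rfl, SameSide.refl B z⟩, fun z => ?_⟩
  have hd : 0 < d := Nat.pos_of_ne_zero fun h => by simp [h] at hnd; omega
  have h := hA.abs_sub_le hd hL z
  rw [hnd]
  push_cast
  linarith

theorem NearStraight.thicken_profile_neg (hL : NearStraight d M L) (hF : IsLevelFamily n N L)
    (hD : ∀ y, 0 ≤ D y) : TorusIsotopy.thicken d L (profile M D (-M)) = L := by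
  funext i
  have : L i ∪ raggedHalf d (profile M D (-M)) i = L i := by
    refine Set.union_eq_left.mpr fun v (hv : v.1 < d * i + profile M D (-M) v.2) => (hL i v).1 ?_
    have := hD v.2
    unfold profile at hv; omega
  rw [TorusIsotopy.thicken, this, fill_eq_self (hF.isLeftHalf i).right_unbounded]

theorem NearStraight.thicken_profile_add (hL : NearStraight d M L) {R : ℕ} (hR : ∀ y, D y ≤ R) :
    TorusIsotopy.thicken d L (profile M D (M + R)) = raggedHalf d (fun _ => M) := by
  funext i
  refine (hL.thicken_subset (profile_le M D _) i).antisymm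
    ((raggedHalf_mono d (fun y => ?_) i).trans (raggedHalf_subset_thicken d L _ i))
  have := hR y
  simp only [profile]; omega

theorem NearStraight.delay_ne_zero_of_mem_thicken (hL : NearStraight d M L) {j i : ℤ} {v : Vertex}
    (hv : v ∈ TorusIsotopy.thicken d L (profile M D j) i)
    (hv' : v ∉ TorusIsotopy.thicken d L (profile M D M) i) : D v.2 ≠ 0 := by
  refine fun h0 => hv' (raggedHalf_subset_thicken d L _ i ?_)
  have h1 : v.1 < d * i + M := hL.thicken_subset (profile_le M D _) i hv
  refine show v.1 < d * i + profile M D M v.2 from ?_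
  unfold profile; omega

/-- The undelayed rows are settled at time `M`; from then on they act as a barrier themselves. -/
theorem IsDelay.exists_paths_straight (hD : IsDelay n d D) (hF : IsLevelFamily n N L) (hn : 3 ≤ n)
    (hnd : n = N * d) (hL : NearStraight d M L) {R : ℕ} (hR : ∀ y, D y ≤ R)
    (hB : Function.Periodic (· ∈ B) (n : ℤ)) {U : C(Plane, Plane)} (hU : IsEquivariantHomeo n U)
    (hA : Adapted N L U)
    (hbar : ∀ i, ∀ v ∈ thicken d L (profile M D M) i, v ∉ L i → v.2 ∉ B) :
    ∃ g₁ g₂, JoinedIn (controlled n U B (M + 2 * d + 3)) U g₁ ∧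
      JoinedIn (controlled n g₁ (D ⁻¹' {0}) (M + 2 * d + 3)) g₁ g₂ ∧
      Adapted N (raggedHalf d fun _ => M) g₂ := by
  have hneg := hL.thicken_profile_neg hF hD.nonneg
  have hM : -(M : ℤ) + (2 * M : ℕ) = M := by omega
  obtain ⟨g₁, hj₁, hA₁⟩ := hD.exists_path_thicken hF hn hnd hL hB
    (hU.mem_controlled hn hnd hL hA B) (hneg.symm ▸ hA) (2 * M) (by rwa [hM, hneg])
  rw [hM] at hA₁
  have hg₁ := hj₁.target_mem.1.mem_controlled hn hnd (hL.thicken (profile_le M D M)) hA₁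
    (D ⁻¹' {0})
  obtain ⟨g₂, hj₂, hA₂⟩ := hD.exists_path_thicken hF hn hnd hL
    (hD.periodic.comp (· = 0)) hg₁ hA₁ R fun i v hv => hL.delay_ne_zero_of_mem_thicken hv
  exact ⟨g₁, g₂, hj₁, hj₂, hL.thicken_profile_add hR ▸ hA₂⟩

end

section

variable {n : ℕ} {U : C(Plane, Plane)}

theorem IsEquivariantHomeo.exists_norm_smul_sub_le (hU : IsEquivariantHomeo n U) (hn : 0 < n) :
    ∃ b : ℝ, ∀ z, ‖(n : ℝ) • U z - z‖ ≤ b := by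
  have hn' : (0 : ℝ) < n := by exact_mod_cast hn
  have hcont : Continuous fun z => (n : ℝ) • U z - z := by fun_prop
  obtain ⟨b, hb⟩ := (isCompact_Icc (a := (0 : Plane)) (b := (n, n))).exists_bound_of_continuousOn
    hcont.continuousOn
  have hfract (x : ℝ) : 0 ≤ x + n * (-⌊x / n⌋ : ℤ) ∧ x + n * (-⌊x / n⌋ : ℤ) ≤ n := by
    have h1 := (le_div_iff₀' hn').mp (Int.floor_le (x / n))
    have h2 := (div_lt_iff₀' hn').mp (Int.lt_floor_add_one (x / n))
    push_cast
    constructor <;> linarith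
  refine ⟨b, fun z => ?_⟩
  set w : Vertex := (-⌊z.1 / n⌋, -⌊z.2 / n⌋)
  have hw : z + toPlane (n • w) = (z.1 + n * w.1, z.2 + n * w.2) := by
    ext <;> simp
  have h := hb (z + toPlane (n • w)) <| hw ▸
    ⟨⟨(hfract z.1).1, (hfract z.2).1⟩, ⟨(hfract z.1).2, (hfract z.2).2⟩⟩
  have hper : (n : ℝ) • U (z + toPlane (n • w)) - (z + toPlane (n • w)) = (n : ℝ) • U z - z := by
    rw [hU.map_add_toPlane, smul_add, map_nsmul, Nat.cast_smul_eq_nsmul ℝ n (toPlane w)]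
    abel
  rwa [hper] at h

theorem IsEquivariantHomeo.isHomeomorph (hU : IsEquivariantHomeo n U) (hn : 0 < n) :
    IsHomeomorph U := by
  have hn' : (0 : ℝ) < n := by exact_mod_cast hn
  obtain ⟨b, hb⟩ := hU.exists_norm_smul_sub_le hn
  have hproper : IsProperMap U := by
    rw [isProperMap_iff_tendsto_cocompact, ← Metric.cobounded_eq_cocompact,
      ← tendsto_norm_atTop_iff_cobounded]
    refine ⟨U.continuous, tendsto_atTop_mono (fun z => ?_) <|
      (tendsto_atTop_add_const_right _ (-b) tendsto_norm_cobounded_atTop).atTop_div_const hn'⟩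
    rw [div_le_iff₀' hn']
    have h := (norm_sub_norm_le z ((n : ℝ) • U z)).trans_eq (norm_sub_rev _ _)
    rw [norm_smul, Real.norm_natCast] at h
    linarith [hb z]
  exact isHomeomorph_iff_continuous_isClosedMap_bijective.mpr
    ⟨U.continuous, hproper.isClosedMap, hU.bijective⟩

theorem isOpen_setOf_carrier_inter_nonempty (Q : Set Vertex) :
    IsOpen {z | (carrier z ∩ Q).Nonempty} := by
  have : {z | (carrier z ∩ Q).Nonempty} = ⋃ u ∈ Q, {z | hexNorm (z - toPlane u) < 1} := by
    ext z
    simp [Set.Nonempty, mem_carrier, and_comm]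
  rw [this]
  exact isOpen_biUnion fun u _ => isOpen_lt (by fun_prop) continuous_const

theorem carrier_subset_of_isPreconnected {Γ : Set Plane} (hΓ : IsPreconnected Γ) {Q : Set Vertex}
    (h : ∀ z ∈ Γ, (carrier z ∩ Q).Nonempty → carrier z ⊆ Q) {z₀ : Plane} (hz₀ : z₀ ∈ Γ)
    (hQ : (carrier z₀ ∩ Q).Nonempty) : ∀ z ∈ Γ, carrier z ⊆ Q := by
  intro z hz
  by_contra hc
  obtain ⟨p, hp, hpQ, c, hcp, hcQ⟩ := hΓ _ _ (isOpen_setOf_carrier_inter_nonempty Q)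
    (isOpen_setOf_carrier_inter_nonempty Qᶜ) (fun p _ => by
      obtain ⟨a, ha⟩ := carrier_nonempty p
      by_cases haQ : a ∈ Q
      · exact Or.inl ⟨a, ha, haQ⟩
      · exact Or.inr ⟨a, ha, haQ⟩)
    ⟨z₀, hz₀, hQ⟩ ⟨z, hz, Set.not_subset.mp hc⟩
  exact hcQ (h p hp hpQ hcp)

/-- Along the preimage under `U` of a horizontal ray, a set of vertices which is a union of
carriers cannot be left; so it is missed altogether if it is bounded in the direction of the ray. -/
theorem IsEquivariantHomeo.disjoint_carrier_of_ray (hU : IsEquivariantHomeo n U) (hn : 0 < n)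
    {ε : ℤ} (hε : ε ≠ 0) {Q : Set Vertex} (hQ : BoundedToward ε Q) {z₀ : Plane}
    (h : ∀ z, (U z).2 = (U z₀).2 → ε * (U z₀).1 ≤ ε * (U z).1 →
      (carrier z ∩ Q).Nonempty → carrier z ⊆ Q) : Disjoint (carrier z₀) Q := by
  by_contra hd
  obtain ⟨b, hb⟩ := hU.exists_norm_smul_sub_le hn
  obtain ⟨c, hc⟩ := hQ
  set ray : Set Plane := {p | p.2 = (U z₀).2 ∧ ε * (U z₀).1 ≤ ε * p.1}
  have hray : Convex ℝ ray := by
    rintro p ⟨hp, hp'⟩ q ⟨hq, hq'⟩ s t hs ht hst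
    refine ⟨?_, ?_⟩
    · simp only [Prod.snd_add, Prod.smul_snd, smul_eq_mul, hp, hq, ← add_mul, hst, one_mul]
    · simp only [Prod.fst_add, Prod.smul_fst, smul_eq_mul]
      have h1 := mul_le_mul_of_nonneg_left hp' hs
      have h2 := mul_le_mul_of_nonneg_left hq' ht
      linear_combination h1 + h2 - ε * (U z₀).1 * hst
  have hpre : IsPreconnected (U ⁻¹' ray) := hray.isPreconnected.preimage_of_isOpenMap
    hU.bijective.injective (hU.isHomeomorph hn).isOpenMap
    (by simp [hU.bijective.surjective.range_eq])
  have hall := carrier_subset_of_isPreconnected hpre (fun z hz => h z hz.1 hz.2)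
    (z₀ := z₀) ⟨rfl, le_rfl⟩ (Set.not_disjoint_iff_nonempty_inter.mp hd)
  have hε' : (ε : ℝ) ≠ 0 := by exact_mod_cast hε
  have hn' : (0 : ℝ) < n := by exact_mod_cast hn
  set t := max (ε * (U z₀).1) ((c + |(ε : ℝ)| * (b + 1)) / n)
  obtain ⟨z, hz⟩ := hU.bijective.surjective (t / ε, (U z₀).2)
  have ht : ε * (U z).1 = t := by rw [hz, mul_div_cancel₀ _ hε']
  obtain ⟨w, hw⟩ := carrier_nonempty z
  have hwc : (ε : ℝ) * w.1 ≤ c := by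
    exact_mod_cast hc w (hall z ⟨by rw [hz], ht ▸ le_max_left _ _⟩ hw)
  have hnt : c + |(ε : ℝ)| * (b + 1) ≤ n * t := by
    rw [← div_le_iff₀' hn']
    exact le_max_right _ _
  have hzw : |n * (U z).1 - w.1| < b + 1 := by
    have h1 := (norm_fst_le _).trans (hb z)
    have h2 := (mem_carrier_iff_abs.mp hw).1
    have h3 := abs_add_le (n * (U z).1 - z.1) (z.1 - w.1)
    rw [sub_add_sub_cancel] at h3
    exact h3.trans_lt (add_lt_add_of_le_of_lt h1 h2)
  have hlt := mul_lt_mul_of_pos_left hzw (abs_pos.mpr hε')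
  rw [← abs_mul] at hlt
  have := le_abs_self (ε * (n * (U z).1 - w.1))
  rw [← ht] at hnt
  linarith

end

/-! ### The level family of an equivariant homeomorphism -/

/-- The vertices whose star meets `{z | i + 1 / 2 ≤ N * (U z).1}`. -/
def rightVertices (N : ℕ) (U : Plane → Plane) (i : ℤ) : Set Vertex :=
  {v | ∃ z, v ∈ carrier z ∧ i + 1 / 2 ≤ N * (U z).1}

/-- A combinatorial version of `{z | (U z).1 < i / N}`. -/
def initialLevel (N : ℕ) (U : Plane → Plane) (i : ℤ) : Set Vertex :=
  core (-1) (rightVertices N U i)ᶜ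

section

variable {n N d M B : ℕ} {U : C(Plane, Plane)}

theorem self_mem_carrier (v : Vertex) : v ∈ carrier (toPlane v) := by
  rw [mem_carrier, sub_self, hexNorm_zero]
  exact one_pos

theorem hexNorm_sub_lt_two {z z' : Plane} {v : Vertex} (h : v ∈ carrier z) (h' : v ∈ carrier z') :
    hexNorm (z - z') < 2 := by
  have h1 := hexNorm_add_le (z - toPlane v) (-(z' - toPlane v))
  rw [hexNorm_neg, ← sub_eq_add_neg, sub_sub_sub_cancel_right] at h1
  linarith [mem_carrier.mp h, mem_carrier.mp h']

theorem Adj.hexNorm_sub_le_one {v w : Vertex} (h : Adj v w) :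
    hexNorm (toPlane v - toPlane w) ≤ 1 := by
  rw [hexNorm_le, ← map_sub, toPlane_fst, toPlane_snd]
  norm_cast
  simp only [Prod.fst_sub, Prod.snd_sub, abs_le]
  unfold Adj at h
  omega

theorem notMem_rightVertices_iff {f : Plane → Plane} {i : ℤ} {v : Vertex} :
    v ∉ rightVertices N f i ↔ ∀ z, v ∈ carrier z → N * (f z).1 < i + 1 / 2 := by
  simp only [rightVertices, Set.mem_ofPred_eq, not_exists, not_and, not_le]

theorem add_smul_mem_rightVertices_iff (hU : IsEquivariantHomeo n U) (N : ℕ) (i : ℤ)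
    (v w : Vertex) : v + n • w ∈ rightVertices N U (i + w.1 * N) ↔ v ∈ rightVertices N U i := by
  refine ((Equiv.addRight (toPlane (n • w))).exists_congr fun z => ?_).symm
  rw [Equiv.coe_addRight, add_mem_carrier_add_iff, hU.map_add_toPlane]
  refine and_congr_right fun _ => ?_
  push_cast [Prod.fst_add, toPlane_fst]
  constructor <;> intro <;> linarith

theorem initialLevel_add_smul (hU : IsEquivariantHomeo n U) (N : ℕ) (i : ℤ) (w : Vertex) :
    initialLevel N U (i + w.1 * N) = n • w +ᵥ initialLevel N U i := by
  rw [initialLevel, initialLevel, ← core_vadd]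
  congr 1
  ext v
  rw [mem_vadd_iff, Set.mem_compl_iff, Set.mem_compl_iff,
    ← add_smul_mem_rightVertices_iff hU N i _ w, sub_add_cancel]

/-- A bounded family of components of the complement of `initialLevel N U i ∪ S` does not meet
`{z | i + 1 / 2 ≤ N * (U z).1}`: it would contain a whole ray there. -/
theorem IsEquivariantHomeo.disjoint_carrier_of_closedIn (hU : IsEquivariantHomeo n U) (hn : 0 < n)
    {i : ℤ} {S Z : Set Vertex} (hZ : ClosedIn (initialLevel N U i ∪ S)ᶜ Z)
    (hb : BoundedToward 1 Z) {z₀ : Plane} (hz₀ : i + 1 / 2 ≤ N * (U z₀).1)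
    (hS : ∀ z, (U z).2 = (U z₀).2 → carrier z ∩ S ⊆ initialLevel N U i) :
    Disjoint (carrier z₀) Z := by
  refine hU.disjoint_carrier_of_ray hn one_ne_zero hb ?_
  rintro z hz₂ hz₁ ⟨u, hu, huZ⟩ p hp
  simp only [Int.cast_one, one_mul] at hz₁
  have hpL : p ∉ initialLevel N U i := fun h =>
    h.1 ⟨z, hp, hz₀.trans (mul_le_mul_of_nonneg_left hz₁ N.cast_nonneg)⟩
  refine hZ.2 u huZ p ?_ (adj_of_mem_carrier hu hp)
  rintro (h | h)
  · exact hpL h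
  · exact hpL (hS z hz₂ ⟨hp, h⟩)

theorem IsEquivariantHomeo.noBoundedComponent_compl_initialLevel (hU : IsEquivariantHomeo n U)
    (hn : 0 < n) (N : ℕ) (i : ℤ) : NoBoundedComponent 1 (initialLevel N U i)ᶜ := by
  intro Z hZ hb
  have hright : ∀ v ∈ Z, v ∉ rightVertices N U i := by
    rintro v hv ⟨z₀, hvz₀, hz₀⟩
    rw [← Set.union_empty (initialLevel N U i)] at hZ
    exact Set.disjoint_left.mp
      (hU.disjoint_carrier_of_closedIn hn hZ hb hz₀ fun _ _ _ h => absurd h.2 id) hvz₀ hv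
  refine eq_empty_of_closed_of_boundedToward one_ne_zero (fun z hz u hzu => ?_) hb
  exact hZ.2 z hz u (fun hu => hZ.1 hz (mem_core_of_adj hu (hright z hz) hzu.symm)) hzu

theorem nearStraight_initialLevel (hd : 0 < d) (hnd : n = N * d)
    (hb : ∀ z, |n * (U z).1 - z.1| ≤ d * B) : NearStraight d (d * (B + 1)) (initialLevel N U) := by
  have hd' : (0 : ℝ) < d := by exact_mod_cast hd
  have hn (z : Plane) : n * (U z).1 = d * (N * (U z).1) := by rw [hnd]; push_cast; ring
  intro i v
  constructor
  · have hsub : raggedHalf d (fun _ => -(d * (B + 1) : ℕ)) i ⊆ (rightVertices N U i)ᶜ := by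
      intro w (hw : w.1 < d * i + -(d * (B + 1) : ℕ))
      refine notMem_rightVertices_iff.mpr fun z hz => lt_of_mul_lt_mul_left ?_ hd'.le
      have h1 : (w.1 : ℝ) + 1 ≤ d * i + -(d * (B + 1)) := by exact_mod_cast hw
      have h2 := (abs_lt.mp (mem_carrier_iff_abs.mp hz).1).2
      have h3 := (abs_le.mp (hb z)).2
      rw [hn] at h3
      linarith
    intro hv
    rw [sub_eq_add_neg] at hv
    exact ⟨hsub hv, fun Z hZ hbZ hvZ => Set.disjoint_left.mp
      ((noBoundedComponent_raggedHalf d _ i).disjoint_of_boundedToward hsub hZ hbZ) hvZ hv⟩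
  · intro hv
    have h1 := mul_lt_mul_of_pos_left
      (notMem_rightVertices_iff.mp hv.1 _ (self_mem_carrier v)) hd'
    have h2 := (abs_le.mp (hb (toPlane v))).1
    rw [hn, toPlane_fst] at h2
    have h3 : (v.1 : ℝ) < d * i + d * (B + 1) := by linarith
    exact_mod_cast h3

theorem initialLevel_nested
    (hosc : ∀ z z', hexNorm (z - z') < 2 → |N * (U z).1 - N * (U z').1| < 1 / 2) (i : ℤ) :
    ∀ v ∈ initialLevel N U i, ∀ w, Adj v w → w ∈ initialLevel N U (i + 1) := by
  intro v hv w hvw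
  have hanti : (rightVertices N U i)ᶜ ⊆ (rightVertices N U (i + 1))ᶜ := by
    refine Set.compl_subset_compl.mpr fun u ⟨z, hu, hz⟩ => ⟨z, hu, ?_⟩
    push_cast at hz
    linarith
  have hw : w ∉ rightVertices N U (i + 1) := by
    refine notMem_rightVertices_iff.mpr fun z hz => ?_
    have h1 := hexNorm_add_le (z - toPlane w) (toPlane w - toPlane v)
    rw [sub_add_sub_cancel] at h1
    have h2 := (abs_lt.mp (hosc z (toPlane v)
      (by linarith [mem_carrier.mp hz, hvw.symm.hexNorm_sub_le_one]))).2
    have h3 := notMem_rightVertices_iff.mp hv.1 _ (self_mem_carrier v)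
    push_cast
    linarith
  refine ⟨hw, fun Z hZ hb hwZ => ?_⟩
  exact Set.disjoint_left.mp ((noBoundedComponent_core (-1) _).disjoint_of_boundedToward
    ((core_subset _ _).trans hanti) hZ hb) (hZ.2 w hwZ v (hanti hv.1) hvw.symm) hv

theorem IsEquivariantHomeo.adapted_initialLevel (hU : IsEquivariantHomeo n U) (hn : 0 < n)
    (hosc : ∀ z z', hexNorm (z - z') < 2 → |N * (U z).1 - N * (U z').1| < 1 / 2) :
    Adapted N (initialLevel N U) U := by
  refine fun i z => ⟨fun h => ?_, fun h => ?_⟩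
  · obtain ⟨u, hu⟩ := carrier_nonempty z
    have := notMem_rightVertices_iff.mp (h hu).1 z hu
    linarith
  · by_contra! hz
    have hleft : ∀ z', (U z').1 ≤ (U z).1 → carrier z' ⊆ (rightVertices N U i)ᶜ := by
      refine fun z' hz' u hu => notMem_rightVertices_iff.mpr fun z'' hu' => ?_
      have h1 := (abs_lt.mp (hosc z' z'' (hexNorm_sub_lt_two hu hu'))).1
      have h2 := mul_le_mul_of_nonneg_left hz' (N.cast_nonneg : (0 : ℝ) ≤ N)
      linarith
    obtain ⟨u, hu⟩ := carrier_nonempty z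
    obtain ⟨Z, hZ, hb, huZ⟩ := mem_pockets_iff.mp
      (⟨hleft z le_rfl hu, Set.disjoint_left.mp h hu⟩ : u ∈ pockets (-1) (rightVertices N U i)ᶜ)
    refine Set.disjoint_left.mp (hU.disjoint_carrier_of_ray hn (by decide) hb ?_) hu huZ
    rintro z' - hz' ⟨a, ha, haZ⟩ w hw
    refine hZ.2 a haZ w (hleft z' ?_ hw) (adj_of_mem_carrier ha hw)
    push_cast at hz'
    linarith

theorem IsEquivariantHomeo.isLevelFamily_initialLevel (hU : IsEquivariantHomeo n U) (hn : 0 < n)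
    (hL : NearStraight d M (initialLevel N U))
    (hosc : ∀ z z', hexNorm (z - z') < 2 → |N * (U z).1 - N * (U z').1| < 1 / 2) :
    IsLevelFamily n N (initialLevel N U) := by
  have hadd (i : ℤ) (v w : Vertex) :
      v + n • w ∈ initialLevel N U (i + w.1 * N) ↔ v ∈ initialLevel N U i := by
    rw [initialLevel_add_smul hU, mem_vadd_iff, add_sub_cancel_right]
  refine ⟨fun i => ⟨noBoundedComponent_core _ _, hU.noBoundedComponent_compl_initialLevel hn N i,
    fun v => ?_, ⟨_, fun v => (hL i v).1⟩, ⟨_, fun v => (hL i v).2⟩⟩, hadd,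
    initialLevel_nested hosc⟩
  have h := hadd i v (0, 1)
  rw [zero_mul, add_zero] at h
  convert h using 2
  ext <;> simp

theorem abs_snd_sub_le_of_mem_carrier {a : ℝ} (ha : ∀ z, |n * (U z).2 - z.2| ≤ a) {K : ℕ}
    (hK : 2 * a + 2 ≤ K) {z z' : Plane} (h : (U z).2 = (U z').2) {u u' : Vertex}
    (hu : u ∈ carrier z) (hu' : u' ∈ carrier z') : |u.2 - u'.2| ≤ K := by
  have h1 := abs_le.mp (ha z)
  have h2 := abs_le.mp (ha z')
  have h3 := abs_lt.mp (mem_carrier_iff_abs.mp hu).2.1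
  have h4 := abs_lt.mp (mem_carrier_iff_abs.mp hu').2.1
  rw [h] at h1
  have : |(u.2 : ℝ) - u'.2| ≤ K := abs_le.mpr ⟨by linarith, by linarith⟩
  exact_mod_cast this

/-- Whether a vertex lies in a pocket is decided in the rows at bounded distance. -/
theorem IsEquivariantHomeo.mem_initialLevel_of_mem_fill (hU : IsEquivariantHomeo n U) (hn : 0 < n)
    {a : ℝ} (ha : ∀ z, |n * (U z).2 - z.2| ≤ a) {K : ℕ} (hK : 2 * a + 2 ≤ K) {i : ℤ}
    {S : Set Vertex} {v : Vertex}
    (hS : ∀ w ∈ S, |w.2 - v.2| ≤ 2 * K → w ∈ initialLevel N U i)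
    (hv : v ∈ fill (initialLevel N U i ∪ S)) : v ∈ initialLevel N U i := by
  by_contra hvL
  have hvS : v ∉ S := fun h => hvL (hS v h (by simp))
  obtain ⟨Z, hZ, hZb, hvZ⟩ := mem_pockets_iff.mp
    (⟨fun h => h.elim hvL hvS, fun h => notMem_fill_iff.mpr h hv⟩ :
      v ∈ pockets 1 (initialLevel N U i ∪ S)ᶜ)
  have hright : ∀ w ∈ Z, |w.2 - v.2| ≤ K → w ∉ rightVertices N U i := by
    rintro w hwZ hwv ⟨z₀, hwz₀, hz₀⟩
    refine Set.disjoint_left.mp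
      (hU.disjoint_carrier_of_closedIn hn hZ hZb hz₀ fun z hz p hp => hS p hp.2 ?_) hwz₀ hwZ
    have h1 := abs_snd_sub_le_of_mem_carrier ha hK hz hp.1 hwz₀
    linarith [abs_sub_le p.2 w.2 v.2]
  obtain ⟨W, hW, hWb, hvW⟩ := mem_pockets_iff.mp
    (⟨hright v hvZ (by simp), hvL⟩ : v ∈ pockets (-1) (rightVertices N U i)ᶜ)
  refine Set.disjoint_left.mp (hU.disjoint_carrier_of_ray hn (by decide)
    (hWb.mono (Set.inter_subset_right (s := Z))) ?_) (self_mem_carrier v) ⟨hvZ, hvW⟩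
  rintro z hz - ⟨u, hu, huZ, huW⟩ p hp
  have hpv := abs_snd_sub_le_of_mem_carrier ha hK hz hp (self_mem_carrier v)
  have hup := adj_of_mem_carrier hu hp
  have hpL : p ∉ initialLevel N U i := fun h => h.2 W hW hWb (hW.2 u huW p h.1 hup)
  have hpZ : p ∈ Z := hZ.2 u huZ p
    (fun h => h.elim hpL fun h => hpL (hS p h (by linarith [abs_nonneg (p.2 - v.2)]))) hup
  exact ⟨hpZ, hW.2 u huW p (hright p hpZ hpv) hup⟩

theorem IsEquivariantHomeo.notMem_of_mem_thicken_initialLevel (hU : IsEquivariantHomeo n U)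
    (hn : 0 < n) (hL : NearStraight d M (initialLevel N U)) {a : ℝ}
    (ha : ∀ z, |n * (U z).2 - z.2| ≤ a) {K : ℕ} (hK : 2 * a + 2 ≤ K) {D : ℤ → ℤ} {B : Set ℤ}
    (hD : ∀ y ∈ B, ∀ y', |y' - y| ≤ 2 * K → 2 * (M : ℤ) ≤ D y') (i : ℤ) :
    ∀ v ∈ thicken d (initialLevel N U) (profile M D M) i, v ∉ initialLevel N U i → v.2 ∉ B := by
  refine fun v hv hvL hvB => hvL (hU.mem_initialLevel_of_mem_fill hn ha hK (fun w hw hwv => ?_) hv)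
  have h1 : w.1 < d * i + profile M D M w.2 := hw
  have h2 := hD _ hvB _ hwv
  refine (hL i w).1 ?_
  unfold profile at h1
  omega

end

/-! ### Straightening the first coordinate -/

/-- The equivariant homeomorphisms whose first coordinate is close to `z ↦ z.1 / n`, and whose
second coordinate is obtained from that of `U` by moving points, first without crossing the lines
with ordinate in `B'`, then without crossing those with ordinate in `B`. -/
def weaklyControlled (n : ℕ) (U : C(Plane, Plane)) (B B' : Set ℤ) (C : ℝ) : Set C(Plane, Plane) :=
  {f | IsEquivariantHomeo n f ∧
    (∀ z, ∃ z' z'', (f z).2 = (U z'').2 ∧ SameSide B z'' z' ∧ SameSide B' z' z) ∧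
    ∀ z, |n * (f z).1 - z.1| ≤ C}

/-- The map `g` followed by the horizontal translation by `c`. -/
def translate (g : C(Plane, Plane)) (c : ℝ) : C(Plane, Plane) :=
  ⟨fun z => g z + (c, 0), by fun_prop⟩

/-- The distance from `y` to the multiples of `q`. -/
def distMultiples (q y : ℤ) : ℤ := min (y % q) (q - y % q)

/-- The steepest delay that vanishes exactly on the multiples of `q`. -/
def tent (d q : ℕ) (y : ℤ) : ℤ := (d - 2) * distMultiples q y

section

variable {n N d m : ℕ} {B B' : Set ℤ} {U g f : C(Plane, Plane)} {C : ℝ}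

theorem controlled_subset_weaklyControlled :
    controlled n U B C ⊆ weaklyControlled n U B B' C := by
  rintro f ⟨hf, hfU, hC⟩
  refine ⟨hf, fun z => ?_, hC⟩
  obtain ⟨z', hz', hside⟩ := hfU z
  exact ⟨z, z', by rw [hz'], hside, SameSide.refl B' z⟩

theorem controlled_subset_weaklyControlled_of_mem (hg : g ∈ controlled n U B C) :
    controlled n g B' C ⊆ weaklyControlled n U B B' C := by
  rintro f ⟨hf, hfg, hC⟩
  refine ⟨hf, fun z => ?_, hC⟩
  obtain ⟨z', hz', hside'⟩ := hfg z
  obtain ⟨z'', hz'', hside⟩ := hg.2.1 z'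
  exact ⟨z', z'', by rw [hz', hz''], hside, hside'⟩

theorem translate_apply (g : C(Plane, Plane)) (c : ℝ) (z : Plane) :
    translate g c z = g z + (c, 0) := rfl

theorem continuous_translate (g : C(Plane, Plane)) : Continuous (translate g) := by
  apply ContinuousMap.continuous_of_continuous_uncurry
  change Continuous fun p : ℝ × Plane => g p.2 + (p.1, 0)
  fun_prop

theorem IsEquivariantHomeo.translate (hg : IsEquivariantHomeo n g) (c : ℝ) :
    IsEquivariantHomeo n (translate g c) where
  bijective := (Equiv.addRight ((c, 0) : Plane)).bijective.comp hg.bijective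
  map_add_toPlane w z := by
    rw [translate_apply, hg.map_add_toPlane, translate_apply, add_right_comm]

theorem Adapted.translate (hN : 0 < N)
    (hA : Adapted N (raggedHalf d fun _ => (d * m : ℕ)) g) :
    Adapted N (raggedHalf d fun _ => 0) (translate g (m / N)) := by
  intro i z
  have hshift : (raggedHalf d fun _ => 0) i = (raggedHalf d fun _ => (d * m : ℕ)) (i - m) := by
    ext v
    change v.1 < _ + _ ↔ v.1 < _ + _
    push_cast
    rw [mul_sub, sub_add_cancel, add_zero]
  obtain ⟨hle, hge⟩ := hA (i - m) z
  have hm : (N : ℝ) * (m / N) = m := mul_div_cancel₀ _ (by positivity)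
  simp only [AdaptedAt, hshift, translate_apply, Prod.fst_add, mul_add, hm]
  push_cast at hle hge
  exact ⟨fun h => by linarith [hle h], fun h => by linarith [hge h]⟩

theorem joinedIn_translate (hg : g ∈ weaklyControlled n U B B' C) {c : ℝ}
    (hC : ∀ z, |n * (translate g c z).1 - z.1| ≤ C) :
    JoinedIn (weaklyControlled n U B B' C) g (translate g c) := by
  refine JoinedIn.ofLine (f := fun t => translate g (t * c)) ?_ ?_ ?_ ?_
  · exact ((continuous_translate g).comp (continuous_mul_const c)).continuousOn
  · ext z <;> simp [translate_apply]
  · simp only [one_mul]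
  · rintro _ ⟨t, ⟨ht₀, ht₁⟩, rfl⟩
    refine ⟨hg.1.translate _, fun z => by simpa [translate_apply] using hg.2.1 z, fun z => ?_⟩
    have h₀ := abs_le.mp (hg.2.2 z)
    have h₁ := abs_le.mp (hC z)
    simp only [translate_apply, Prod.fst_add] at h₁ ⊢
    rw [show n * ((g z).1 + t * c) - z.1 =
      (1 - t) * (n * (g z).1 - z.1) + t * (n * ((g z).1 + c) - z.1) by ring]
    exact abs_le.mpr ⟨by nlinarith, by nlinarith⟩

theorem exists_path_abs_fst_sub_le (hn : 3 ≤ n) (hnd : n = N * d) (hU : IsEquivariantHomeo n U)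
    (hosc : ∀ z z', hexNorm (z - z') < 2 → |N * (U z).1 - N * (U z').1| < 1 / 2)
    (hL : NearStraight d (d * m) (initialLevel N U)) {D : ℤ → ℤ} (hD : IsDelay n d D) {R : ℕ}
    (hR : ∀ y, D y ≤ R) (hB : Function.Periodic (· ∈ B) (n : ℤ))
    (hbar : ∀ i, ∀ v ∈ thicken d (initialLevel N U) (profile (d * m) D (d * m : ℕ)) i,
      v ∉ initialLevel N U i → v.2 ∉ B) :
    ∃ g, JoinedIn (weaklyControlled n U B (D ⁻¹' {0}) (d * m + 2 * d + 3)) U g ∧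
      ∀ z, |n * (g z).1 - z.1| ≤ 2 * d + 1 := by
  have hn₀ : 0 < n := by omega
  have hd : 0 < d := Nat.pos_of_ne_zero fun h => by simp [hnd, h] at hn₀
  have hN : 0 < N := Nat.pos_of_ne_zero fun h => by simp [hnd, h] at hn₀
  obtain ⟨g₁, g₂, h₁, h₂, hA⟩ := hD.exists_paths_straight
    (hU.isLevelFamily_initialLevel hn₀ hL hosc) hn hnd hL hR hB hU
    (hU.adapted_initialLevel hn₀ hosc) hbar
  push_cast at h₁ h₂
  have hclose : ∀ z, |n * (translate g₂ (m / N) z).1 - z.1| ≤ 2 * d + 1 := by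
    intro z
    have := (hA.translate hN).abs_sub_le hd (M := 0) (fun i v => by simp [raggedHalf]) z
    rw [hnd]
    push_cast at this ⊢
    linarith
  have h₂' := h₂.mono (controlled_subset_weaklyControlled_of_mem h₁.target_mem)
  refine ⟨translate g₂ (m / N), (h₁.mono controlled_subset_weaklyControlled).trans <|
    h₂'.trans <| joinedIn_translate h₂'.target_mem fun z => (hclose z).trans ?_, hclose⟩
  have : (0 : ℝ) ≤ d * m := by positivity
  linarith

end

theorem SameSide.abs_snd_sub_le {B : Set ℤ} {c q : ℤ} (hq : 0 < q) (hB : ∀ j : ℤ, c + j * q ∈ B)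
    {z' z : Plane} (h : SameSide B z' z) : |z'.2 - z.2| ≤ q := by
  have hq' : (0 : ℝ) < q := by exact_mod_cast hq
  have hfloor := (le_div_iff₀ hq').mp (Int.floor_le ((z.2 - c) / q))
  have hlt := (div_lt_iff₀ hq').mp (Int.lt_floor_add_one ((z.2 - c) / q))
  have hbelow := (h _ (hB ⌊(z.2 - c) / q⌋)).1
  have habove := (h _ (hB (⌊(z.2 - c) / q⌋ + 1))).1
  push_cast at hbelow habove
  have h₁ := habove.mpr (by linarith)
  have h₂ := mt hbelow.mp (by linarith)
  exact abs_le.mpr ⟨by linarith, by linarith⟩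

theorem distMultiples_le_abs_sub {q : ℤ} (hq : 0 < q) (y j : ℤ) :
    distMultiples q y ≤ |y - q * j| := by
  have hy := Int.emod_add_mul_ediv y q
  unfold distMultiples
  rcases le_or_gt j (y / q) with hj | hj
  · have := mul_le_mul_of_nonneg_left hj hq.le
    exact (min_le_left _ _).trans (le_abs.mpr (Or.inl (by linarith)))
  · have := mul_le_mul_of_nonneg_left (Int.add_one_le_of_lt hj) hq.le
    exact (min_le_right _ _).trans (le_abs.mpr (Or.inr (by linarith)))

theorem exists_abs_sub_eq_distMultiples {q : ℤ} (hq : 0 < q) (y : ℤ) :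
    ∃ j, |y - q * j| = distMultiples q y := by
  have hy := Int.emod_add_mul_ediv y q
  have h₀ := Int.emod_nonneg y hq.ne'
  have h₁ := Int.emod_lt_of_pos y hq
  rcases min_choice (y % q) (q - y % q) with h | h
  · exact ⟨y / q, by rw [distMultiples, h, ← abs_of_nonneg h₀]; congr 1; linarith⟩
  · refine ⟨y / q + 1, ?_⟩
    rw [distMultiples, h, ← abs_of_pos (sub_pos.mpr h₁), abs_sub_comm]
    congr 1
    linarith

theorem distMultiples_le_add {q : ℤ} (hq : 0 < q) (y y' : ℤ) :
    distMultiples q y ≤ distMultiples q y' + |y - y'| := by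
  obtain ⟨j, hj⟩ := exists_abs_sub_eq_distMultiples hq y'
  have := distMultiples_le_abs_sub hq y j
  have := abs_sub_le y y' (q * j)
  linarith

theorem distMultiples_nonneg {q : ℤ} (hq : 0 < q) (y : ℤ) : 0 ≤ distMultiples q y :=
  le_min (Int.emod_nonneg y hq.ne') (sub_nonneg.mpr (Int.emod_lt_of_pos y hq).le)

theorem isDelay_tent {n d q k : ℕ} (hd : 2 ≤ d) (hq : 0 < q) (hn : n = k * q) :
    IsDelay n d (tent d q) where
  nonneg y := mul_nonneg (by omega) (distMultiples_nonneg (by omega) y)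
  periodic y := by
    rw [tent, distMultiples, hn, Nat.cast_mul, Int.add_mul_emod_self_right, tent, distMultiples]
  add_two_le y y' hy := by
    have habs : |y - y'| ≤ 1 := abs_le.mpr ⟨by linarith [hy.2], by linarith [hy.1]⟩
    have hlip : distMultiples q y ≤ distMultiples q y' + 1 :=
      (distMultiples_le_add (by omega) y y').trans (add_le_add_right habs _)
    have := mul_le_mul_of_nonneg_left hlip (by omega : (0 : ℤ) ≤ d - 2)
    unfold tent
    linarith

theorem tent_le {d q : ℕ} (hq : 0 < q) (y : ℤ) : tent d q y ≤ (d * q : ℕ) := by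
  have hle : distMultiples q y ≤ q := (min_le_left _ _).trans (Int.emod_lt_of_pos y (by omega)).le
  have h₀ := distMultiples_nonneg (by omega : (0 : ℤ) < q) y
  have := mul_le_mul_of_nonneg_left hle (Int.natCast_nonneg d)
  unfold tent
  push_cast
  linarith

theorem tent_mul_self (d q : ℕ) (j : ℤ) : tent d q (j * q) = 0 := by
  simp [tent, distMultiples]

theorem two_mul_le_tent {d q K m : ℕ} (hd : 4 ≤ d) (hq : 0 < q) (h : 4 * m + 2 * K ≤ q / 2)
    {y y' : ℤ} (hy : y % q = (q / 2 : ℕ)) (hyy : |y' - y| ≤ 2 * K) :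
    2 * ((d * m : ℕ) : ℤ) ≤ tent d q y' := by
  have hdist : distMultiples q y = (q / 2 : ℕ) := by rw [distMultiples, hy]; omega
  have hlip := distMultiples_le_add (by omega : (0 : ℤ) < q) y y'
  rw [abs_sub_comm, hdist] at hlip
  have hd' : (0 : ℤ) ≤ d - 4 := by omega
  calc 2 * ((d * m : ℕ) : ℤ) ≤ (d - 2) * (4 * m) := by
        push_cast
        linarith [mul_nonneg hd' (Int.natCast_nonneg m)]
    _ ≤ tent d q y' := mul_le_mul_of_nonneg_left (by omega) (by omega)

/-- The map `U` precomposed with the homothety of ratio `c`. -/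
def rescale (c : ℝ) (U : C(Plane, Plane)) : C(Plane, Plane) := ⟨fun z => U (c • z), by fun_prop⟩

/-- The mesh `1 / n`, where `n = N * d`, is fine enough for the first coordinate of `U` to be
straightened up to an error `η`, along maps on which the error is at most `C`. -/
structure IsFineScale (n N d m : ℕ) (U : C(Plane, Plane)) (C η : ℝ) : Prop where
  three_le : 3 ≤ n
  eq_mul : n = N * d
  oscillation_lt : ∀ z z', hexNorm (z - z') < 2 →
    |N * (rescale (n : ℝ)⁻¹ U z).1 - N * (rescale (n : ℝ)⁻¹ U z').1| < 1 / 2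
  nearStraight : NearStraight d (d * m) (initialLevel N (rescale (n : ℝ)⁻¹ U))
  path_error_le : (d * m + 2 * d + 3 : ℝ) ≤ n * C
  final_error_le : (2 * d + 1 : ℝ) ≤ n * η

section

variable {n : ℕ} {U : C(Plane, Plane)}

theorem rescale_apply (c : ℝ) (U : C(Plane, Plane)) (z : Plane) : rescale c U z = U (c • z) :=
  rfl

theorem continuous_rescale (c : ℝ) : Continuous (rescale c) :=
  ContinuousMap.continuous_precomp (⟨fun z => c • z, by fun_prop⟩ : C(Plane, Plane))

theorem rescale_rescale_inv {c : ℝ} (hc : c ≠ 0) (U : C(Plane, Plane)) :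
    rescale c (rescale c⁻¹ U) = U := by
  ext1 z
  rw [rescale_apply, rescale_apply, inv_smul_smul₀ hc]

theorem IsEquivariantHomeo.rescale_of_mul_eq (hU : IsEquivariantHomeo n U) {c : ℝ} (hc : c ≠ 0)
    {m : ℕ} (hm : c * m = n) : IsEquivariantHomeo m (rescale c U) where
  bijective := hU.bijective.comp (Homeomorph.smulOfNeZero c hc).bijective
  map_add_toPlane w z := by
    rw [rescale_apply, smul_add, map_nsmul, ← Nat.cast_smul_eq_nsmul ℝ, smul_smul, hm,
      Nat.cast_smul_eq_nsmul, ← map_nsmul, hU.map_add_toPlane, rescale_apply]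

theorem IsEquivariantHomeo.rescale_inv (hU : IsEquivariantHomeo 1 U) (hn : 0 < n) :
    IsEquivariantHomeo n (rescale (n : ℝ)⁻¹ U) := by
  have hn' : (n : ℝ) ≠ 0 := by exact_mod_cast hn.ne'
  exact hU.rescale_of_mul_eq (inv_ne_zero hn') (by rw [inv_mul_cancel₀ hn', Nat.cast_one])

theorem abs_natCast_mul_rescale_inv_sub_le (hn : 0 < n) (c : Plane → ℝ)
    (hc : ∀ (r : ℝ) z, c (r • z) = r * c z) {b : ℝ} (hb : ∀ z, |c (U z) - c z| ≤ b) (z : Plane) :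
    |n * c (rescale (n : ℝ)⁻¹ U z) - c z| ≤ n * b := by
  have hn' : (0 : ℝ) < n := by exact_mod_cast hn
  have h := hb ((n : ℝ)⁻¹ • z)
  calc |n * c (rescale (n : ℝ)⁻¹ U z) - c z|
      = n * |c (U ((n : ℝ)⁻¹ • z)) - c ((n : ℝ)⁻¹ • z)| := by
        rw [← abs_of_pos hn', ← abs_mul, abs_of_pos hn', mul_sub, ← hc n ((n : ℝ)⁻¹ • z),
          smul_inv_smul₀ hn'.ne', rescale_apply]
    _ ≤ n * b := by gcongr

theorem abs_rescale_sub_le (hn : 0 < n) {f : C(Plane, Plane)} {b : ℝ}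
    (hb : ∀ z, |n * (f z).1 - z.1| ≤ n * b) (z : Plane) : |(rescale n f z).1 - z.1| ≤ b := by
  have hn' : (0 : ℝ) < n := by exact_mod_cast hn
  have h := hb ((n : ℝ) • z)
  rw [Prod.smul_fst, smul_eq_mul, ← mul_sub, abs_mul, abs_of_pos hn'] at h
  exact le_of_mul_le_mul_left h hn'

theorem IsEquivariantHomeo.uniformContinuous (hU : IsEquivariantHomeo 1 U) :
    UniformContinuous U := by
  refine Metric.uniformContinuous_iff.mpr fun ε hε => ?_
  obtain ⟨r, hr, hunif⟩ := Metric.uniformContinuousOn_iff.mp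
    ((isCompact_closedBall (0 : Plane) 2).uniformContinuousOn_of_continuous
      U.continuous.continuousOn) ε hε
  refine ⟨min r 1, lt_min hr one_pos, fun {z z'} hz => ?_⟩
  set w : Vertex := (-⌊z.1⌋, -⌊z.2⌋)
  have hdist : dist (z + toPlane w) (z' + toPlane w) < min r 1 := by rwa [dist_add_right]
  have hnorm : ‖z + toPlane w‖ ≤ 1 := by
    have hw : z + toPlane w = (Int.fract z.1, Int.fract z.2) := by
      ext <;> simp [w, Int.fract, sub_eq_add_neg]
    rw [hw, norm_prod_le_iff, Real.norm_of_nonneg (Int.fract_nonneg _),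
      Real.norm_of_nonneg (Int.fract_nonneg _)]
    exact ⟨(Int.fract_lt_one _).le, (Int.fract_lt_one _).le⟩
  have hnorm' := norm_le_norm_add_norm_sub' (z' + toPlane w) (z + toPlane w)
  rw [← dist_eq_norm] at hnorm'
  have hlt := hdist.trans_le (min_le_right r 1)
  have h := hunif (z + toPlane w) (mem_closedBall_zero_iff.mpr (by linarith)) (z' + toPlane w)
    (mem_closedBall_zero_iff.mpr (by rw [dist_comm] at hlt; linarith))
    (hdist.trans_le (min_le_left r 1))
  have hmap (z : Plane) : U (z + toPlane w) = U z + toPlane w := by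
    simpa only [one_smul] using hU.map_add_toPlane w z
  rwa [hmap, hmap, dist_add_right] at h

theorem IsEquivariantHomeo.exists_oscillation_lt (hU : IsEquivariantHomeo 1 U) {N : ℕ}
    (hN : 0 < N) : ∃ n₀ : ℕ, ∀ n ≥ n₀, 0 < n → ∀ z z', hexNorm (z - z') < 2 →
      |N * (rescale (n : ℝ)⁻¹ U z).1 - N * (rescale (n : ℝ)⁻¹ U z').1| < 1 / 2 := by
  have hN' : (0 : ℝ) < N := by exact_mod_cast hN
  obtain ⟨r, hr, hunif⟩ := Metric.uniformContinuous_iff.mp hU.uniformContinuous (1 / 2 / N)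
    (by positivity)
  obtain ⟨n₀, hn₀⟩ := exists_nat_ge (2 / r)
  refine ⟨n₀, fun n hn hpos z z' hz => ?_⟩
  have hpos' : (0 : ℝ) < n := by exact_mod_cast hpos
  have hnr : 2 ≤ n * r := (div_le_iff₀ hr).mp (hn₀.trans (by exact_mod_cast hn))
  have hdist : dist ((n : ℝ)⁻¹ • z) ((n : ℝ)⁻¹ • z') < r := by
    rw [dist_smul₀, norm_inv, Real.norm_natCast, inv_mul_lt_iff₀ hpos', dist_eq_norm]
    exact ((norm_le_hexNorm _).trans_lt hz).trans_le hnr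
  rw [← mul_sub, abs_mul, abs_of_pos hN', ← lt_div_iff₀' hN']
  exact (norm_fst_le (U _ - U _)).trans_lt (dist_eq_norm (U _) _ ▸ hunif hdist)

theorem IsEquivariantHomeo.exists_isFineScale (hU : IsEquivariantHomeo 1 U) {b η : ℝ}
    (hb : ∀ z, |(U z).1 - z.1| ≤ b) (hη : 0 < η) :
    ∃ N m n₀ : ℕ, 0 < N ∧ ∀ d ≥ n₀, IsFineScale (N * d) N d m U (b + η) η := by
  have hb₀ : 0 ≤ b := (abs_nonneg _).trans (hb 0)
  obtain ⟨N, hN⟩ := exists_nat_ge (7 / η)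
  have hNη : 7 ≤ N * η := (div_le_iff₀ hη).mp hN
  have hN' : (0 : ℝ) < N := (by positivity : 0 < 7 / η).trans_le hN
  have hN₀ : 0 < N := by exact_mod_cast hN'
  obtain ⟨n₀, hosc⟩ := hU.exists_oscillation_lt hN₀
  refine ⟨N, ⌈N * b⌉₊ + 1, max 3 n₀, hN₀, fun d hd => ?_⟩
  have hd₃ : 3 ≤ d := (le_max_left 3 n₀).trans hd
  have hdn : d ≤ N * d := Nat.le_mul_of_pos_left d hN₀
  have hd' : (3 : ℝ) ≤ d := by exact_mod_cast hd₃
  have hm : d * (N * b) ≤ d * (⌈N * b⌉₊ : ℝ) := by gcongr; exact Nat.le_ceil _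
  have hm' : d * (⌈N * b⌉₊ : ℝ) ≤ d * (N * b + 1) := by
    gcongr
    exact (Nat.ceil_lt_add_one (by positivity)).le
  have hη' : (d : ℝ) * 7 ≤ d * (N * η) := by gcongr
  refine ⟨hd₃.trans hdn, rfl, hosc _ (((le_max_right 3 n₀).trans hd).trans hdn) (by omega),
    nearStraight_initialLevel (by omega) rfl fun z => ?_, ?_, ?_⟩
  · refine (abs_natCast_mul_rescale_inv_sub_le (by omega) Prod.fst (fun _ _ => rfl) hb z).trans ?_
    push_cast
    linarith
  · push_cast
    linarith
  · push_cast
    linarith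

theorem IsFineScale.exists_path {N d m : ℕ} {C η : ℝ} (hs : IsFineScale n N d m U C η)
    (hU : IsEquivariantHomeo 1 U) {B : Set ℤ} {D : ℤ → ℤ} (hD : IsDelay n d D) {R : ℕ}
    (hR : ∀ y, D y ≤ R) (hB : Function.Periodic (· ∈ B) (n : ℤ))
    (hbar : ∀ i, ∀ v ∈ thicken d (initialLevel N (rescale (n : ℝ)⁻¹ U))
      (profile (d * m) D (d * m : ℕ)) i, v ∉ initialLevel N (rescale (n : ℝ)⁻¹ U) i → v.2 ∉ B) :
    ∃ g, JoinedIn (rescale n ''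
        weaklyControlled n (rescale (n : ℝ)⁻¹ U) B (D ⁻¹' {0}) (d * m + 2 * d + 3)) U g ∧
      ∀ z, |(g z).1 - z.1| ≤ η := by
  have hn : 0 < n := by have := hs.three_le; omega
  obtain ⟨g, hj, hg⟩ := exists_path_abs_fst_sub_le hs.three_le hs.eq_mul (hU.rescale_inv hn)
    hs.oscillation_lt hs.nearStraight hD hR hB hbar
  refine ⟨rescale n g, ?_, abs_rescale_sub_le hn fun z => (hg z).trans hs.final_error_le⟩
  have := hj.map (continuous_rescale n)
  rwa [rescale_rescale_inv (by exact_mod_cast hn.ne')] at this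

theorem weaklyControlled.isEquivariantHomeo_rescale {B B' : Set ℤ} {C : ℝ} (hn : 0 < n)
    {f V : C(Plane, Plane)} (hf : f ∈ weaklyControlled n V B B' C) :
    IsEquivariantHomeo 1 (rescale n f) :=
  hf.1.rescale_of_mul_eq (by exact_mod_cast hn.ne') (by simp)

theorem weaklyControlled.abs_snd_rescale_sub_le {B B' : Set ℤ} {C : ℝ} (hn : 0 < n)
    {f : C(Plane, Plane)} (hf : f ∈ weaklyControlled n (rescale (n : ℝ)⁻¹ U) B B' C) {a : ℝ}
    (ha : ∀ z, |(U z).2 - z.2| ≤ a) {c c' q : ℤ} (hq : 0 < q) (hB : ∀ j : ℤ, c + j * q ∈ B)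
    (hB' : ∀ j : ℤ, c' + j * q ∈ B') (z : Plane) :
    |(rescale n f z).2 - z.2| ≤ a + 2 * q / n := by
  have hn' : (0 : ℝ) < n := by exact_mod_cast hn
  obtain ⟨z', z'', hz, hside, hside'⟩ := hf.2.1 ((n : ℝ) • z)
  have h := ha ((n : ℝ)⁻¹ • z'')
  have hmove : |(n : ℝ)⁻¹ * z''.2 - z.2| ≤ 2 * q / n := by
    rw [le_div_iff₀' hn', ← abs_of_pos hn', ← abs_mul, abs_of_pos hn', mul_sub,
      mul_inv_cancel_left₀ hn'.ne']
    have h₁ := hside.abs_snd_sub_le hq hB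
    have h₂ := hside'.abs_snd_sub_le hq hB'
    have := abs_sub_le z''.2 z'.2 (n * z.2)
    rw [Prod.smul_snd, smul_eq_mul] at h₂
    linarith
  rw [rescale_apply] at hz ⊢
  rw [hz]
  rw [Prod.smul_snd, smul_eq_mul] at h
  have := abs_sub_le (U ((n : ℝ)⁻¹ • z'')).2 ((n : ℝ)⁻¹ * z''.2) z.2
  linarith

theorem IsEquivariantHomeo.exists_path_straighten (hU : IsEquivariantHomeo 1 U) {b η : ℝ}
    (hb : ∀ z, |(U z).1 - z.1| ≤ b) (hη : 0 < η) :
    ∃ g, JoinedIn {f | IsEquivariantHomeo 1 f} U g ∧ ∀ z, |(g z).1 - z.1| ≤ η := by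
  obtain ⟨N, m, n₀, hN, hfine⟩ := hU.exists_isFineScale hb hη
  have hs := hfine (n₀ + 2) (by omega)
  have hdelay : IsDelay (N * (n₀ + 2)) (n₀ + 2) fun _ => 0 :=
    ⟨fun _ => le_rfl, fun _ => rfl, fun _ _ _ => by push_cast; omega⟩
  obtain ⟨g, hj, hg⟩ := hs.exists_path hU (B := ∅) hdelay (R := 0) (fun _ => le_rfl)
    (fun _ => rfl) (fun _ _ _ _ => id)
  refine ⟨g, hj.mono ?_, hg⟩
  rintro _ ⟨f, hf, rfl⟩
  exact weaklyControlled.isEquivariantHomeo_rescale (by positivity) hf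

end

theorem exists_barrier_spacing {a : ℝ} (ha : 0 < a) (ha' : a < 1 / 100) {N : ℕ} (hN : 0 < N)
    (m n₀ : ℕ) : ∃ d q k K : ℕ, n₀ ≤ d ∧ 4 ≤ d ∧ 0 < q ∧ N * d = k * q ∧
      2 * (q : ℝ) ≤ 99 * a * (N * d : ℕ) ∧ 2 * ((N * d : ℕ) * a) + 2 ≤ K ∧
      4 * m + 2 * K ≤ q / 2 := by
  have hk := Nat.floor_le (by positivity : 0 ≤ 1 / (10 * a))
  have hk' := Nat.lt_floor_add_one (1 / (10 * a))
  set k := ⌊1 / (10 * a)⌋₊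
  rw [le_div_iff₀ (by positivity)] at hk
  rw [div_lt_iff₀ (by positivity)] at hk'
  have hka : 2 ≤ 99 * a * k := by linarith
  have hk₀ : 0 < k := Nat.pos_of_ne_zero fun h => by norm_num [h] at hka
  set e := n₀ + 40 * m + 70
  have hed : e ≤ k * e := Nat.le_mul_of_pos_left e hk₀
  have heq : e ≤ N * e := Nat.le_mul_of_pos_left e hN
  have hn : N * (k * e) = k * (N * e) := Nat.mul_left_comm _ _ _
  have hnR : ((N * (k * e) : ℕ) : ℝ) = k * (N * e : ℕ) := by exact_mod_cast hn
  refine ⟨k * e, N * e, k, ⌈2 * ((N * (k * e) : ℕ) * a)⌉₊ + 2, by omega, by omega, by omega, hn, ?_,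
    ?_, ?_⟩
  · rw [hnR, ← mul_assoc]
    gcongr
  · rw [Nat.cast_add, Nat.cast_ofNat]
    exact add_le_add_left (Nat.le_ceil _) 2
  · have hK := Nat.ceil_lt_add_one (by positivity : 0 ≤ 2 * ((N * (k * e) : ℕ) * a : ℝ))
    have h₁ : 2 * ((N * (k * e) : ℕ) * a) ≤ (N * e : ℕ) / (5 : ℝ) := by
      rw [hnR]
      linarith [mul_le_mul_of_nonneg_right hk (Nat.cast_nonneg (α := ℝ) (N * e))]
    have h₂ : (40 * m + 70 : ℝ) ≤ (N * e : ℕ) := by exact_mod_cast (by omega : 40 * m + 70 ≤ N * e)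
    rw [Nat.le_div_iff_mul_le two_pos]
    exact_mod_cast (by push_cast at *; linarith :
      ((4 * m + 2 * (⌈2 * ((N * (k * e) : ℕ) * a : ℝ)⌉₊ + 2 : ℕ)) * 2 : ℝ) ≤ (N * e : ℕ))

/-- The delay is a tent: the rows at its peaks are barriers for the first half of the path, those
at its zeros for the second half, so the second coordinate stays close to that of `U`. -/
theorem IsEquivariantHomeo.exists_path_straighten_of_abs_snd_le {U : C(Plane, Plane)}
    (hU : IsEquivariantHomeo 1 U) {a b η : ℝ} (ha : 0 < a) (ha' : a < 1 / 100)
    (hUa : ∀ z, |(U z).2 - z.2| ≤ a) (hUb : ∀ z, |(U z).1 - z.1| ≤ b) (hη : 0 < η) :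
    ∃ g, JoinedIn {f | IsEquivariantHomeo 1 f ∧ (∀ z, |(f z).1 - z.1| ≤ b + η) ∧
        ∀ z, |(f z).2 - z.2| ≤ 100 * a} U g ∧ ∀ z, |(g z).1 - z.1| ≤ η := by
  obtain ⟨N, m, n₀, hN, hfine⟩ := hU.exists_isFineScale hUb hη
  obtain ⟨d, q, k, K, hd, hd₄, hq, hn, hqa, hK, hwin⟩ := exists_barrier_spacing ha ha' hN m n₀
  have hs := hfine d hd
  have hn₀ : 0 < N * d := Nat.mul_pos hN (by omega)
  have hB : Function.Periodic (· ∈ {y : ℤ | y % q = (q / 2 : ℕ)}) ((N * d : ℕ) : ℤ) := fun y => by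
    simp only [Set.mem_ofPred_eq, hn, Nat.cast_mul, Int.add_mul_emod_self_right]
  have hmid (j : ℤ) : ((q / 2 : ℕ) : ℤ) + j * q ∈ {y : ℤ | y % q = (q / 2 : ℕ)} := by
    rw [Set.mem_ofPred_eq, Int.add_mul_emod_self_right]
    exact Int.emod_eq_of_lt (by omega) (by omega)
  obtain ⟨g, hj, hg⟩ := hs.exists_path hU (isDelay_tent (by omega) hq hn) (tent_le hq) hB <|
    (hU.rescale_inv hn₀).notMem_of_mem_thicken_initialLevel hn₀ hs.nearStraight
      (abs_natCast_mul_rescale_inv_sub_le hn₀ Prod.snd (fun _ _ => rfl) hUa) hK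
      fun y hy y' hyy => two_mul_le_tent hd₄ hq hwin hy hyy
  refine ⟨g, hj.mono ?_, hg⟩
  rintro _ ⟨f, hf, rfl⟩
  refine ⟨weaklyControlled.isEquivariantHomeo_rescale hn₀ hf,
    abs_rescale_sub_le hn₀ fun z => (hf.2.2 z).trans hs.path_error_le, fun z => ?_⟩
  refine (weaklyControlled.abs_snd_rescale_sub_le hn₀ hf hUa (by omega : (0 : ℤ) < q) hmid
    (c' := 0) (fun j => ?_) z).trans ?_
  · rw [zero_add, Set.mem_preimage, tent_mul_self, Set.mem_singleton_iff]
  · have : 2 * (q : ℝ) / (N * d : ℕ) ≤ 99 * a :=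
      (div_le_iff₀ (by exact_mod_cast hn₀)).mpr hqa
    rw [Int.cast_natCast]
    linarith

/-! ### Infinite concatenation of paths -/

section

variable {X : Type*} [TopologicalSpace X] {x : ℕ → X}

theorem exists_ray_of_paths (γ : ∀ k, Path (x k) (x (k + 1))) :
    ∃ f : ℝ → X, ContinuousOn f (Set.Ici 0) ∧ f 0 = x 0 ∧
      ∀ s, 0 ≤ s → f s ∈ Set.range (γ ⌊s⌋₊) := by
  let f : ℝ → X := fun s => (γ ⌊s⌋₊).extend (s - ⌊s⌋₊)
  have f_eq (k : ℕ) : Set.EqOn f (fun s => (γ k).extend (s - k)) (Set.Icc k (k + 1)) := by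
    rintro s ⟨hks, hsk⟩
    rcases hsk.lt_or_eq with hlt | rfl
    · obtain rfl : ⌊s⌋₊ = k := (Nat.floor_eq_iff (k.cast_nonneg.trans hks)).2 ⟨hks, hlt⟩
      rfl
    · have hfloor : ⌊(k + 1 : ℝ)⌋₊ = k + 1 := by exact_mod_cast Nat.floor_natCast (R := ℝ) (k + 1)
      simp only [f, hfloor, Nat.cast_add, Nat.cast_one, sub_self, add_sub_cancel_left,
        Path.extend_zero, Path.extend_one]
  have hfin : LocallyFinite fun k : ℕ => Set.Icc (k : ℝ) (k + 1) := fun s =>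
    ⟨Set.Iio (s + 1), Iio_mem_nhds (lt_add_one s), (Set.finite_Iic ⌊s + 1⌋₊).subset
      fun _ ⟨_, hk, hs⟩ => Nat.le_floor (hk.1.trans hs.le)⟩
  have hcover : Set.Ici (0 : ℝ) ⊆ ⋃ k : ℕ, Set.Icc (k : ℝ) (k + 1) := fun s hs =>
    Set.mem_iUnion.2 ⟨⌊s⌋₊, Nat.floor_le hs, (Nat.lt_floor_add_one s).le⟩
  have hcont (k : ℕ) : ContinuousOn f (Set.Icc k (k + 1)) :=
    ((γ k).continuous_extend.comp (continuous_id.sub continuous_const)).continuousOn.congr (f_eq k)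
  refine ⟨f, (hfin.continuousOn_iUnion (fun _ => isClosed_Icc) hcont).mono hcover, ?_, ?_⟩
  · simp only [f, Nat.floor_zero, Nat.cast_zero, sub_self, Path.extend_zero]
  · intro s _
    rw [← Path.extend_range]
    exact Set.mem_range_self _

theorem joinedIn_of_ray {f : ℝ → X} {T : Set X} {a : X} (hf : ContinuousOn f (Set.Ici 0))
    (hfT : Set.MapsTo f (Set.Ici 0) T) (ha : a ∈ T) (hlim : Tendsto f atTop (𝓝 a)) :
    JoinedIn T (f 0) a := by
  let φ : ℝ → ℝ := fun t => (1 - t)⁻¹ - 1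
  let g : ℝ → X := fun t => if t < 1 then f (φ t) else a
  have g_one : g 1 = a := if_neg (lt_irrefl 1)
  have g_eq : Set.EqOn g (f ∘ φ) (Set.Ico 0 1) := fun t ht => if_pos ht.2
  have hφ : Set.MapsTo φ (Set.Ico 0 1) (Set.Ici 0) := fun t ht =>
    sub_nonneg.2 ((one_le_inv₀ (sub_pos.2 ht.2)).2 (sub_le_self 1 ht.1))
  have hφ_cont : ContinuousOn φ (Set.Ico 0 1) := fun t ht =>
    (((continuousAt_const.sub continuousAt_id).inv₀ (sub_pos.2 ht.2).ne').sub
      continuousAt_const).continuousWithinAt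
  have hφ_lim : Tendsto φ (𝓝[<] 1) atTop := by
    refine tendsto_atTop_add_const_right _ (-1) (tendsto_inv_nhdsGT_zero.comp ?_)
    refine tendsto_nhdsWithin_iff.2 ⟨?_, ?_⟩
    · exact ((continuous_const.sub continuous_id).tendsto' _ _ (sub_self 1)).mono_left
        nhdsWithin_le_nhds
    · exact eventually_mem_nhdsWithin.mono fun t (ht : t < 1) => sub_pos.2 ht
  have hg_lim : Tendsto g (𝓝[<] 1) (𝓝 a) :=
    (hlim.comp hφ_lim).congr' (eventually_mem_nhdsWithin.mono fun t ht => (if_pos ht).symm)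
  have hg_cont : ContinuousOn g (Set.Icc 0 1) := by
    intro t ht
    rcases ht.2.lt_or_eq with hlt | rfl
    · refine (((hf.comp hφ_cont hφ).congr g_eq) t ⟨ht.1, hlt⟩).mono_of_mem_nhdsWithin ?_
      filter_upwards [self_mem_nhdsWithin, mem_nhdsWithin_of_mem_nhds (Iio_mem_nhds hlt)]
        with s hs hs1 using ⟨hs.1, hs1⟩
    · rw [continuousWithinAt_Icc_iff_Iic one_pos, ← continuousWithinAt_Iio_iff_Iic,
        ContinuousWithinAt, g_one]
      exact hg_lim
  refine JoinedIn.ofLine (f := g) hg_cont ?_ g_one ?_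
  · rw [g_eq (Set.left_mem_Ico.2 one_pos), Function.comp_apply]
    simp only [φ, sub_zero, inv_one, sub_self]
  · rintro _ ⟨t, ht, rfl⟩
    rcases ht.2.lt_or_eq with hlt | rfl
    · rw [g_eq ⟨ht.1, hlt⟩]
      exact hfT (hφ ⟨ht.1, hlt⟩)
    · rwa [g_one]

theorem joinedIn_of_tendsto_smallSets {S : ℕ → Set X} {T : Set X} {a : X}
    (hx : ∀ k, JoinedIn (S k) (x k) (x (k + 1))) (hST : ∀ k, S k ⊆ T) (ha : a ∈ T)
    (hS : Tendsto S atTop (𝓝 a).smallSets) : JoinedIn T (x 0) a := by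
  obtain ⟨f, hf, hf0, hf_mem⟩ := exists_ray_of_paths fun k => (hx k).somePath
  have hfS {s : ℝ} (hs : 0 ≤ s) : f s ∈ S ⌊s⌋₊ := by
    obtain ⟨t, ht⟩ := hf_mem s hs
    exact ht ▸ (hx _).somePath_mem t
  rw [← hf0]
  refine joinedIn_of_ray hf (fun s hs => hST _ (hfS hs)) ha fun N hN => ?_
  have hSN := (tendsto_nat_floor_atTop (α := ℝ)).eventually (tendsto_smallSets_iff.1 hS N hN)
  exact (hSN.and (eventually_ge_atTop 0)).mono fun s ⟨hsN, hs⟩ => hsN (hfS hs)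

end

/-! ### Alternating the two coordinates -/

/-- The conjugate of `f` by the reflection exchanging the coordinates of the plane. -/
def swapConj (f : C(Plane, Plane)) : C(Plane, Plane) := ⟨fun z => (f z.swap).swap, by fun_prop⟩

theorem swapConj_swapConj (f : C(Plane, Plane)) : swapConj (swapConj f) = f :=
  rfl

theorem continuous_swapConj : Continuous swapConj :=
  (ContinuousMap.continuous_postcomp ⟨Prod.swap, continuous_swap⟩).comp
    (ContinuousMap.continuous_precomp ⟨Prod.swap, continuous_swap⟩)

theorem IsEquivariantHomeo.swapConj {n : ℕ} {f : C(Plane, Plane)} (hf : IsEquivariantHomeo n f) :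
    IsEquivariantHomeo n (swapConj f) where
  bijective := Prod.swap_bijective.comp (hf.bijective.comp Prod.swap_bijective)
  map_add_toPlane w z := congrArg Prod.swap (hf.map_add_toPlane w.swap z.swap)

section

variable {U : C(Plane, Plane)}

theorem IsEquivariantHomeo.exists_path_straighten_snd (hU : IsEquivariantHomeo 1 U) {a b η : ℝ}
    (ha : 0 < a) (ha' : a < 1 / 100) (hUa : ∀ z, |(U z).1 - z.1| ≤ a)
    (hUb : ∀ z, |(U z).2 - z.2| ≤ b) (hη : 0 < η) :
    ∃ g, JoinedIn {f | IsEquivariantHomeo 1 f ∧ (∀ z, |(f z).2 - z.2| ≤ b + η) ∧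
      ∀ z, |(f z).1 - z.1| ≤ 100 * a} U g ∧ ∀ z, |(g z).2 - z.2| ≤ η := by
  obtain ⟨g, hUg, hg⟩ := hU.swapConj.exists_path_straighten_of_abs_snd_le ha ha'
    (fun z => hUa z.swap) (fun z => hUb z.swap) hη
  refine ⟨TorusIsotopy.swapConj g, ?_, fun z => hg z.swap⟩
  rw [← swapConj_swapConj U]
  refine (hUg.map continuous_swapConj).mono ?_
  rintro _ ⟨f, ⟨hf, hfb, hfa⟩, rfl⟩
  exact ⟨hf.swapConj, fun z => hfb z.swap, fun z => hfa z.swap⟩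

/-- The lifts of homeomorphisms of the torus moving no point of the plane by more than `ε` in
either coordinate. -/
def nearId (ε : ℝ) : Set C(Plane, Plane) := {f | IsEquivariantHomeo 1 f ∧ ∀ z, ‖f z - z‖ ≤ ε}

theorem mem_nearId_iff {ε : ℝ} : U ∈ nearId ε ↔
    IsEquivariantHomeo 1 U ∧ (∀ z, |(U z).1 - z.1| ≤ ε) ∧ ∀ z, |(U z).2 - z.2| ≤ ε := by
  simp only [nearId, Set.mem_ofPred_eq, Prod.norm_def, sup_le_iff, forall_and, Prod.fst_sub,
    Prod.snd_sub, Real.norm_eq_abs]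

theorem IsEquivariantHomeo.exists_path_nearId (hU : IsEquivariantHomeo 1 U) {ε : ℝ}
    (hε : 0 < ε) (hε1 : ε < 1) :
    ∃ g ∈ nearId ε, JoinedIn {f | IsEquivariantHomeo 1 f} U g := by
  have exists_bound {f : C(Plane, Plane)} (hf : IsEquivariantHomeo 1 f) :
      ∃ b, (∀ z, |(f z).1 - z.1| ≤ b) ∧ ∀ z, |(f z).2 - z.2| ≤ b := by
    obtain ⟨b, hb⟩ := hf.exists_norm_smul_sub_le one_pos
    simp only [Nat.cast_one, one_smul] at hb
    exact ⟨b, (mem_nearId_iff.1 ⟨hf, hb⟩).2⟩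
  obtain ⟨b, hb, -⟩ := exists_bound hU
  obtain ⟨g₁, hUg₁, hg₁⟩ := hU.exists_path_straighten hb (η := ε / 1000) (by positivity)
  obtain ⟨c, -, hc⟩ := exists_bound hUg₁.target_mem
  obtain ⟨g₂, hg₁₂, hg₂⟩ :=
    hUg₁.target_mem.exists_path_straighten_snd (by positivity) (by linarith) hg₁ hc hε
  refine ⟨g₂, ?_, hUg₁.trans (hg₁₂.mono fun f hf => hf.1)⟩
  exact mem_nearId_iff.2
    ⟨hg₁₂.target_mem.1, fun z => (hg₁₂.target_mem.2.2 z).trans (by linarith), hg₂⟩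

theorem exists_path_nearId_of_mem_nearId {ε ε' : ℝ} (hε : 0 < ε) (hε1 : ε < 1 / 100)
    (hε' : 0 < ε') (hle : ε' ≤ ε) (hU : U ∈ nearId ε) :
    ∃ g ∈ nearId ε', JoinedIn (nearId (101 * ε)) U g := by
  obtain ⟨hU, hU1, hU2⟩ := mem_nearId_iff.1 hU
  obtain ⟨g₁, hUg₁, hg₁⟩ := hU.exists_path_straighten_of_abs_snd_le (η := ε' / 1000) hε hε1 hU2 hU1
    (by positivity)
  obtain ⟨hg₁_equiv, -, hg₁_snd⟩ := hUg₁.target_mem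
  obtain ⟨g₂, hg₁₂, hg₂⟩ :=
    hg₁_equiv.exists_path_straighten_snd (by positivity) (by linarith) hg₁ hg₁_snd hε'
  refine ⟨g₂, ?_, (hUg₁.mono ?_).trans (hg₁₂.mono ?_)⟩
  · exact mem_nearId_iff.2
      ⟨hg₁₂.target_mem.1, fun z => (hg₁₂.target_mem.2.2 z).trans (by linarith), hg₂⟩
  · rintro f ⟨hf, hf1, hf2⟩
    exact mem_nearId_iff.2
      ⟨hf, fun z => (hf1 z).trans (by linarith), fun z => (hf2 z).trans (by linarith)⟩
  · rintro f ⟨hf, hf2, hf1⟩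
    exact mem_nearId_iff.2
      ⟨hf, fun z => (hf1 z).trans (by linarith), fun z => (hf2 z).trans (by linarith)⟩

theorem tendsto_nearId_smallSets {ι : Type*} {l : Filter ι} {ε : ι → ℝ} (hε : Tendsto ε l (𝓝 0)) :
    Tendsto (fun k => nearId (ε k)) l (𝓝 (ContinuousMap.id Plane)).smallSets := by
  refine tendsto_smallSets_iff.2 fun N hN => ?_
  obtain ⟨E, hE, hEN⟩ := UniformSpace.mem_nhds_iff.1 hN
  obtain ⟨K, V, -, hV, hKV⟩ := (ContinuousMap.mem_compactConvergence_entourage_iff E).1 hE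
  obtain ⟨r, hr, hrV⟩ := Metric.mem_uniformity_dist.1 hV
  filter_upwards [hε.eventually_lt_const hr] with k hk f hf
  refine hEN (hKV fun z _ => hrV ?_)
  rw [ContinuousMap.id_apply, dist_comm, dist_eq_norm]
  exact (hf.2 z).trans_lt hk

theorem isEquivariantHomeo_id : IsEquivariantHomeo 1 (ContinuousMap.id Plane) where
  bijective := Function.bijective_id
  map_add_toPlane w z := by rw [one_smul]; rfl

theorem IsEquivariantHomeo.joinedIn_id (hU : IsEquivariantHomeo 1 U) :
    JoinedIn {f | IsEquivariantHomeo 1 f} U (ContinuousMap.id Plane) := by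
  let ε : ℕ → ℝ := fun k => 1 / 200 * (1 / 2) ^ k
  have hε (k : ℕ) : 0 < ε k := by positivity
  have hε_anti : Antitone ε := fun k l hkl =>
    mul_le_mul_of_nonneg_left (pow_le_pow_of_le_one (by norm_num) (by norm_num) hkl) (by norm_num)
  have hε_lt (k : ℕ) : ε k < 1 / 100 := (hε_anti k.zero_le).trans_lt (by norm_num [ε])
  have hε_lim : Tendsto (fun k => 101 * ε k) atTop (𝓝 0) := by
    have hpow : Tendsto (fun k : ℕ => (1 / 2 : ℝ) ^ k) atTop (𝓝 0) :=
      tendsto_pow_atTop_nhds_zero_of_lt_one (by norm_num) (by norm_num)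
    simpa only [mul_zero] using (hpow.const_mul (1 / 200)).const_mul 101
  obtain ⟨g₀, hg₀, hUg₀⟩ := hU.exists_path_nearId (hε 0) ((hε_lt 0).trans (by norm_num))
  choose next next_mem joined_next using fun k (f : nearId (ε k)) =>
    exists_path_nearId_of_mem_nearId (hε k) (hε_lt k) (hε (k + 1)) (hε_anti k.le_succ) f.2
  let g : ∀ k, nearId (ε k) := fun k => k.rec ⟨g₀, hg₀⟩ fun k f => ⟨next k f, next_mem k f⟩
  have joined_g (k : ℕ) : JoinedIn (nearId (101 * ε k)) (g k).1 (g (k + 1)).1 :=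
    joined_next k (g k)
  exact hUg₀.trans (joinedIn_of_tendsto_smallSets (x := fun k => (g k).1) joined_g
    (fun k f hf => hf.1) isEquivariantHomeo_id (tendsto_nearId_smallSets hε_lim))

end

/-! ### Lifting to the universal cover and descending to the torus -/

section CoveringHom

variable {E Q : Type*} [TopologicalSpace E] [AddGroup E] [ContinuousAdd E] [TopologicalSpace Q]
  [AddGroup Q] {π : E →+ Q}

theorem exists_lift_of_homotopy_id (hπ : IsCoveringMap π) (G : C(I × Q, Q))
    (hG : ∀ p, G (0, p) = p) :
    ∃ U : C(E, E), (∀ z, π (U z) = G (1, π z)) ∧ ∀ e ∈ π.ker, ∀ z, U (z + e) = U z + e := by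
  have hπ_cont : Continuous π := hπ.continuous
  let H : C(I × E, Q) := ⟨fun q => G (q.1, π q.2), by fun_prop⟩
  have hH : ∀ z, H (0, z) = π (ContinuousMap.id E z) := fun z => hG (π z)
  let K : C(I × E, E) := hπ.liftHomotopy H (ContinuousMap.id E) hH
  have K_lifts (t : I) (z : E) : π (K (t, z)) = G (t, π z) :=
    congrFun (hπ.liftHomotopy_lifts H (ContinuousMap.id E) hH) (t, z)
  have K_zero (z : E) : K (0, z) = z := hπ.liftHomotopy_zero H (ContinuousMap.id E) hH z
  refine ⟨⟨fun z => K (1, z), by fun_prop⟩, K_lifts 1, fun e he z => ?_⟩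
  have hK : (fun t => K (t, z + e)) = fun t => K (t, z) + e := by
    refine hπ.eq_of_comp_eq (by fun_prop) (by fun_prop) (funext fun t => ?_) 0 ?_
    · simp only [Function.comp_apply, map_add, K_lifts, AddMonoidHom.mem_ker.1 he, add_zero]
    · simp only [K_zero]
  exact congrFun hK 1

theorem bijective_of_lift_id [PreconnectedSpace E] (hπ : IsCoveringMap π) (V : C(E, E))
    (hV : ∀ z, π (V z) = π z) : Function.Bijective V := by
  have hV_eq : V = fun z => V 0 + z := by
    refine hπ.eq_of_comp_eq V.continuous (by fun_prop) (funext fun z => ?_) 0 (add_zero _).symm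
    simp only [Function.comp_apply, hV, map_add, map_zero, zero_add]
  exact hV_eq ▸ (Equiv.addLeft (V 0)).bijective

end CoveringHom

/-- The torus `(ℝ/ℤ)²`. -/
abbrev Torus := AddCircle (1 : ℝ) × AddCircle (1 : ℝ)

/-- The universal covering homomorphism of the torus, with kernel `ℤ²`. -/
def torusMk : Plane →+ Torus :=
  (QuotientAddGroup.mk' (AddSubgroup.zmultiples 1)).prodMap
    (QuotientAddGroup.mk' (AddSubgroup.zmultiples 1))

theorem ker_torusMk : torusMk.ker = toPlane.range := by
  ext z
  simp only [torusMk, AddMonoidHom.ker_prodMap, QuotientAddGroup.ker_mk', AddSubgroup.mem_prod,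
    AddSubgroup.mem_zmultiples_iff, zsmul_one, AddMonoidHom.mem_range, Prod.exists, Prod.ext_iff,
    toPlane_fst, toPlane_snd, exists_and_left, exists_and_right]

theorem isOpenQuotientMap_torusMk : IsOpenQuotientMap torusMk :=
  QuotientAddGroup.isOpenQuotientMap_mk.prodMap QuotientAddGroup.isOpenQuotientMap_mk

theorem isCoveringMap_torusMk : IsCoveringMap torusMk := by
  have hq := isOpenQuotientMap_torusMk.isQuotientMap
  refine (hq.isAddQuotientCoveringMap_of_isDiscrete_ker_addMonoidHom
    ⟨DiscreteTopology.of_forall_le_norm one_pos ?_⟩).isCoveringMap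
  rintro ⟨z, hz⟩ hz0
  rw [SetLike.mem_coe, ker_torusMk] at hz
  obtain ⟨w, rfl⟩ := hz
  exact one_le_norm_toPlane fun hw => hz0 (Subtype.ext ((congrArg toPlane hw).trans (map_zero _)))

theorem torusMk_eq_torusMk_iff {z z' : Plane} :
    torusMk z = torusMk z' ↔ ∃ w : Vertex, z = z' + toPlane w := by
  simp only [AddMonoidHom.eq_iff, ker_torusMk, AddMonoidHom.mem_range, eq_neg_add_iff_add_eq,
    @eq_comm _ z]

theorem IsEquivariantHomeo.torusMk_eq_torusMk_iff {g : C(Plane, Plane)}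
    (hg : IsEquivariantHomeo 1 g) {z z' : Plane} :
    torusMk (g z) = torusMk (g z') ↔ torusMk z = torusMk z' := by
  simp only [TorusIsotopy.torusMk_eq_torusMk_iff]
  refine exists_congr fun w => ?_
  rw [← hg.map_add_toPlane, one_smul, hg.bijective.injective.eq_iff]

theorem exists_isEquivariantHomeo_lift (h : Torus ≃ₜ Torus) (H : C(I × Torus, Torus))
    (H0 : ∀ p, H (0, p) = h p) (H1 : ∀ p, H (1, p) = p) :
    ∃ U : C(Plane, Plane), IsEquivariantHomeo 1 U ∧ ∀ z, torusMk (U z) = h (torusMk z) := by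
  have cov := isCoveringMap_torusMk
  obtain ⟨U, hU, hU_add⟩ := exists_lift_of_homotopy_id cov ⟨fun q => H (σ q.1, q.2), by fun_prop⟩
    (by simpa using H1)
  obtain ⟨W, hW, -⟩ := exists_lift_of_homotopy_id cov ⟨fun q => h.symm (H q), by fun_prop⟩
    (by simp [H0])
  simp only [ContinuousMap.coe_mk, symm_one, H0] at hU
  simp only [ContinuousMap.coe_mk, H1] at hW
  have hWU : Function.Bijective (W ∘ U) :=
    bijective_of_lift_id cov (W.comp U) fun z => by simp [hW, hU]
  have hUW : Function.Bijective (U ∘ W) :=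
    bijective_of_lift_id cov (U.comp W) fun z => by simp [hW, hU]
  refine ⟨U, ⟨⟨hWU.injective.of_comp, hUW.surjective.of_comp⟩, fun w z => ?_⟩, hU⟩
  rw [one_smul]
  exact hU_add _ (ker_torusMk ▸ ⟨w, rfl⟩) z

theorem exists_isotopy_of_path {U V : C(Plane, Plane)}
    (hUV : JoinedIn {f | IsEquivariantHomeo 1 f} U V) :
    ∃ F : C(I × Torus, Torus), (∀ z, F (0, torusMk z) = torusMk (U z)) ∧
      (∀ z, F (1, torusMk z) = torusMk (V z)) ∧ ∀ t, IsHomeomorph fun p => F (t, p) := by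
  obtain ⟨γ, hγ⟩ := hUV
  have hγ' (t : I) : IsEquivariantHomeo 1 (γ t) := hγ t
  have hq := isOpenQuotientMap_torusMk
  let s : Torus → Plane := Function.surjInv hq.surjective
  let F : I × Torus → Torus := fun q => torusMk (γ q.1 (s q.2))
  have F_mk (t : I) (z : Plane) : F (t, torusMk z) = torusMk (γ t z) :=
    (hγ' t).torusMk_eq_torusMk_iff.2 (Function.surjInv_eq hq.surjective _)
  have F_cont : Continuous F := by
    refine (IsOpenQuotientMap.id.prodMap hq).continuous_comp_iff.1 ?_
    refine (hq.continuous.comp ?_ : Continuous fun q : I × Plane => torusMk (γ q.1 q.2)).congr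
      fun q => (F_mk q.1 q.2).symm
    fun_prop
  refine ⟨⟨F, F_cont⟩, fun z => ?_, fun z => ?_, fun t => ?_⟩
  · rw [ContinuousMap.coe_mk, F_mk, γ.source]
  · rw [ContinuousMap.coe_mk, F_mk, γ.target]
  · have : Fact ((0 : ℝ) < 1) := ⟨one_pos⟩
    refine isHomeomorph_iff_continuous_bijective.2
      ⟨F_cont.comp (Continuous.prodMk_right t), ?_, ?_⟩
    · refine hq.surjective.forall₂.2 fun z z' h => ?_
      simp only [ContinuousMap.coe_mk, F_mk] at h
      exact (hγ' t).torusMk_eq_torusMk_iff.1 h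
    · refine hq.surjective.forall.2 fun z => ?_
      obtain ⟨w, rfl⟩ := (hγ' t).bijective.surjective z
      exact ⟨torusMk w, F_mk t w⟩

end TorusIsotopy

/-- Every homeomorphism of the torus `(ℝ/ℤ) × (ℝ/ℤ)` that is homotopic to the identity
is isotopic to the identity. -/
theorem homeomorph_torus_homotopic_to_id_isotopic_to_id
    (h : Homeomorph (AddCircle (1 : ℝ) × AddCircle (1 : ℝ))
      (AddCircle (1 : ℝ) × AddCircle (1 : ℝ)))
    (H : I × (AddCircle (1 : ℝ) × AddCircle (1 : ℝ)) →
      AddCircle (1 : ℝ) × AddCircle (1 : ℝ))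
    (Hcont : Continuous H)
    (H0 : ∀ p, H (0, p) = h p)
    (H1 : ∀ p, H (1, p) = p) :
    ∃ F : I × (AddCircle (1 : ℝ) × AddCircle (1 : ℝ)) →
        AddCircle (1 : ℝ) × AddCircle (1 : ℝ), Continuous F ∧
      (∀ p, F (0, p) = h p) ∧
      (∀ p, F (1, p) = p) ∧
      (∀ t : I, IsHomeomorph fun p => F (t, p)) := by
  obtain ⟨U, hU, hUh⟩ := TorusIsotopy.exists_isEquivariantHomeo_lift h ⟨H, Hcont⟩ H0 H1
  obtain ⟨F, F_zero, F_one, F_homeo⟩ := TorusIsotopy.exists_isotopy_of_path hU.joinedIn_id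
  have hq := TorusIsotopy.isOpenQuotientMap_torusMk.surjective
  exact ⟨F, F.continuous, hq.forall.2 fun z => (F_zero z).trans (hUh z), hq.forall.2 F_one, F_homeo⟩
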